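/- arXiv:1502.03607 — 2 statements merged into one kernel-verified Lean document; each statement's English description precedes it below -/
import Mathlib

section
/- Let (A, (·,·), R) be an extended affine root supersystem over a field F of characteristic zero. If δ ∈ R_ns is nonzero, then there exists η ∈ R_ns with (δ, η) ≠ 0. -/
open Pointwise

/-- A symmetric biadditive form with values in `F`. -/
structure IsSymForm {F : Type*} [Field F] {A : Type*} [AddCommGroup A]
    (form : A → A → F) : Prop where
  symm : ∀ a b, form a b = form b a
  add_left : ∀ a b c, form (a + b) c = form a c + form b c

/-- The radical `A⁰` of a form. -/
def formRadical {F : Type*} [Field F] {A : Type*} [AddCommGroup A]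
    (form : A → A → F) : Set A := {a | ∀ b, form a b = 0}

/-- The set of real roots `R_re = {α ∈ R | (α,α) ≠ 0} ∪ {0}`. -/
def reRoots {F : Type*} [Field F] {A : Type*} [AddCommGroup A]
    (form : A → A → F) (R : Set A) : Set A :=
  {α | α ∈ R ∧ form α α ≠ 0} ∪ {0}

/-- The set of nonsingular roots `R_ns = {α ∈ R \ A⁰ | (α,α) = 0} ∪ {0}`. -/
def nsRoots {F : Type*} [Field F] {A : Type*} [AddCommGroup A]
    (form : A → A → F) (R : Set A) : Set A :=
  {α | α ∈ R ∧ form α α = 0 ∧ α ∉ formRadical form} ∪ {0}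

/-- Extended affine root supersystem. -/
structure IsEARS {F : Type*} [Field F] [CharZero F] {A : Type*} [AddCommGroup A]
    (form : A → A → F) (R : Set A) extends IsSymForm form : Prop where
  zero_mem : (0 : A) ∈ R
  closure_eq_top : AddSubgroup.closure R = ⊤
  neg_mem : ∀ α ∈ R, -α ∈ R
  cartan : ∀ α ∈ R, form α α ≠ 0 → ∀ β ∈ R, ∃ k : ℤ, 2 * form α β = (k : F) * form α α
  string : ∀ α ∈ R, form α α ≠ 0 → ∀ β ∈ R, ∃ p q : ℕ,
      2 * form β α = ((p : F) - (q : F)) * form α α ∧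
      (∀ k : ℤ, β + k • α ∈ R ↔ -(p : ℤ) ≤ k ∧ k ≤ (q : ℤ))
  ns_string : ∀ α ∈ R, form α α = 0 → ∀ β ∈ R, form α β ≠ 0 →
      (β - α ∈ R ∨ β + α ∈ R)

/-- Locally finite root supersystem: an EARS with nondegenerate form. -/
def IsLFRSS {F : Type*} [Field F] [CharZero F] {A : Type*} [AddCommGroup A]
    (form : A → A → F) (R : Set A) : Prop :=
  IsEARS form R ∧ ∀ a : A, (∀ b, form a b = 0) → a = 0

/-- `α` and `β` are connected in `X` by a finite chain with consecutive
elements non-orthogonal. -/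
def ConnectedIn {F : Type*} [Field F] {A : Type*} [AddCommGroup A]
    (form : A → A → F) (X : Set A) (α β : A) : Prop :=
  ∃ (n : ℕ) (c : Fin (n + 1) → A), (∀ i, c i ∈ X) ∧ c 0 = α ∧ c (Fin.last n) = β ∧
    ∀ i : Fin n, form (c i.castSucc) (c i.succ) ≠ 0

/-- A connected subset. -/
def IsConnectedSet {F : Type*} [Field F] {A : Type*} [AddCommGroup A]
    (form : A → A → F) (X : Set A) : Prop :=
  ∀ α ∈ X, ∀ β ∈ X, ConnectedIn form X α β

/-- Irreducibility: `R_re ≠ {0}` and `R \ R⁰` is connected. -/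
def IsIrreducibleRSS {F : Type*} [Field F] {A : Type*} [AddCommGroup A]
    (form : A → A → F) (R : Set A) : Prop :=
  reRoots form R ≠ {0} ∧ IsConnectedSet form (R \ formRadical form)

/-- Sub-supersystem of a locally finite root supersystem. -/
def IsSubSupersystem {F : Type*} [Field F] {A : Type*} [AddCommGroup A]
    (form : A → A → F) (R S : Set A) : Prop :=
  S ⊆ R ∧
  (∀ a ∈ AddSubgroup.closure S, (∀ b ∈ AddSubgroup.closure S, form a b = 0) → a = 0) ∧
  (0 : A) ∈ S ∧
  (∀ α ∈ S, form α α ≠ 0 → ∀ β ∈ S, ∀ k : ℤ,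
      2 * form β α = (k : F) * form α α → β - k • α ∈ S) ∧
  (∀ γ ∈ S, form γ γ = 0 → ∀ β ∈ S, form β γ ≠ 0 → (γ - β ∈ S ∨ γ + β ∈ S))

/-- `Π` is an integral base of `R` (a `ℤ`-basis of the group generated by `R`). -/
def IsIntegralBase {F : Type*} [Field F] {A : Type*} [AddCommGroup A]
    (form : A → A → F) (R P : Set A) : Prop :=
  P ⊆ R ∧ LinearIndependent ℤ (fun p : P => (p : A)) ∧
    Submodule.span ℤ P = Submodule.span ℤ R

/-- `Π` is a base of `R`. -/
def IsBase {F : Type*} [Field F] {A : Type*} [AddCommGroup A]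
    (form : A → A → F) (R P : Set A) : Prop :=
  IsIntegralBase form R P ∧
  ∀ α ∈ R \ formRadical form, ∃ (n : ℕ) (a : Fin n → A) (r : Fin n → ℤ),
    (∀ i, a i ∈ P) ∧ (∀ i, r i = 1 ∨ r i = -1) ∧
    α = ∑ i, r i • a i ∧
    ∀ t : Fin n, (∑ i ∈ Finset.Iic t, r i • a i) ∈ R \ formRadical form

theorem stmt1 {F : Type*} [Field F] [CharZero F] {A : Type*} [AddCommGroup A]
    (form : A → A → F) (R : Set A) (h : IsEARS form R)
    (δ : A) (hδ : δ ∈ nsRoots form R) (hδ0 : δ ≠ 0) :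
    ∃ η ∈ nsRoots form R, form δ η ≠ 0 := by 
  have hsymm := h.symm
  have haddl := h.add_left
  have haddr : ∀ a b c, form a (b + c) = form a b + form a c := fun a b c => by
    rw [hsymm, haddl, hsymm b, hsymm c]
  have hz : ∀ a, form a 0 = 0 := fun a => by
    have := haddr a 0 0
    simpa using this
  have hzr : ∀ (a b : A) (k : ℤ), form a (k • b) = (k : F) * form a b := fun a b k => by
    let f : A →+ F := ⟨⟨form a, hz a⟩, haddr a⟩
    have := map_zsmul f k b
    simpa [f] using this
  have hzl : ∀ (a b : A) (k : ℤ), form (k • a) b = (k : F) * form a b := fun a b k => by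
    rw [hsymm, hzr, hsymm]
  rcases hδ with ⟨hR, hn, hrad⟩ | h0
  swap
  · exact absurd h0 hδ0
  have hex : ∃ β ∈ R, form δ β ≠ 0 := by
    by_contra hc
    push Not at hc
    apply hrad
    intro b
    have hb : b ∈ AddSubgroup.closure R := by rw [h.closure_eq_top]; trivial
    let f : A →+ F := ⟨⟨form δ, hz δ⟩, haddr δ⟩
    have hle : AddSubgroup.closure R ≤ f.ker := by
      rw [AddSubgroup.closure_le]
      intro x hx
      exact hc x hx
    exact hle hb
  obtain ⟨β, hβ, hne⟩ := hex
  by_cases hbb : form β β = 0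
  · refine ⟨β, Or.inl ⟨hβ, hbb, fun hr => hne ?_⟩, hne⟩
    rw [hsymm]; exact hr δ
  obtain ⟨p, q, hpq, hs⟩ := h.string β hβ hbb δ hR
  have hmem : δ + ((q : ℤ) - p) • β ∈ R := (hs _).2 ⟨by omega, by omega⟩
  have hk : ((q : F) - p) ≠ 0 := by
    intro h0
    have h1 : (p : F) - q = 0 := by linear_combination -h0
    rw [h1, zero_mul] at hpq
    exact hne (by simpa using hpq)
  have hform : form δ (δ + ((q : ℤ) - p) • β) ≠ 0 := by
    rw [haddr, hn, hzr]
    push_cast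
    rw [zero_add]
    exact mul_ne_zero hk hne
  refine ⟨_, Or.inl ⟨hmem, ?_, fun hr => hform ?_⟩, hform⟩
  · rw [haddr, haddl, haddl, hzr, hzr, hzl, hzl, hn, hsymm β δ]
    push_cast
    linear_combination ((q : F) - p) * hpq
  · rw [hsymm]; exact hr δ
end

section
/- Let (A, (·,·), R) be an irreducible locally finite root supersystem over a field F of characteristic zero. Then R contains an integral base, i.e., there is a subset Π of R which is a ℤ-basis of A; in particular, A is a free abelian group. -/
open Pointwise

structure RSS {F : Type*} [Field F] {A : Type*} [AddCommGroup A]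
    (b : A →ₗ[ℤ] A →ₗ[ℤ] F) (R : Set A) : Prop where
  symm : ∀ x y, b x y = b y x
  span_top : Submodule.span ℤ R = ⊤
  neg_mem : ∀ α ∈ R, -α ∈ R
  string : ∀ α ∈ R, b α α ≠ 0 → ∀ β ∈ R, ∃ p q : ℕ,
      2 * b β α = ((p : F) - (q : F)) * b α α ∧
      (∀ k : ℤ, β + k • α ∈ R ↔ -(p : ℤ) ≤ k ∧ k ≤ (q : ℤ))
  ns : ∀ α ∈ R, b α α = 0 → ∀ β ∈ R, b α β ≠ 0 → (β - α ∈ R ∨ β + α ∈ R)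
  nondeg : ∀ a : A, (∀ c, b a c = 0) → a = 0

/-- nonisotropic roots -/
def RR {F : Type*} [Field F] {A : Type*} [AddCommGroup A]
    (b : A →ₗ[ℤ] A →ₗ[ℤ] F) (R : Set A) : Set A := {α | α ∈ R ∧ b α α ≠ 0}

open Classical in
/-- Cartan integer functional -/
noncomputable def cn {F : Type*} [Field F] {A : Type*} [AddCommGroup A]
    (b : A →ₗ[ℤ] A →ₗ[ℤ] F) (γ : A) : A →ₗ[ℤ] ℤ :=
  if h : ∃ f : A →ₗ[ℤ] ℤ, ∀ x, 2 * b γ x = (f x : F) * b γ γ then h.choose else 0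

namespace RSS

variable {F : Type*} [Field F] [CharZero F] {A : Type*} [AddCommGroup A]
  {b : A →ₗ[ℤ] A →ₗ[ℤ] F} {R : Set A}

theorem cn_spec (h : RSS b R) {γ : A} (hγ : γ ∈ RR b R) (x : A) :
    2 * b γ x = (cn b γ x : F) * b γ γ := by
  have key : ∀ x : A, ∃ k : ℤ, 2 * b γ x = (k : F) * b γ γ := by
    intro x
    have hx : x ∈ Submodule.span ℤ R := by rw [h.span_top]; trivial
    induction hx using Submodule.span_induction with
    | mem x hx =>
      obtain ⟨p, q, e, -⟩ := h.string γ hγ.1 hγ.2 x hx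
      exact ⟨(p : ℤ) - q, by rw [h.symm γ x, e]; push_cast; ring⟩
    | zero => exact ⟨0, by simp⟩
    | add x y _ _ hx hy =>
      obtain ⟨k, hk⟩ := hx
      obtain ⟨l, hl⟩ := hy
      exact ⟨k + l, by rw [map_add, mul_add, hk, hl]; push_cast; ring⟩
    | smul a x _ hx =>
      obtain ⟨k, hk⟩ := hx
      refine ⟨a * k, ?_⟩
      rw [map_smul, zsmul_eq_mul, mul_left_comm, hk]; push_cast; ring
  choose f hf using key
  have inj : ∀ k l : ℤ, (k : F) * b γ γ = l * b γ γ → k = l := by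
    intro k l e
    exact_mod_cast mul_right_cancel₀ hγ.2 e
  have ex : ∃ f : A →ₗ[ℤ] ℤ, ∀ x, 2 * b γ x = (f x : F) * b γ γ := by
    refine ⟨{ toFun := f, map_add' := ?_, map_smul' := ?_ }, hf⟩
    · intro x y
      apply inj
      rw [← hf, map_add, mul_add, hf, hf]; push_cast; ring
    · intro a x
      apply inj
      rw [← hf, map_smul, zsmul_eq_mul, mul_left_comm, hf]
      simp only [RingHom.id_apply, smul_eq_mul]; push_cast; ring
  have : cn b γ = ex.choose := by unfold cn; rw [dif_pos ex]
  rw [this]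
  exact ex.choose_spec x

theorem cn_unique (h : RSS b R) {γ : A} (hγ : γ ∈ RR b R) {x : A} {k : ℤ}
    (e : 2 * b γ x = (k : F) * b γ γ) : cn b γ x = k := by
  rw [h.cn_spec hγ] at e
  exact_mod_cast mul_right_cancel₀ hγ.2 e

theorem cn_self (h : RSS b R) {γ : A} (hγ : γ ∈ RR b R) : cn b γ γ = 2 :=
  h.cn_unique hγ (by norm_num)

theorem cn_eq_zero (h : RSS b R) {γ : A} (hγ : γ ∈ RR b R) {x : A} :
    cn b γ x = 0 ↔ b γ x = 0 := by
  have := h.cn_spec hγ x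
  constructor
  · intro e; rw [e] at this; simpa using this
  · intro e; rw [e] at this
    have := hγ.2
    simp_all

theorem cn_symm (h : RSS b R) {γ β : A} (hγ : γ ∈ RR b R) (hβ : β ∈ RR b R) :
    (cn b γ β : F) * b γ γ = cn b β γ * b β β := by
  rw [← h.cn_spec hγ, ← h.cn_spec hβ, h.symm]

theorem neg_RR (h : RSS b R) {γ : A} (hγ : γ ∈ RR b R) : -γ ∈ RR b R :=
  ⟨h.neg_mem _ hγ.1, by simpa using hγ.2⟩

theorem ne_zero {γ : A} (hγ : γ ∈ RR b R) : γ ≠ 0 := by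
  rintro rfl; exact hγ.2 (by simp)

theorem string_cn (h : RSS b R) {γ β : A} (hγ : γ ∈ RR b R) (hβ : β ∈ R) :
    ∃ p q : ℕ, cn b γ β = (p : ℤ) - q ∧
      (∀ k : ℤ, β + k • γ ∈ R ↔ -(p : ℤ) ≤ k ∧ k ≤ (q : ℤ)) := by
  obtain ⟨p, q, e, H⟩ := h.string γ hγ.1 hγ.2 β hβ
  exact ⟨p, q, h.cn_unique hγ (by rw [h.symm, e]; push_cast; ring), H⟩

theorem sub_smul_mem (h : RSS b R) {γ β : A} (hγ : γ ∈ RR b R) (hβ : β ∈ R) {j : ℤ}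
    (h0 : 0 ≤ j) (h1 : j ≤ cn b γ β) : β - j • γ ∈ R := by
  obtain ⟨p, q, e, H⟩ := h.string_cn hγ hβ
  have := (H (-j)).2 ⟨by omega, by omega⟩
  simpa [sub_eq_add_neg] using this

theorem sub_mem (h : RSS b R) {γ β : A} (hγ : γ ∈ RR b R) (hβ : β ∈ R)
    (h1 : 0 < cn b γ β) : β - γ ∈ R := by
  simpa using h.sub_smul_mem hγ hβ (j := 1) (by omega) (by omega)

theorem refl_mem (h : RSS b R) {γ β : A} (hγ : γ ∈ RR b R) (hβ : β ∈ R) :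
    β - cn b γ β • γ ∈ R := by
  obtain ⟨p, q, e, H⟩ := h.string_cn hγ hβ
  have := (H (-cn b γ β)).2 ⟨by omega, by omega⟩
  simpa [sub_eq_add_neg] using this

theorem b_refl (h : RSS b R) {γ : A} (hγ : γ ∈ RR b R) (x y : A) :
    b (x - cn b γ x • γ) (y - cn b γ y • γ) = b x y := by
  have e1 := h.cn_spec hγ x
  have e2 := h.cn_spec hγ y
  simp only [map_sub, LinearMap.sub_apply, map_smul, LinearMap.smul_apply, zsmul_eq_mul]
  rw [h.symm x γ]
  have : (2 : F) ≠ 0 := two_ne_zero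
  apply mul_left_cancel₀ this
  linear_combination (-(cn b γ y : F)) * e1 - (cn b γ x : F) * e2

theorem refl_RR (h : RSS b R) {γ β : A} (hγ : γ ∈ RR b R) (hβ : β ∈ RR b R) :
    β - cn b γ β • γ ∈ RR b R :=
  ⟨h.refl_mem hγ hβ.1, by rw [h.b_refl hγ]; exact hβ.2⟩

theorem cn_neg_left (h : RSS b R) {γ : A} (hγ : γ ∈ RR b R) (x : A) :
    cn b (-γ) x = - cn b γ x := by
  apply h.cn_unique (h.neg_RR hγ)
  have := h.cn_spec hγ x
  simp only [map_neg, LinearMap.neg_apply, neg_neg]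
  push_cast
  linear_combination -this

theorem eqnorm_aux (h : RSS b R) {α β : A} (hα : α ∈ RR b R) (hβ : β ∈ RR b R)
    (e : b β β = b α α) : cn b α β < 5 := by
  by_contra hc
  push Not at hc
  have m2 : β - (2 : ℤ) • α ∈ R := h.sub_smul_mem hα hβ.1 (by norm_num) (by omega)
  have e1 := h.cn_spec hα β
  set n := cn b α β with hn
  have nrm : b (β - (2 : ℤ) • α) (β - (2 : ℤ) • α) = ((5 - 2 * n : ℤ) : F) * b α α := by
    simp only [map_sub, LinearMap.sub_apply, map_smul, LinearMap.smul_apply, zsmul_eq_mul]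
    rw [h.symm β α, e]; push_cast
    linear_combination (-2) * e1
  have hr : β - (2 : ℤ) • α ∈ RR b R := by
    refine ⟨m2, ?_⟩
    rw [nrm]
    apply mul_ne_zero _ hα.2
    exact_mod_cast (by omega : (5 - 2 * n : ℤ) ≠ 0)
  have e2 := h.cn_spec hr α
  rw [nrm] at e2
  set k := cn b (β - (2 : ℤ) • α) α with hk
  have e3 : ((n - 4 : ℤ) : F) * b α α = ((k * (5 - 2 * n) : ℤ) : F) * b α α := by
    simp only [map_sub, LinearMap.sub_apply, map_smul, LinearMap.smul_apply, zsmul_eq_mul] at e2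
    rw [h.symm β α] at e2
    push_cast at e2 ⊢
    linear_combination e2 - e1
  have e4 : n - 4 = k * (5 - 2 * n) := by exact_mod_cast mul_right_cancel₀ hα.2 e3
  rcases lt_trichotomy k 0 with hk | hk | hk <;> nlinarith

theorem eqnorm (h : RSS b R) {α β : A} (hα : α ∈ RR b R) (hβ : β ∈ RR b R)
    (e : b β β = b α α) : |cn b α β| ≤ 2 := by
  have five : ∀ α β : A, α ∈ RR b R → β ∈ RR b R → b β β = b α α → |cn b α β| < 5 := by
    intro α β hα hβ e
    rw [abs_lt]
    have h1 := h.eqnorm_aux hα hβ e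
    have h2 := h.eqnorm_aux (h.neg_RR hα) hβ (by simpa using e)
    rw [h.cn_neg_left hα] at h2
    omega
  have h1 := five α (β - cn b α β • α) hα
  have h2 := five β (β - cn b α β • α) hβ (h.refl_RR hα hβ) (h.b_refl hα β β)
  have hs := h.cn_symm hα hβ
  rw [e] at hs
  have hs' : cn b α β = cn b β α := by exact_mod_cast mul_right_cancel₀ hα.2 hs
  rw [map_sub, map_smul, h.cn_self hβ, ← hs', smul_eq_mul, abs_lt] at h2
  rw [abs_le]
  constructor <;> nlinarith

theorem cn_mul (h : RSS b R) {α β : A} (hα : α ∈ RR b R) (hβ : β ∈ RR b R) :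
    0 ≤ cn b α β * cn b β α ∧ cn b α β * cn b β α ≤ 4 := by
  have := h.eqnorm hβ (h.refl_RR hα hβ) (h.b_refl hα β β)
  rw [map_sub, map_smul, h.cn_self hβ, smul_eq_mul, abs_le] at this
  omega

theorem cn_zero_symm (h : RSS b R) {α β : A} (hα : α ∈ RR b R) (hβ : β ∈ RR b R) :
    cn b α β = 0 ↔ cn b β α = 0 := by
  rw [h.cn_eq_zero hα, h.cn_eq_zero hβ, h.symm]

theorem cn_le (h : RSS b R) {α β : A} (hα : α ∈ RR b R) (hβ : β ∈ RR b R) :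
    |cn b α β| ≤ 4 := by
  have := h.cn_mul hα hβ
  by_cases h0 : cn b α β = 0
  · simp [h0]
  have h1 : cn b β α ≠ 0 := fun e => h0 ((h.cn_zero_symm hα hβ).2 e)
  rw [abs_le]
  rcases lt_or_gt_of_ne h0 with h2 | h2 <;> rcases lt_or_gt_of_ne h1 with h3 | h3 <;>
    constructor <;> nlinarith

theorem cn_pos_symm (h : RSS b R) {α β : A} (hα : α ∈ RR b R) (hβ : β ∈ RR b R)
    (hp : 0 < cn b α β) : 0 < cn b β α := by
  have h1 : cn b β α ≠ 0 := fun e => hp.ne' ((h.cn_zero_symm hα hβ).2 e)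
  have := (h.cn_mul hα hβ).1
  rcases lt_or_gt_of_ne h1 with h3 | h3
  · nlinarith
  · exact h3

/-- nonzero vectors are nonorthogonal to some root -/
theorem exists_ne (h : RSS b R) {x : A} (hx : x ≠ 0) : ∃ η ∈ R, b x η ≠ 0 := by
  by_contra hc
  push Not at hc
  apply hx
  apply h.nondeg
  intro c
  have hc' : c ∈ Submodule.span ℤ R := by rw [h.span_top]; trivial
  induction hc' using Submodule.span_induction with
  | mem x hx => exact hc x hx
  | zero => simp
  | add x y _ _ hx hy => rw [map_add, hx, hy, add_zero]
  | smul a x _ hx => rw [map_smul, hx, smul_zero]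

theorem eq_of_cn_two (h : RSS b R) {α β : A} (hα : α ∈ RR b R) (hβ : β ∈ RR b R)
    (e : b β β = b α α) (e2 : cn b α β = 2) : α = β := by
  by_contra hne
  have hd0 : α - β ≠ 0 := sub_ne_zero.2 hne
  have e1 := h.cn_spec hα β
  rw [e2] at e1
  have two : (2 : F) ≠ 0 := two_ne_zero
  have eab : b α β = b α α := by
    apply mul_left_cancel₀ two; rw [e1]; push_cast; ring
  have hdR : α - β ∈ R := by
    have := h.neg_mem _ (h.sub_mem hα hβ.1 (by omega))
    simpa using this
  have hda : b (α - β) α = 0 := by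
    rw [map_sub, LinearMap.sub_apply, h.symm β α, eab, sub_self]
  have hdb : b (α - β) β = 0 := by
    rw [map_sub, LinearMap.sub_apply, eab, e, sub_self]
  have hdd : b (α - β) (α - β) = 0 := by rw [map_sub, hda, hdb, sub_self]
  set δ := α - β with hδ
  -- a real root not orthogonal to δ
  obtain ⟨η, hη, hne⟩ : ∃ η ∈ RR b R, b δ η ≠ 0 := by
    obtain ⟨η, hη, hne⟩ := h.exists_ne hd0
    by_cases hr : b η η = 0
    · rcases h.ns δ hdR hdd η hη hne with hm | hm
      · refine ⟨η - δ, ⟨hm, ?_⟩, ?_⟩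
        · simp only [map_sub, LinearMap.sub_apply, hr, hdd, h.symm η δ]
          intro hh; apply hne
          apply mul_left_cancel₀ two; linear_combination -hh
        · simpa [map_sub, hdd] using hne
      · refine ⟨η + δ, ⟨hm, ?_⟩, ?_⟩
        · simp only [map_add, LinearMap.add_apply, hr, hdd, h.symm η δ]
          intro hh; apply hne
          apply mul_left_cancel₀ two; linear_combination hh
        · simpa [map_add, hdd] using hne
    · exact ⟨η, ⟨hη, hr⟩, hne⟩
  have nrm : ∀ k : ℤ, b (α + k • δ) (α + k • δ) = b α α := by
    intro k
    simp only [map_add, LinearMap.add_apply, map_smul, LinearMap.smul_apply, hda, hdd,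
      h.symm α δ]
    simp
  have mem : ∀ k : ℕ, α + ((k : ℤ) - 1) • δ ∈ RR b R ∧ α + (k : ℤ) • δ ∈ RR b R := by
    intro k
    induction k with
    | zero =>
      constructor
      · have : α + ((0 : ℕ) - 1 : ℤ) • δ = β := by rw [hδ]; simp
        rw [this]; exact hβ
      · simpa using hα
    | succ k ih =>
      obtain ⟨i1, i2⟩ := ih
      refine ⟨by simpa using i2, ?_⟩
      have hc : cn b (α + (k : ℤ) • δ) (α + ((k : ℤ) - 1) • δ) = 2 := by
        apply h.cn_unique i2
        rw [nrm]
        simp only [map_add, LinearMap.add_apply, map_smul, LinearMap.smul_apply, hda, hdd,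
          h.symm α δ]
        simp
      have := h.neg_RR (h.refl_RR i2 i1)
      rw [hc] at this
      convert this using 1
      push_cast
      module
  have hη0 : cn b η δ ≠ 0 := by
    intro e; rw [h.cn_eq_zero hη, h.symm] at e; exact hne e
  have b1 := h.cn_le hη hα
  have b2 := h.cn_le hη (mem 9).2
  rw [map_add, map_smul, smul_eq_mul] at b2
  rw [abs_le] at b1 b2
  push_cast at b2
  omega

theorem sub_RR (h : RSS b R) {γ β : A} (hγ : γ ∈ RR b R) (hβ : β ∈ RR b R)
    (hp : 0 < cn b γ β) (hne : β ≠ γ) : β - γ ∈ RR b R := by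
  refine ⟨h.sub_mem hγ hβ.1 hp, ?_⟩
  intro h0
  have hp' := h.cn_pos_symm hγ hβ hp
  have e1 := h.cn_spec hγ β
  have e2 := h.cn_spec hβ γ
  have hm := h.cn_mul hγ hβ
  rw [h.symm β γ] at e2
  simp only [map_sub, LinearMap.sub_apply, h.symm β γ] at h0
  set n := cn b γ β
  set m := cn b β γ
  have hg : b γ β ≠ 0 := by
    intro e; exact hp.ne' ((h.cn_eq_zero hγ).2 e)
  -- 1/n + 1/m = 1
  have key : ((n + m - n * m : ℤ) : F) * (2 * b γ β) = 0 := by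
    push_cast
    linear_combination (m : F) * e1 + (n : F) * e2 + (n : F) * m * h0
  have key2 : n + m - n * m = 0 := by
    rcases mul_eq_zero.1 key with k | k
    · exact_mod_cast k
    · exact absurd k (mul_ne_zero two_ne_zero hg)
  have hn : n ≤ 4 := by nlinarith
  have hm' : m ≤ 4 := by nlinarith
  have : n = 2 ∧ m = 2 := by
    clear_value n m
    interval_cases n <;> interval_cases m <;> simp_all
  apply hne
  symm
  apply h.eq_of_cn_two hγ hβ _ this.1
  rw [this.1] at e1; rw [this.2] at e2
  apply mul_left_cancel₀ (two_ne_zero (α := F))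
  push_cast at e1 e2
  linear_combination e1 - e2

end RSS


/-- avoiding finitely many kernels -/
theorem avoid_kernels {A : Type*} [AddCommGroup A] {ι : Type*} (G : Finset ι)
    (g : ι → (A →ₗ[ℤ] ℤ)) (hg : ∀ i ∈ G, ∃ w, g i w ≠ 0) : ∃ v, ∀ i ∈ G, g i v ≠ 0 := by
  classical
  induction G using Finset.induction_on with
  | empty => exact ⟨0, by simp⟩
  | insert i G hi ih =>
    obtain ⟨v, hv⟩ := ih (fun j hj => hg j (Finset.mem_insert_of_mem hj))
    obtain ⟨w, hw⟩ := hg i (Finset.mem_insert_self _ _)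
    by_cases h0 : g i v = 0
    · set k : ℤ := (∑ j ∈ G, |g j w|) + 1 with hk
      refine ⟨k • v + w, ?_⟩
      intro j hj
      rcases Finset.mem_insert.1 hj with rfl | hj
      · simp [h0, hw]
      · rw [map_add, map_smul, smul_eq_mul]
        have h1 : |g j w| ≤ ∑ j ∈ G, |g j w| :=
          Finset.single_le_sum (f := fun j => |g j w|) (fun _ _ => abs_nonneg _) hj
        have h2 : 1 ≤ |g j v| := Int.one_le_abs (hv j hj)
        intro e
        have h3 : |g j w| = |k| * |g j v| := by
          rw [← abs_mul, ← abs_neg]; congr 1; linarith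
        have h4 : 0 ≤ |g j w| := abs_nonneg _
        have h5 : |k| = k := abs_of_nonneg (by omega)
        rw [h5] at h3
        nlinarith
    · refine ⟨v, fun j hj => ?_⟩
      rcases Finset.mem_insert.1 hj with rfl | hj
      · exact h0
      · exact hv j hj

/-- positive semidefinite integer form attached to a finite set of roots -/
noncomputable def pf {F : Type*} [Field F] {A : Type*} [AddCommGroup A]
    (b : A →ₗ[ℤ] A →ₗ[ℤ] F) (E : Finset A) : A →ₗ[ℤ] A →ₗ[ℤ] ℤ :=
  ∑ η ∈ E, (LinearMap.mul ℤ ℤ).compl₁₂ (cn b η) (cn b η)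

/-- saturated finite set of real roots -/
def Sat {F : Type*} [Field F] {A : Type*} [AddCommGroup A]
    (b : A →ₗ[ℤ] A →ₗ[ℤ] F) (R : Set A) (E : Finset A) : Prop :=
  ∀ β, β ∈ E ↔ β ∈ RR b R ∧ β ∈ Submodule.span ℤ (E : Set A)

section
variable {F : Type*} [Field F] {A : Type*} [AddCommGroup A]
  {b : A →ₗ[ℤ] A →ₗ[ℤ] F} {R : Set A} {E : Finset A}

theorem pf_apply (x y : A) : pf b E x y = ∑ η ∈ E, cn b η x * cn b η y := by
  simp [pf, LinearMap.sum_apply]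

theorem pf_symm (x y : A) : pf b E x y = pf b E y x := by
  simp only [pf_apply]
  exact Finset.sum_congr rfl fun _ _ => mul_comm _ _

theorem pf_nonneg (x : A) : 0 ≤ pf b E x x := by
  rw [pf_apply]; exact Finset.sum_nonneg fun _ _ => mul_self_nonneg _

theorem pf_zero {x : A} (h : pf b E x x ≤ 0) : ∀ η ∈ E, cn b η x = 0 := by
  have h0 : pf b E x x = 0 := le_antisymm h (pf_nonneg x)
  rw [pf_apply, Finset.sum_eq_zero_iff_of_nonneg (fun _ _ => mul_self_nonneg _)] at h0
  intro η hη
  exact mul_self_eq_zero.1 (h0 η hη)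

theorem pf_rad {x : A} (h : ∀ η ∈ E, cn b η x = 0) (y : A) : pf b E x y = 0 := by
  rw [pf_apply]; exact Finset.sum_eq_zero fun η hη => by rw [h η hη, zero_mul]
end

namespace RSS

variable {F : Type*} [Field F] [CharZero F] {A : Type*} [AddCommGroup A]
  {b : A →ₗ[ℤ] A →ₗ[ℤ] F} {R : Set A} {E : Finset A}

theorem sat_exists (h : RSS b R) {T : Set A} (hT : T.Finite) (hTS : T ⊆ RR b R) :
    ∃ E : Finset A, Sat b R E ∧ T ⊆ E ∧ Submodule.span ℤ (E : Set A) = Submodule.span ℤ T := by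
  classical
  set X : Set A := {β | β ∈ RR b R ∧ β ∈ Submodule.span ℤ T} with hX
  have hfin : X.Finite := by
    have := hT.fintype
    let f : A → (T → ℤ) := fun β t => cn b (t : A) β
    apply Set.Finite.of_finite_image (f := f)
    · apply Set.Finite.subset (s := Set.Icc (fun _ => -4) (fun _ => 4)) (Set.finite_Icc _ _)
      rintro _ ⟨β, hβ, rfl⟩
      constructor
      · intro t; exact (abs_le.1 (h.cn_le (hTS t.2) hβ.1)).1
      · intro t; exact (abs_le.1 (h.cn_le (hTS t.2) hβ.1)).2
    · intro β hβ β' hβ' e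
      have orth : ∀ x ∈ Submodule.span ℤ T, b x (β - β') = 0 := by
        intro x hx
        induction hx using Submodule.span_induction with
        | mem x hx =>
          rw [← h.cn_eq_zero (hTS hx), map_sub, sub_eq_zero]
          exact congrFun e ⟨x, hx⟩
        | zero => simp
        | add x y _ _ h1 h2 => rw [map_add, LinearMap.add_apply, h1, h2, add_zero]
        | smul a x _ h1 => rw [map_smul, LinearMap.smul_apply, h1, smul_zero]
      have h1 := orth β hβ.2
      have h2 := orth β' hβ'.2
      rw [map_sub, sub_eq_zero] at h1 h2
      rw [h.symm β' β] at h2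
      apply h.eq_of_cn_two hβ.1 hβ'.1
      · rw [← h2, h1]
      · apply h.cn_unique hβ.1
        rw [← h1]; norm_num
  have hTX : T ⊆ X := fun t ht => ⟨hTS ht, Submodule.subset_span ht⟩
  have hsp : Submodule.span ℤ X = Submodule.span ℤ T := by
    apply le_antisymm
    · rw [Submodule.span_le]; exact fun x hx => hx.2
    · exact Submodule.span_mono hTX
  refine ⟨hfin.toFinset, ?_, by simpa using hTX, by simpa using hsp⟩
  intro β
  rw [Set.Finite.coe_toFinset, hsp, Set.Finite.mem_toFinset]
  rfl

theorem pf_self_ge (h : RSS b R) (hE : Sat b R E) {η : A} (hη : η ∈ E) : 4 ≤ pf b E η η := by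
  rw [pf_apply]
  have := Finset.single_le_sum (f := fun x => cn b x η * cn b x η)
    (fun _ _ => mul_self_nonneg _) hη
  simp only [h.cn_self ((hE η).1 hη).1] at this
  linarith

theorem refl_refl (h : RSS b R) {η : A} (hη : η ∈ RR b R) (x : A) :
    (x - cn b η x • η) - cn b η (x - cn b η x • η) • η = x := by
  rw [map_sub, map_smul, h.cn_self hη, smul_eq_mul]
  module

theorem cn_refl (h : RSS b R) {η γ : A} (hη : η ∈ RR b R) (hγ : γ ∈ RR b R) (x : A) :
    cn b (γ - cn b η γ • η) x = cn b γ (x - cn b η x • η) := by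
  apply h.cn_unique (h.refl_RR hη hγ)
  rw [h.b_refl hη, ← h.cn_spec hγ]
  conv_rhs => rw [← h.b_refl hη, h.refl_refl hη]

theorem refl_sat (h : RSS b R) (hE : Sat b R E) {η γ : A} (hη : η ∈ E) (hγ : γ ∈ E) :
    γ - cn b η γ • η ∈ E := by
  rw [hE]
  exact ⟨h.refl_RR ((hE _).1 hη).1 ((hE _).1 hγ).1,
    Submodule.sub_mem _ (Submodule.subset_span hγ)
      (Submodule.smul_mem _ _ (Submodule.subset_span hη))⟩

theorem pf_refl (h : RSS b R) (hE : Sat b R E) {η : A} (hη : η ∈ E) (x y : A) :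
    pf b E (x - cn b η x • η) (y - cn b η y • η) = pf b E x y := by
  have hη' := ((hE _).1 hη).1
  rw [pf_apply, pf_apply]
  apply Finset.sum_nbij' (fun γ => γ - cn b η γ • η) (fun γ => γ - cn b η γ • η)
  · exact fun γ hγ => h.refl_sat hE hη hγ
  · exact fun γ hγ => h.refl_sat hE hη hγ
  · exact fun γ _ => h.refl_refl hη' γ
  · exact fun γ _ => h.refl_refl hη' γ
  · intro γ hγ
    rw [h.cn_refl hη' ((hE _).1 hγ).1, h.cn_refl hη' ((hE _).1 hγ).1]

theorem pf_cn (h : RSS b R) (hE : Sat b R E) {η : A} (hη : η ∈ E) (x : A) :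
    2 * pf b E x η = cn b η x * pf b E η η := by
  have hη' := ((hE _).1 hη).1
  have := h.pf_refl hE hη x η
  rw [h.cn_self hη'] at this
  have e : η - (2 : ℤ) • η = -η := by module
  rw [e, map_neg, map_sub, LinearMap.sub_apply, map_smul, LinearMap.smul_apply,
    smul_eq_mul] at this
  linarith

theorem finite_base (h : RSS b R) (hE : Sat b R E) {γ : A} (hγ : γ ∈ E) :
    ∃ D : Finset A, D ⊆ E ∧ Submodule.span ℤ (D : Set A) = Submodule.span ℤ (E : Set A) ∧
      (∀ g : A → ℤ, (∀ η ∈ E, cn b η (∑ δ ∈ D, g δ • δ) = 0) → ∀ δ ∈ D, g δ = 0) ∧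
      ((∀ β ∈ RR b R, γ ≠ (2 : ℤ) • β) → γ ∈ D) := by
  classical
  have hS : ∀ β ∈ E, β ∈ RR b R := fun β hβ => ((hE β).1 hβ).1
  have hγS := hS γ hγ
  -- projection
  let pr : A →ₗ[ℤ] A := (2 : ℤ) • LinearMap.id - (cn b γ).smulRight γ
  have hpr : ∀ x, pr x = (2 : ℤ) • x - cn b γ x • γ := fun x => rfl
  obtain ⟨v, hv⟩ := avoid_kernels (E.filter (fun β => pf b E (pr β) (pr β) ≠ 0))
    (fun β => pf b E (pr β)) (fun β hβ => ⟨pr β, (Finset.mem_filter.1 hβ).2⟩)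
  have hv' : ∀ β ∈ E, pf b E (pr β) v = 0 → ∀ η ∈ E, cn b η (pr β) = 0 := by
    intro β hβ e
    apply pf_zero
    by_contra hc
    exact hv β (Finset.mem_filter.2 ⟨hβ, fun e => hc e.le⟩) e
  let h0 : A →ₗ[ℤ] ℤ := (pf b E).flip v ∘ₗ pr
  have hh0 : ∀ x, h0 x = pf b E (pr x) v := fun x => rfl
  let ht : A →ₗ[ℤ] ℤ := (5 : ℤ) • h0 + cn b γ
  have hht : ∀ x, ht x = 5 * h0 x + cn b γ x := fun x => by simp [ht]
  have hne : ∀ β ∈ E, ht β ≠ 0 := by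
    intro β hβ e
    rw [hht] at e
    have b1 := abs_le.1 (h.cn_le hγS (hS β hβ))
    have e0 : h0 β = 0 := by omega
    have e1 : cn b γ β = 0 := by omega
    have := hv' β hβ e0 β hβ
    rw [hpr, e1, map_sub, map_smul, h.cn_self (hS β hβ)] at this
    simp at this
  have hrad : ∀ x, (∀ η ∈ E, cn b η x = 0) → ht x = 0 := by
    intro x hx
    rw [hht, hh0, hpr, hx γ hγ, zero_smul, sub_zero, map_smul, LinearMap.smul_apply,
      pf_rad hx]
    simp
  have hneg : ∀ β ∈ E, -β ∈ E := by
    intro β hβ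
    rw [hE]
    exact ⟨h.neg_RR (hS β hβ), Submodule.neg_mem _ (Submodule.subset_span hβ)⟩
  set Pos := E.filter (fun β => 0 < ht β) with hPos
  set D := Pos.filter (fun β => ¬ ∃ β1 ∈ Pos, ∃ β2 ∈ Pos, β = β1 + β2) with hD
  have hPE : ∀ β ∈ Pos, β ∈ E := fun β hβ => (Finset.mem_filter.1 hβ).1
  have hDP : ∀ β ∈ D, β ∈ Pos := fun β hβ => (Finset.mem_filter.1 hβ).1
  have hspan : ∀ k : ℕ, ∀ β ∈ Pos, (ht β).toNat ≤ k → β ∈ Submodule.span ℤ (D : Set A) := by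
    intro k
    induction k with
    | zero =>
      intro β hβ hk
      have := (Finset.mem_filter.1 hβ).2
      omega
    | succ k ih =>
      intro β hβ hk
      by_cases hd : ∃ β1 ∈ Pos, ∃ β2 ∈ Pos, β = β1 + β2
      · obtain ⟨β1, h1, β2, h2, rfl⟩ := hd
        have p1 := (Finset.mem_filter.1 h1).2
        have p2 := (Finset.mem_filter.1 h2).2
        rw [map_add] at hk
        exact Submodule.add_mem _ (ih β1 h1 (by omega)) (ih β2 h2 (by omega))
      · exact Submodule.subset_span (Finset.mem_coe.2 (Finset.mem_filter.2 ⟨hβ, hd⟩))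
  have hobt : ∀ δ ∈ D, ∀ δ' ∈ D, δ ≠ δ' → pf b E δ δ' ≤ 0 := by
    intro δ hδ δ' hδ' hn
    by_contra hc
    push Not at hc
    have hδE := hPE _ (hDP _ hδ)
    have hδE' := hPE _ (hDP _ hδ')
    have e := h.pf_cn hE hδE' δ
    have e4 := h.pf_self_ge hE hδE'
    have hp : 0 < cn b δ' δ := by
      by_contra hc'
      push Not at hc'
      nlinarith
    have hsub : δ - δ' ∈ E := by
      rw [hE]
      exact ⟨h.sub_RR (hS _ hδE') (hS _ hδE) hp hn,
        Submodule.sub_mem _ (Submodule.subset_span hδE) (Submodule.subset_span hδE')⟩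
    rcases lt_or_gt_of_ne (hne _ hsub) with hl | hl
    · apply (Finset.mem_filter.1 hδ').2
      refine ⟨-(δ - δ'), Finset.mem_filter.2 ⟨hneg _ hsub, ?_⟩, δ, hDP _ hδ, by abel⟩
      rw [map_neg]; omega
    · apply (Finset.mem_filter.1 hδ).2
      exact ⟨δ - δ', Finset.mem_filter.2 ⟨hsub, hl⟩, δ', hDP _ hδ', by abel⟩
  refine ⟨D, fun β hβ => hPE _ (hDP _ hβ), ?_, ?_, ?_⟩
  · apply le_antisymm
    · exact Submodule.span_mono (fun β hβ => hPE _ (hDP _ hβ))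
    · rw [Submodule.span_le]
      intro β hβ
      rcases lt_or_gt_of_ne (hne _ hβ) with hl | hl
      · have := hspan _ (-β) (Finset.mem_filter.2 ⟨hneg _ hβ, by rw [map_neg]; omega⟩) le_rfl
        simpa using this
      · exact hspan _ β (Finset.mem_filter.2 ⟨hβ, hl⟩) le_rfl
  · intro g hg
    have gen : ∀ u : A → ℤ, (∀ δ, 0 ≤ u δ) → (∀ η ∈ E, cn b η (∑ δ ∈ D, u δ • δ) = 0) →
        ∀ δ ∈ D, u δ = 0 := by
      intro u hu hr
      have h1 := hrad _ hr
      rw [map_sum] at h1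
      have h2 : ∀ δ ∈ D, 0 < ht δ := fun δ hδ => (Finset.mem_filter.1 (hDP _ hδ)).2
      rw [Finset.sum_eq_zero_iff_of_nonneg] at h1
      · intro δ hδ
        have := h1 δ hδ
        rw [map_smul, smul_eq_mul] at this
        rcases mul_eq_zero.1 this with h3 | h3
        · exact h3
        · exact absurd h3 (h2 δ hδ).ne'
      · intro δ hδ
        rw [map_smul, smul_eq_mul]
        exact mul_nonneg (hu _) (h2 δ hδ).le
    set y := ∑ δ ∈ D, (g δ)⁺ • δ with hy
    set z := ∑ δ ∈ D, (g δ)⁻ • δ with hz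
    have hyz : ∑ δ ∈ D, g δ • δ = y - z := by
      rw [hy, hz, ← Finset.sum_sub_distrib]
      refine Finset.sum_congr rfl fun δ _ => ?_
      rw [← sub_smul, posPart_sub_negPart]
    rw [hyz] at hg
    have hyz2 : pf b E y z ≤ 0 := by
      rw [hy, hz]
      simp only [map_sum, LinearMap.sum_apply, map_smul, LinearMap.smul_apply, smul_eq_mul]
      apply Finset.sum_nonpos
      intro δ hδ
      rw [Finset.mul_sum]
      apply Finset.sum_nonpos
      intro δ' hδ'
      by_cases e : δ = δ'
      · subst e
        have : (g δ)⁺ = 0 ∨ (g δ)⁻ = 0 := by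
          rcases le_total 0 (g δ) with h1 | h1
          · right; exact negPart_eq_zero.2 h1
          · left; exact posPart_eq_zero.2 h1
        rcases this with h1 | h1 <;> simp [h1]
      · exact mul_nonpos_of_nonneg_of_nonpos (negPart_nonneg _)
          (mul_nonpos_of_nonneg_of_nonpos (posPart_nonneg _) (hobt δ' hδ' δ hδ (Ne.symm e)))
    have hyy : pf b E y y ≤ 0 := by
      have := pf_rad hg y
      rw [map_sub, LinearMap.sub_apply, pf_symm z y] at this
      linarith
    have ry := pf_zero hyy
    have rz : ∀ η ∈ E, cn b η z = 0 := by
      intro η hη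
      have h1 := hg η hη
      rw [map_sub, ry η hη] at h1
      omega
    intro δ hδ
    have h1 := gen _ (fun δ => posPart_nonneg (g δ)) ry δ hδ
    have h2 := gen _ (fun δ => negPart_nonneg (g δ)) rz δ hδ
    have := posPart_sub_negPart (g δ)
    omega
  · intro hind
    have hγ2 := h.cn_self hγS
    have hprγ : pr γ = 0 := by rw [hpr, hγ2, sub_self]
    have h0γ : h0 γ = 0 := by rw [hh0, hprγ]; simp
    have htγ : ht γ = 2 := by rw [hht, h0γ, hγ2]; norm_num
    refine Finset.mem_filter.2 ⟨Finset.mem_filter.2 ⟨hγ, by rw [htγ]; norm_num⟩, ?_⟩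
    rintro ⟨β1, h1, β2, h2, e⟩
    have p1 := (Finset.mem_filter.1 h1).2
    have p2 := (Finset.mem_filter.1 h2).2
    have s1 := hS _ (hPE _ h1)
    have s2 := hS _ (hPE _ h2)
    have b1 := abs_le.1 (h.cn_le hγS s1)
    have b2 := abs_le.1 (h.cn_le hγS s2)
    have e1 : h0 β1 + h0 β2 = 0 := by rw [← map_add, ← e, h0γ]
    have e2 : cn b γ β1 + cn b γ β2 = 2 := by rw [← map_add, ← e, hγ2]
    rw [hht] at p1 p2
    have a1 : h0 β1 = 0 := by omega
    have a2 : h0 β2 = 0 := by omega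
    have n1 : cn b γ β1 = 1 := by omega
    have n2 : cn b γ β2 = 1 := by omega
    have c1 := hv' β1 (hPE _ h1) a1 β1 (hPE _ h1)
    have c2 := hv' β2 (hPE _ h2) a2 β2 (hPE _ h2)
    rw [hpr, n1, map_sub, map_smul, h.cn_self s1, one_smul, smul_eq_mul] at c1
    rw [hpr, n2, map_sub, map_smul, h.cn_self s2, one_smul, smul_eq_mul] at c2
    have m1 : cn b β1 γ = 4 := by omega
    have m2 : cn b β2 γ = 4 := by omega
    have q1 := h.cn_symm hγS s1
    have q2 := h.cn_symm hγS s2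
    rw [n1, m1] at q1
    rw [n2, m2] at q2
    have : β1 = β2 := by
      apply h.eq_of_cn_two s1 s2
      · have : (4 : F) ≠ 0 := by norm_num
        apply mul_left_cancel₀ this
        push_cast at q1 q2
        linear_combination q1 - q2
      · have e3 := congrArg (cn b β1) e
        rw [map_add, h.cn_self s1, m1] at e3
        omega
    subst this
    exact hind β1 s1 (by rw [e]; module)

theorem nd (h : RSS b R) {x : A} (hx : x ∈ Submodule.span ℤ (RR b R))
    (ho : ∀ η ∈ RR b R, b η x = 0) : x = 0 := by
  classical
  obtain ⟨T, hT, hxT⟩ := Submodule.mem_span_finite_of_mem_span hx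
  obtain ⟨E, hE, hTE, hsp⟩ := h.sat_exists T.finite_toSet hT
  rcases T.eq_empty_or_nonempty with rfl | ⟨γ, hγ⟩
  · simpa using hxT
  obtain ⟨D, hDE, hDs, hD, -⟩ := h.finite_base hE (hTE hγ)
  rw [← hsp, ← hDs, Submodule.mem_span_finset] at hxT
  obtain ⟨g, -, rfl⟩ := hxT
  have := hD g (fun η hη => (h.cn_eq_zero ((hE _).1 hη).1).2 (ho η ((hE _).1 hη).1))
  exact Finset.sum_eq_zero fun δ hδ => by rw [this δ hδ, zero_smul]

end RSS


/-- component of a real root -/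
def Comp {F : Type*} [Field F] {A : Type*} [AddCommGroup A]
    (b : A →ₗ[ℤ] A →ₗ[ℤ] F) (R : Set A) (γ : A) : Set A :=
  {β | β ∈ RR b R ∧ ∃ δ ∈ RR b R, b β δ ≠ 0 ∧ b δ γ ≠ 0}

namespace RSS

variable {F : Type*} [Field F] [CharZero F] {A : Type*} [AddCommGroup A]
  {b : A →ₗ[ℤ] A →ₗ[ℤ] F} {R : Set A} {E : Finset A}

theorem comp_sub {γ : A} : Comp b R γ ⊆ RR b R := fun _ h => h.1

theorem self_comp {γ : A} (hγ : γ ∈ RR b R) : γ ∈ Comp b R γ := ⟨hγ, γ, hγ, hγ.2, hγ.2⟩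

theorem path3 (h : RSS b R) {c0 c1 c2 c3 : A} (h1 : c1 ∈ RR b R) (h2 : c2 ∈ RR b R)
    (e1 : b c0 c1 ≠ 0) (e2 : b c1 c2 ≠ 0) (e3 : b c2 c3 ≠ 0) :
    ∃ δ ∈ RR b R, b c0 δ ≠ 0 ∧ b δ c3 ≠ 0 := by
  by_cases h02 : b c0 c2 = 0
  · by_cases h13 : b c1 c3 = 0
    · refine ⟨_, h.refl_RR h1 h2, ?_, ?_⟩
      · rw [map_sub, map_smul, h02, zero_sub, zsmul_eq_mul, neg_ne_zero]
        apply mul_ne_zero _ e1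
        have : cn b c1 c2 ≠ 0 := fun e => e2 ((h.cn_eq_zero h1).1 e)
        exact_mod_cast this
      · rw [map_sub, map_smul, LinearMap.sub_apply, LinearMap.smul_apply, h13, smul_zero,
          sub_zero]
        exact e3
    · exact ⟨c1, h1, e1, h13⟩
  · exact ⟨c2, h2, h02, e3⟩

/-- adjacent to an element of the component -/
theorem comp_adj (h : RSS b R) {γ β δ : A} (hβ : β ∈ Comp b R γ) (hδ : δ ∈ RR b R)
    (hn : b δ β ≠ 0) : δ ∈ Comp b R γ := by
  obtain ⟨hβ, ε, hε, e1, e2⟩ := hβ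
  exact ⟨hδ, h.path3 hβ hε hn e1 e2⟩

theorem comp_orth (h : RSS b R) {γ β δ : A} (hβ : β ∈ Comp b R γ) (hδ : δ ∈ RR b R)
    (hn : δ ∉ Comp b R γ) : b δ β = 0 := by
  by_contra hc
  exact hn (h.comp_adj hβ hδ hc)

theorem comp_symm (h : RSS b R) {γ β : A} (hγ : γ ∈ RR b R) (hβ : β ∈ Comp b R γ) :
    γ ∈ Comp b R β := by
  obtain ⟨hβ, ε, hε, e1, e2⟩ := hβ
  exact ⟨hγ, ε, hε, by rwa [h.symm], by rwa [h.symm]⟩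

theorem comp_trans (h : RSS b R) {γ β δ : A} (hβ : β ∈ Comp b R γ) (hδ : δ ∈ Comp b R β) :
    δ ∈ Comp b R γ := by
  obtain ⟨hδ, ε, hε, e1, e2⟩ := hδ
  exact h.comp_adj (h.comp_adj hβ hε e2) hδ e1

theorem comp_eq (h : RSS b R) {γ β : A} (hγ : γ ∈ RR b R) (hβ : β ∈ Comp b R γ) :
    Comp b R β = Comp b R γ := by
  ext δ
  exact ⟨fun hδ => h.comp_trans hβ hδ, fun hδ => h.comp_trans (h.comp_symm hγ hβ) hδ⟩

theorem comp_orth_span (h : RSS b R) {γ x δ : A} (hx : x ∈ Submodule.span ℤ (Comp b R γ))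
    (hδ : δ ∈ RR b R) (hn : δ ∉ Comp b R γ) : b δ x = 0 := by
  induction hx using Submodule.span_induction with
  | mem x hx => exact h.comp_orth hx hδ hn
  | zero => simp
  | add x y _ _ h1 h2 => rw [map_add, h1, h2, add_zero]
  | smul a x _ h1 => rw [map_smul, h1, smul_zero]

theorem span_orth_span (h : RSS b R) {γ x y : A} (hx : x ∈ Submodule.span ℤ (Comp b R γ))
    (hy : y ∈ Submodule.span ℤ (RR b R \ Comp b R γ)) : b y x = 0 := by
  induction hy using Submodule.span_induction with
  | mem y hy => exact h.comp_orth_span hx hy.1 hy.2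
  | zero => simp
  | add x y _ _ h1 h2 => rw [map_add, LinearMap.add_apply, h1, h2, add_zero]
  | smul a x _ h1 => rw [map_smul, LinearMap.smul_apply, h1, smul_zero]

theorem mem_comp_of_span (h : RSS b R) {γ β : A} (hβ : β ∈ RR b R)
    (hx : β ∈ Submodule.span ℤ (Comp b R γ)) : β ∈ Comp b R γ := by
  by_contra hn
  exact hβ.2 (h.comp_orth_span hx hβ hn)

theorem neg_comp (h : RSS b R) {γ β : A} (hβ : β ∈ Comp b R γ) : -β ∈ Comp b R γ :=
  h.comp_adj hβ (h.neg_RR hβ.1) (by simpa using hβ.1.2)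

theorem comp_q (h : RSS b R) {γ x : A} (hγ : γ ∈ RR b R)
    (hx : x ∈ Submodule.span ℤ (Comp b R γ)) :
    ∃ E : Finset A, 0 < pf b E γ γ ∧ ∀ y, b x y * (pf b E γ γ : F) = (pf b E x y : F) * b γ γ := by
  classical
  have hd : ∀ β, ∃ δ, β ∈ Comp b R γ → δ ∈ RR b R ∧ b β δ ≠ 0 ∧ b δ γ ≠ 0 := by
    intro β
    by_cases hβ : β ∈ Comp b R γ
    · obtain ⟨_, δ, h1, h2, h3⟩ := hβ
      exact ⟨δ, fun _ => ⟨h1, h2, h3⟩⟩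
    · exact ⟨0, fun hh => absurd hh hβ⟩
  choose d hd using hd
  obtain ⟨T, hT, hxT⟩ := Submodule.mem_span_finite_of_mem_span hx
  obtain ⟨E, hE, hTE, -⟩ := h.sat_exists (T := insert γ ((T : Set A) ∪ d '' T))
    (((T.finite_toSet).union (T.finite_toSet.image d)).insert γ) (by
      intro t ht
      rcases ht with rfl | ht | ⟨s, hs, rfl⟩
      · exact hγ
      · exact (hT ht).1
      · exact (hd s (hT hs)).1)
  have hγE : γ ∈ E := hTE (Set.mem_insert _ _)
  have hpos : ∀ η ∈ E, (pf b E η η : F) ≠ 0 := by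
    intro η hη
    have := h.pf_self_ge hE hη
    exact_mod_cast (by omega : pf b E η η ≠ 0)
  have hpc : ∀ η ∈ E, ∀ y, 2 * (pf b E η y : F) = cn b η y * (pf b E η η : F) := by
    intro η hη y
    have := h.pf_cn hE hη y
    rw [pf_symm] at this
    exact_mod_cast this
  have adj : ∀ β ∈ E, ∀ δ ∈ E, b β δ ≠ 0 →
      b β β * (pf b E δ δ : F) = b δ δ * (pf b E β β : F) := by
    intro β hβ δ hδ hne
    have sβ := ((hE _).1 hβ).1
    have sδ := ((hE _).1 hδ).1
    have e1 := h.cn_symm sβ sδ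
    have e2 := hpc β hβ δ
    have e3 := hpc δ hδ β
    rw [pf_symm δ β, e2] at e3
    have n1 : (cn b β δ : F) ≠ 0 := by
      have : cn b β δ ≠ 0 := fun e => hne ((h.cn_eq_zero sβ).1 e)
      exact_mod_cast this
    have n2 : (cn b δ β : F) ≠ 0 := by
      have : cn b δ β ≠ 0 := fun e => hne (by rw [h.symm]; exact ((h.cn_eq_zero sδ).1 e))
      exact_mod_cast this
    apply mul_left_cancel₀ (mul_ne_zero n1 n2)
    linear_combination (pf b E δ δ : F) * (cn b δ β : F) * e1 - (cn b δ β : F) * b δ δ * e3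
  have hT2 : ∀ β ∈ T, b β β * (pf b E γ γ : F) = b γ γ * (pf b E β β : F) := by
    intro β hβ
    obtain ⟨d1, d2, d3⟩ := hd β (hT hβ)
    have hβE : β ∈ E := hTE (Or.inr (Or.inl hβ))
    have hdE : d β ∈ E := hTE (Or.inr (Or.inr ⟨β, hβ, rfl⟩))
    have e1 := adj _ hβE _ hdE d2
    have e2 := adj _ hdE _ hγE d3
    apply mul_left_cancel₀ (hpos _ hdE)
    linear_combination (pf b E γ γ : F) * e1 + (pf b E β β : F) * e2
  refine ⟨E, by have := h.pf_self_ge hE hγE; omega, ?_⟩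
  intro y
  induction hxT using Submodule.span_induction with
  | mem β hβ =>
    have sβ : β ∈ RR b R := (hT hβ).1
    have hβE : β ∈ E := hTE (Or.inr (Or.inl hβ))
    have e1 := h.cn_spec sβ y
    have e2 := hpc β hβE y
    apply mul_left_cancel₀ (two_ne_zero (α := F))
    linear_combination (pf b E γ γ : F) * e1 - b γ γ * e2 + (cn b β y : F) * hT2 β hβ
  | zero => simp
  | add x z hx1 hz1 h1 h2 =>
    have h1 := h1 (Submodule.span_mono hT hx1)
    have h2 := h2 (Submodule.span_mono hT hz1)
    simp only [map_add, LinearMap.add_apply]; push_cast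
    linear_combination h1 + h2
  | smul a x hx1 h1 =>
    have h1 := h1 (Submodule.span_mono hT hx1)
    simp only [map_smul, LinearMap.smul_apply, zsmul_eq_mul, smul_eq_mul]; push_cast
    linear_combination (a : F) * h1

theorem comp_q1 (h : RSS b R) {γ x : A} (hγ : γ ∈ RR b R)
    (hx : x ∈ Submodule.span ℤ (Comp b R γ)) (y : A) : ∃ q : ℚ, b x y = (q : F) * b γ γ := by
  obtain ⟨E, hp, hE⟩ := h.comp_q hγ hx
  refine ⟨(pf b E x y : ℚ) / pf b E γ γ, ?_⟩
  have hp' : (pf b E γ γ : F) ≠ 0 := by exact_mod_cast hp.ne'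
  have := hE y
  push_cast
  field_simp
  linear_combination this

theorem comp_q2 (h : RSS b R) {γ x : A} (hγ : γ ∈ RR b R)
    (hx : x ∈ Submodule.span ℤ (Comp b R γ)) (hx0 : x ≠ 0) {q : ℚ}
    (e : b x x = (q : F) * b γ γ) : 0 < q := by
  obtain ⟨E, hp, hE⟩ := h.comp_q hγ hx
  have hp' : (pf b E γ γ : F) ≠ 0 := by exact_mod_cast hp.ne'
  have e1 := hE x
  rw [e] at e1
  have e2 : q * (pf b E γ γ : ℚ) = pf b E x x := by
    have : (q : F) * (pf b E γ γ : F) = pf b E x x := by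
      apply mul_right_cancel₀ hγ.2
      linear_combination e1
    exact_mod_cast this
  have hpx : 0 < pf b E x x := by
    rcases (pf_nonneg (b := b) (E := E) x).lt_or_eq with h1 | h1
    · exact h1
    · exfalso
      apply hx0
      apply h.nondeg
      intro c
      have e3 := hE c
      rw [pf_rad (pf_zero h1.symm.le) c] at e3
      simpa [hp'] using e3
  have hpq : (0 : ℚ) < pf b E γ γ := by exact_mod_cast hp
  have hxq : (0 : ℚ) < pf b E x x := by exact_mod_cast hpx
  rw [← e2] at hxq
  exact pos_of_mul_pos_left hxq hpq.le

theorem comp_aniso (h : RSS b R) {γ x : A} (hγ : γ ∈ RR b R)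
    (hx : x ∈ Submodule.span ℤ (Comp b R γ)) (e : b x x = 0) : x = 0 := by
  by_contra hx0
  exact lt_irrefl _ (h.comp_q2 hγ hx hx0 (q := 0) (by simp [e]))

/-- the rational form on the span of a component -/
theorem comp_form (h : RSS b R) {γ : A} (hγ : γ ∈ RR b R) :
    ∃ B : Submodule.span ℤ (Comp b R γ) →ₗ[ℤ] Submodule.span ℤ (Comp b R γ) →ₗ[ℤ] ℚ,
      (∀ x y : Submodule.span ℤ (Comp b R γ), b (x : A) (y : A) = (B x y : F) * b γ γ) ∧
      (∀ x, x ≠ 0 → 0 < B x x) := by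
  choose f hf using fun (x y : Submodule.span ℤ (Comp b R γ)) =>
    h.comp_q1 hγ x.2 (y : A)
  have inj : ∀ p q : ℚ, (p : F) * b γ γ = q * b γ γ → p = q := by
    intro p q e
    exact_mod_cast mul_right_cancel₀ hγ.2 e
  refine ⟨LinearMap.mk₂ ℤ f ?_ ?_ ?_ ?_, hf, ?_⟩
  · intro x y z; apply inj
    rw [← hf]; push_cast; rw [add_mul, ← hf, ← hf]; simp
  · intro a x y; apply inj
    rw [← hf]; simp only [zsmul_eq_mul]; push_cast; rw [mul_assoc, ← hf]; simp
  · intro x y z; apply inj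
    rw [← hf]; push_cast; rw [add_mul, ← hf, ← hf]; simp
  · intro a x y; apply inj
    rw [← hf]; simp only [zsmul_eq_mul]; push_cast; rw [mul_assoc, ← hf]; simp
  · intro x hx
    exact h.comp_q2 hγ x.2 (by simpa using hx) (hf x x)

end RSS


theorem li_exchange {L : Type*} [AddCommGroup L] {P : Set L} (hP : LinearIndepOn ℤ id P)
    {p γ w : L} (hp : p ∈ P) {u : ℤ} (hu : u = 1 ∨ u = -1)
    (hw : w ∈ Submodule.span ℤ (P \ {p})) (e : γ = u • p + w) :
    LinearIndepOn ℤ id (insert γ (P \ {p})) ∧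
      Submodule.span ℤ (insert γ (P \ {p})) = Submodule.span ℤ P := by
  constructor
  · apply (hP.mono Set.sdiff_subset).id_insert'
    intro k hk
    have h1 : (k * u) • p ∈ Submodule.span ℤ (P \ {p}) := by
      have : (k * u) • p = k • γ - k • w := by rw [e]; module
      rw [this]
      exact Submodule.sub_mem _ hk (Submodule.smul_mem _ _ hw)
    have h2 := hP.eq_zero_of_smul_mem_span hp (k * u) (by simpa using h1)
    rcases hu with rfl | rfl <;> omega
  · apply le_antisymm
    · rw [Submodule.span_le, Set.insert_subset_iff]
      constructor
      · rw [e]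
        exact Submodule.add_mem _ (Submodule.smul_mem _ _ (Submodule.subset_span hp))
          (Submodule.span_mono Set.sdiff_subset hw)
      · exact fun x hx => Submodule.subset_span hx.1
    · rw [Submodule.span_le]
      intro x hx
      by_cases hxp : x = p
      · subst hxp
        have h0 : x = u • γ - u • w := by
          rw [e]; rcases hu with rfl | rfl <;> module
        suffices h1 : u • γ - u • w ∈ Submodule.span ℤ (insert γ (P \ {x})) by
          rw [← h0] at h1; exact h1
        refine Submodule.sub_mem _ (Submodule.smul_mem _ _ (Submodule.subset_span
          (Set.mem_insert _ _))) (Submodule.smul_mem _ _ ?_)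
        exact Submodule.span_mono (Set.subset_insert _ _) hw
      · exact Submodule.subset_span (Set.mem_insert_of_mem _ ⟨hx, hxp⟩)

theorem infinite_fiber {α β : Type*} {V : Set α} (hV : V.Infinite) (f : α → β)
    (hf : (f '' V).Finite) : ∃ y, {x ∈ V | f x = y}.Infinite := by
  by_contra hc
  push Not at hc
  apply hV
  apply (hf.biUnion (fun y _ => hc y)).subset
  intro x hx
  simp only [Set.mem_iUnion]
  exact ⟨f x, ⟨x, hx, rfl⟩, hx, rfl⟩

/-- an infinite graph without independent sets of size `k` has an infinite clique -/
theorem ramsey_clique {α : Type*} (r : α → α → Prop) (hs : ∀ x y, r x y → r y x) (k : ℕ) :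
    ∀ V : Set α, V.Infinite →
      (∀ s : Finset α, (s : Set α) ⊆ V → s.card = k → ∃ x ∈ s, ∃ y ∈ s, x ≠ y ∧ r x y) →
      ∃ W ⊆ V, W.Infinite ∧ ∀ x ∈ W, ∀ y ∈ W, x ≠ y → r x y := by
  classical
  induction k with
  | zero =>
    intro V hV H
    obtain ⟨x, hx, _⟩ := H ∅ (by simp) (by simp)
    simp at hx
  | succ k ih =>
    intro V hV H
    by_cases hN : ∃ v ∈ V, {y ∈ V | y ≠ v ∧ ¬ r v y}.Infinite
    · obtain ⟨v, hv, hinf⟩ := hN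
      obtain ⟨W, hW, h1, h2⟩ := ih _ hinf (by
        intro s hs' hcard
        have hvs : v ∉ s := fun hh => (hs' hh).2.1 rfl
        obtain ⟨x, hx, y, hy, hne, hr⟩ := H (insert v s) (by
          rw [Finset.coe_insert, Set.insert_subset_iff]
          exact ⟨hv, fun y hy => (hs' hy).1⟩) (by rw [Finset.card_insert_of_notMem hvs, hcard])
        rw [Finset.mem_insert] at hx hy
        rcases hx with rfl | hx
        · rcases hy with rfl | hy
          · exact absurd rfl hne
          · exact absurd hr (hs' hy).2.2
        · rcases hy with rfl | hy
          · exact absurd (hs _ _ hr) (hs' hx).2.2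
          · exact ⟨x, hx, y, hy, hne, hr⟩)
      exact ⟨W, fun x hx => (hW hx).1, h1, h2⟩
    · push Not at hN
      let q : α → α → Prop := fun x y => x ≠ y ∧ r x y
      have : Std.Symm q := ⟨fun x y h => ⟨h.1.symm, hs _ _ h.2⟩⟩
      obtain ⟨f, hf, hp⟩ := exists_seq_of_forall_finset_exists' (fun x => x ∈ V) q (by
        intro s hsV
        have hfin : ((s : Set α) ∪ ⋃ v ∈ s, {y ∈ V | y ≠ v ∧ ¬ r v y}).Finite :=
          s.finite_toSet.union (s.finite_toSet.biUnion fun v hv => hN v (hsV v hv))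
        obtain ⟨y, hy, hny⟩ := hV.exists_notMem_finite hfin
        refine ⟨y, hy, fun x hx => ?_⟩
        simp only [Set.mem_union, Set.mem_iUnion, not_or, not_exists] at hny
        have hxy : x ≠ y := by rintro rfl; exact hny.1 hx
        refine ⟨hxy, ?_⟩
        by_contra hr
        exact hny.2 x hx ⟨hy, hxy.symm, hr⟩)
      refine ⟨Set.range f, ?_, ?_, ?_⟩
      · rintro _ ⟨n, rfl⟩; exact hf n
      · apply Set.infinite_range_of_injective
        intro m n e
        by_contra hne
        exact (hp hne).1 e
      · rintro _ ⟨m, rfl⟩ _ ⟨n, rfl⟩ hne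
        exact (hp (fun e => hne (by rw [e]))).2

/-- abstract connected root system with a positive definite rational form -/
structure ICS {L : Type*} [AddCommGroup L] (B : L →ₗ[ℤ] L →ₗ[ℤ] ℚ) (C : Set L) : Prop where
  symm : ∀ x y, B x y = B y x
  pos : ∀ x, x ≠ 0 → 0 < B x x
  span_top : Submodule.span ℤ C = ⊤
  zero : (0 : L) ∉ C
  cartan : ∀ γ ∈ C, ∀ x, ∃ k : ℤ, 2 * B γ x = k * B γ γ
  refl : ∀ γ ∈ C, ∀ β ∈ C, ∀ k : ℤ, 2 * B γ β = k * B γ γ → β - k • γ ∈ C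
  sub : ∀ γ ∈ C, ∀ β ∈ C, 0 < B γ β → β ≠ γ → β - γ ∈ C
  conn : ∀ β ∈ C, ∀ γ ∈ C, ∃ δ ∈ C, B β δ ≠ 0 ∧ B δ γ ≠ 0

/-- normalised clique -/
def IsClq {L : Type*} [AddCommGroup L] (B : L →ₗ[ℤ] L →ₗ[ℤ] ℚ) (r : ℚ) (K : Set L) : Prop :=
  ∀ x ∈ K, B x x = r ∧ ∀ y ∈ K, x ≠ y → 2 * B x y = r

namespace ICS
variable {L : Type*} [AddCommGroup L] {B : L →ₗ[ℤ] L →ₗ[ℤ] ℚ} {C : Set L}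

theorem neg (h : ICS B C) {β : L} (hβ : β ∈ C) : -β ∈ C := by
  have := h.refl β hβ β hβ 2 (by norm_num)
  have e : β - (2 : ℤ) • β = -β := by module
  rwa [e] at this

theorem ne (h : ICS B C) {β : L} (hβ : β ∈ C) : β ≠ 0 := by
  rintro rfl; exact h.zero hβ

theorem nonneg (h : ICS B C) (x : L) : 0 ≤ B x x := by
  by_cases hx : x = 0
  · simp [hx]
  · exact (h.pos x hx).le

theorem exists_inf_nbr (h : ICS B C) (hinf : C.Infinite) :
    ∃ g ∈ C, {β ∈ C | B g β ≠ 0}.Infinite := by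
  by_contra hc
  push Not at hc
  obtain ⟨g0, hg0⟩ := hinf.nonempty
  apply hinf
  apply ((hc g0 hg0).biUnion (t := fun δ => {β ∈ C | B δ β ≠ 0})
    (fun δ hδ => hc δ hδ.1)).subset
  intro β hβ
  obtain ⟨δ, hδ, h1, h2⟩ := h.conn β hβ g0 hg0
  simp only [Set.mem_iUnion]
  exact ⟨δ, ⟨hδ, by rwa [h.symm]⟩, hβ, by rwa [h.symm]⟩

theorem cauchy (h : ICS B C) (x y : L) (hx : x ≠ 0) : (B x y) ^ 2 ≤ B x x * B y y := by
  -- pass to integers multiples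
  have hp := h.pos x hx
  set p := B x x with hpdef
  set q := B x y with hqdef
  -- choose common denominator
  obtain ⟨d, hd, a, c, ha, hcc⟩ : ∃ d : ℤ, 0 < d ∧ ∃ a c : ℤ, (d : ℚ) * p = a ∧ (d : ℚ) * q = c := by
    refine ⟨p.den * q.den, by positivity, p.num * q.den, q.num * p.den, ?_, ?_⟩
    · push_cast
      have := p.den_mul_eq_num
      linear_combination (q.den : ℚ) * this
    · push_cast
      have := q.den_mul_eq_num
      linear_combination (p.den : ℚ) * this
  have key := h.nonneg (a • y - c • x)
  have e : B (a • y - c • x) (a • y - c • x) = (a : ℚ) ^ 2 * B y y - 2 * a * c * q + c ^ 2 * p := by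
    simp only [map_sub, LinearMap.sub_apply, map_smul, LinearMap.smul_apply, zsmul_eq_mul,
      h.symm y x]
    ring
  rw [e, ← ha, ← hcc] at key
  have hd' : (0 : ℚ) < d := by exact_mod_cast hd
  have : 0 ≤ (d ^ 2 * p) * (p * B y y - q ^ 2) := by
    have : ((d : ℚ) ^ 2 * p) * (p * B y y - q ^ 2) =
      (d * p) ^ 2 * B y y - 2 * (d * p) * (d * q) * q + (d * q) ^ 2 * p := by ring
    rw [this]; exact key
  have h3 := nonneg_of_mul_nonneg_right this (by positivity)
  linarith

theorem cauchy_lt (h : ICS B C) (x y : L) (hx : x ≠ y) (e : B x x = B y y) (hx0 : x ≠ 0) :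
    |B x y| ≤ B x x ∧ B x y < B x x := by
  have h1 := h.cauchy x y hx0
  have hp := h.pos x hx0
  rw [← e, ← pow_two] at h1
  refine ⟨abs_le_of_sq_le_sq h1 hp.le, ?_⟩
  have h2 := h.pos (x - y) (sub_ne_zero.2 hx)
  simp only [map_sub, LinearMap.sub_apply, h.symm y x] at h2
  linarith

theorem exists_clique (h : ICS B C) (hinf : C.Infinite) :
    ∃ r : ℚ, 0 < r ∧ ∃ W ⊆ C, W.Infinite ∧ IsClq B r W := by
  classical
  obtain ⟨g', hg', hN'⟩ := h.exists_inf_nbr hinf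
  -- a sign
  obtain ⟨g, hg, hN⟩ : ∃ g ∈ C, {β ∈ C | 0 < B g β}.Infinite := by
    by_contra hc
    push Not at hc
    apply hN'
    apply ((hc g' hg').union (hc (-g') (h.neg hg'))).subset
    rintro β ⟨hβ, hne⟩
    rcases lt_or_gt_of_ne hne with h1 | h1
    · right; exact ⟨hβ, by simpa using h1⟩
    · left; exact ⟨hβ, h1⟩
  have hgp := h.pos g (h.ne hg)
  choose f hf using fun β => h.cartan g hg β
  have hex : ∀ β, ∃ k : ℤ, β ∈ C → 2 * B β g = k * B β β := by
    intro β
    by_cases hβ : β ∈ C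
    · obtain ⟨k, hk⟩ := h.cartan β hβ g; exact ⟨k, fun _ => hk⟩
    · exact ⟨0, fun hh => absurd hh hβ⟩
  choose f' hf' using hex
  have hbd : ∀ β ∈ C, 0 < B g β → 0 < f β ∧ 0 < f' β ∧ f β ≤ 4 ∧ f' β ≤ 4 := by
    intro β hβ hp
    have hβp := h.pos β (h.ne hβ)
    have e1 := hf β
    have e2 := hf' β hβ
    rw [h.symm β g] at e2
    have p1 : (0 : ℚ) < f β := by
      by_contra hc; push Not at hc
      nlinarith
    have p2 : (0 : ℚ) < f' β := by
      by_contra hc; push Not at hc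
      nlinarith
    have p3 : (f β : ℚ) * f' β ≤ 4 := by
      have hc := h.cauchy g β (h.ne hg)
      have : (f β : ℚ) * f' β * (B g g * B β β) ≤ 4 * (B g g * B β β) := by
        have : (f β : ℚ) * f' β * (B g g * B β β) = (2 * B g β) * (2 * B g β) := by
          linear_combination (-(f' β : ℚ) * B β β) * e1 - 2 * B g β * e2
        nlinarith
      exact le_of_mul_le_mul_right this (by positivity)
    have p1' : 0 < f β := by exact_mod_cast p1
    have p2' : 0 < f' β := by exact_mod_cast p2
    have p3' : f β * f' β ≤ 4 := by exact_mod_cast p3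
    refine ⟨p1', p2', ?_, ?_⟩ <;> nlinarith
  obtain ⟨⟨n, m⟩, hfib⟩ := infinite_fiber hN (fun β => (f β, f' β)) (by
    apply Set.Finite.subset (Set.finite_Icc ((0 : ℤ), (0 : ℤ)) (4, 4))
    rintro _ ⟨β, ⟨hβ, hp⟩, rfl⟩
    obtain ⟨h1, h2, h3, h4⟩ := hbd β hβ hp
    exact ⟨⟨h1.le, h2.le⟩, ⟨h3, h4⟩⟩)
  set V := {x | x ∈ {β | β ∈ C ∧ 0 < B g β} ∧ (f x, f' x) = (n, m)} with hV
  have hn : ∀ x ∈ V, 0 < n ∧ 0 < m ∧ 2 * B g x = n * B g g ∧ 2 * B g x = m * B x x := by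
    rintro x ⟨⟨hx, hp⟩, hxe⟩
    obtain ⟨h1, h2, -, -⟩ := hbd x hx hp
    have e1 := hf x
    have e2 := hf' x hx
    rw [h.symm x g] at e2
    rw [Prod.mk.injEq] at hxe
    rw [← hxe.1, ← hxe.2]
    exact ⟨h1, h2, e1, e2⟩
  obtain ⟨x0, hx0⟩ := hfib.nonempty
  obtain ⟨n0, m0, -, -⟩ := hn x0 hx0
  set r := B x0 x0 with hr
  have hrp : 0 < r := h.pos x0 (h.ne hx0.1.1)
  have hm0 : (0 : ℚ) < m := by exact_mod_cast m0
  have hn0 : (1 : ℚ) ≤ n := by exact_mod_cast n0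
  have hm1 : (1 : ℚ) ≤ m := by exact_mod_cast m0
  have hVr : ∀ x ∈ V, B x x = r := by
    intro x hx
    obtain ⟨-, -, e1, e2⟩ := hn x hx
    obtain ⟨-, -, e3, e4⟩ := hn x0 hx0
    have : (m : ℚ) * B x x = m * r := by rw [← e2, hr, ← e4, e1, e3]
    exact mul_left_cancel₀ hm0.ne' this
  obtain ⟨W, hWV, hWi, hW⟩ := ramsey_clique (fun x y => 0 < B x y)
    (fun x y hxy => by rw [h.symm]; exact hxy) 5 V hfib (by
      intro s hs hcard
      by_contra hc
      push Not at hc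
      have key := h.nonneg ((2 : ℤ) • g - m • ∑ x ∈ s, x)
      have e1 : B g (∑ x ∈ s, x) * 2 = 5 * (n * B g g) := by
        rw [map_sum, Finset.sum_mul, Finset.sum_congr rfl
          (fun x hx => by rw [mul_comm, (hn x (hs hx)).2.2.1])]
        rw [Finset.sum_const, hcard]; simp
      have e2 : B (∑ x ∈ s, x) (∑ x ∈ s, x) ≤ 5 * r := by
        rw [show B (∑ x ∈ s, x) (∑ x ∈ s, x) = ∑ x ∈ s, B x (∑ y ∈ s, y) by
          rw [map_sum B, LinearMap.sum_apply]]
        calc ∑ x ∈ s, B x (∑ y ∈ s, y) ≤ ∑ x ∈ s, r := by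
              apply Finset.sum_le_sum
              intro x hx
              rw [map_sum, ← Finset.add_sum_erase s _ hx, hVr x (hs hx)]
              have : ∑ y ∈ s.erase x, B x y ≤ 0 := by
                apply Finset.sum_nonpos
                intro y hy
                rw [Finset.mem_erase] at hy
                exact hc x hx y hy.2 (Ne.symm hy.1)
              linarith
          _ = 5 * r := by rw [Finset.sum_const, hcard]; simp
      have e3 : (m : ℚ) * r = n * B g g := by
        obtain ⟨-, -, e3, e4⟩ := hn x0 hx0
        rw [hr, ← e4, e3]
      set σ := ∑ x ∈ s, x
      have e4 : B ((2 : ℤ) • g - m • σ) ((2 : ℤ) • g - m • σ) =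
          4 * B g g - 4 * m * B g σ + m ^ 2 * B σ σ := by
        simp only [map_sub, LinearMap.sub_apply, map_smul, LinearMap.smul_apply, zsmul_eq_mul,
          h.symm σ g]
        push_cast; ring
      rw [e4] at key
      have e5 : (m : ℚ) ^ 2 * B σ σ ≤ m ^ 2 * (5 * r) := by
        apply mul_le_mul_of_nonneg_left e2; positivity
      have e6 : (m : ℚ) ^ 2 * (5 * r) = 5 * m * (n * B g g) := by rw [← e3]; ring
      have e7 : 1 ≤ (m : ℚ) * n := by nlinarith
      have e8 : 4 * (m : ℚ) * B g σ = 10 * (m * n) * B g g := by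
        linear_combination 2 * (m : ℚ) * e1
      nlinarith)
  refine ⟨r, hrp, W, fun x hx => (hWV hx).1.1, hWi, ?_⟩
  intro x hx
  refine ⟨hVr x (hWV hx), fun y hy hne => ?_⟩
  have hx' := hVr x (hWV hx)
  have hy' := hVr y (hWV hy)
  have hxC := (hWV hx).1.1
  obtain ⟨k, hk⟩ := h.cartan x hxC y
  have h1 := (h.cauchy_lt x y hne (by rw [hx', hy']) (h.ne hxC)).2
  have h2 := hW x hx y hy hne
  rw [hx'] at hk h1
  have k1 : (k : ℚ) < 2 := by
    by_contra hc; push Not at hc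
    nlinarith
  have k2 : (0 : ℚ) < k := by
    by_contra hc; push Not at hc
    nlinarith
  have k1' : k < 2 := by exact_mod_cast k1
  have k2' : 0 < k := by exact_mod_cast k2
  have : k = 1 := by omega
  rw [hk, this]; simp

end ICS


namespace ICS
variable {L : Type*} [AddCommGroup L] {B : L →ₗ[ℤ] L →ₗ[ℤ] ℚ} {C : Set L} {K : Set L}

theorem clq_int (h : ICS B C) (hK : IsClq B 2 K) (hKC : K ⊆ C) (a : L) :
    ∃ k : L → ℤ, ∀ x ∈ K, B x a = k x := by
  have : ∀ x, ∃ k : ℤ, x ∈ K → B x a = k := by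
    intro x
    by_cases hx : x ∈ K
    · obtain ⟨k, hk⟩ := h.cartan x (hKC hx) a
      rw [(hK x hx).1] at hk
      exact ⟨k, fun _ => by linarith⟩
    · exact ⟨0, fun hh => absurd hh hx⟩
  choose k hk using this
  exact ⟨k, hk⟩

theorem clq_sum (hK : IsClq B 2 K) {F : Finset L} (hF : (F : Set L) ⊆ K)
    (w : L → ℤ) {x : L} (hx : x ∈ F) :
    B x (∑ y ∈ F, w y • y) = w x + ∑ y ∈ F, (w y : ℚ) := by
  classical
  rw [map_sum, ← Finset.add_sum_erase F _ hx, ← Finset.add_sum_erase F (fun y => (w y : ℚ)) hx]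
  rw [map_smul, (hK x (hF hx)).1, zsmul_eq_mul]
  rw [Finset.sum_congr rfl (g := fun y => (w y : ℚ)) (fun y hy => ?_)]
  · ring
  · rw [Finset.mem_erase] at hy
    have := (hK x (hF hx)).2 y (hF hy.2) (Ne.symm hy.1)
    rw [map_smul, zsmul_eq_mul]
    have h1 : B x y = 1 := by linarith
    rw [h1, mul_one]

theorem clq_ineq (h : ICS B C) (hK : IsClq B 2 K) {F : Finset L}
    (hF : (F : Set L) ⊆ K) (a : L) (k : L → ℤ) (hk : ∀ x ∈ K, B x a = k x) :
    ((F.card : ℚ) + 1) * ∑ x ∈ F, (k x : ℚ) ^ 2 - (∑ x ∈ F, (k x : ℚ)) ^ 2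
      ≤ ((F.card : ℚ) + 1) * B a a := by
  obtain ⟨N, hN⟩ : ∃ N : ℤ, N = (F.card : ℤ) := ⟨_, rfl⟩
  set s : ℤ := ∑ x ∈ F, k x with hs
  set w : L → ℤ := fun y => s - (N + 1) * k y with hw
  set T := ∑ y ∈ F, w y • y with hT
  set q : ℚ := ∑ x ∈ F, (k x : ℚ) ^ 2 with hq
  have hsq : (s : ℚ) = ∑ x ∈ F, (k x : ℚ) := by rw [hs]; push_cast; rfl
  have hNq : (N : ℚ) = F.card := by rw [hN]; push_cast; rfl
  have sw : ∑ y ∈ F, (w y : ℚ) = -s := by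
    simp only [hw]; push_cast
    rw [Finset.sum_sub_distrib, ← Finset.mul_sum, ← hsq, Finset.sum_const, nsmul_eq_mul, ← hNq]
    ring
  have swk : ∑ y ∈ F, (w y : ℚ) * k y = s ^ 2 - (N + 1) * q := by
    have : ∀ y ∈ F, (w y : ℚ) * k y = s * k y - (N + 1) * (k y : ℚ) ^ 2 := by
      intro y _; simp only [hw]; push_cast; ring
    rw [Finset.sum_congr rfl this, Finset.sum_sub_distrib, ← Finset.mul_sum, ← Finset.mul_sum,
      ← hsq]
    ring
  have sww : ∑ y ∈ F, (w y : ℚ) ^ 2 = N * s ^ 2 - 2 * (N + 1) * s ^ 2 + (N + 1) ^ 2 * q := by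
    have : ∀ y ∈ F, (w y : ℚ) ^ 2 = s ^ 2 - (2 * (N + 1) * s) * k y + (N + 1) ^ 2 * (k y : ℚ) ^ 2 := by
      intro y _; simp only [hw]; push_cast; ring
    rw [Finset.sum_congr rfl this, Finset.sum_add_distrib, Finset.sum_sub_distrib,
      ← Finset.mul_sum, ← Finset.mul_sum, ← hsq, Finset.sum_const, nsmul_eq_mul, ← hNq]
    ring
  have eTz : ∀ z, B T z = ∑ y ∈ F, (w y : ℚ) * B y z := by
    intro z
    rw [hT, map_sum, LinearMap.sum_apply]
    refine Finset.sum_congr rfl fun y _ => ?_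
    rw [map_smul, LinearMap.smul_apply, zsmul_eq_mul]
  have eTa : B T a = s ^ 2 - (N + 1) * q := by
    rw [eTz, ← swk]
    exact Finset.sum_congr rfl fun y hy => by rw [hk y (hF hy)]
  have eTT : B T T = N * s ^ 2 - 2 * (N + 1) * s ^ 2 + (N + 1) ^ 2 * q + s ^ 2 := by
    rw [eTz, ← sww]
    have : ∀ y ∈ F, (w y : ℚ) * B y T = (w y : ℚ) ^ 2 + (w y : ℚ) * (-s) := by
      intro y hy
      rw [hT, clq_sum hK hF w hy, sw]; ring
    rw [Finset.sum_congr rfl this, Finset.sum_add_distrib, ← Finset.sum_mul, sw]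
    ring
  have key := h.nonneg ((N + 1) • a + T)
  have e : B ((N + 1) • a + T) ((N + 1) • a + T) =
      ((N : ℚ) + 1) ^ 2 * B a a + 2 * (N + 1) * B T a + B T T := by
    simp only [map_add, LinearMap.add_apply, map_smul, LinearMap.smul_apply, zsmul_eq_mul,
      h.symm a T]
    push_cast; ring
  rw [e, eTa, eTT] at key
  rw [← hsq, ← hNq]
  have hp : (0 : ℚ) < N + 1 := by rw [hNq]; positivity
  have : 0 ≤ ((N : ℚ) + 1) * ((N + 1) * B a a - ((N + 1) * q - s ^ 2)) := by
    have : ((N : ℚ) + 1) * ((N + 1) * B a a - ((N + 1) * q - s ^ 2)) =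
      ((N : ℚ) + 1) ^ 2 * B a a + 2 * (N + 1) * (s ^ 2 - (N + 1) * q) +
      (N * s ^ 2 - 2 * (N + 1) * s ^ 2 + (N + 1) ^ 2 * q + s ^ 2) := by ring
    rw [this]; exact key
  have := nonneg_of_mul_nonneg_right this hp
  linarith

/-- the inequality in shifted form -/
theorem clq_ineq2 (h : ICS B C) (hK : IsClq B 2 K) {F : Finset L}
    (hF : (F : Set L) ⊆ K) (a : L) (v : ℤ) (d : L → ℤ) (hk : ∀ x ∈ K, B x a = v + d x) :
    (F.card : ℚ) * v ^ 2 + 2 * v * (∑ x ∈ F, (d x : ℚ))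
      + ((F.card : ℚ) + 1) * ∑ x ∈ F, (d x : ℚ) ^ 2 - (∑ x ∈ F, (d x : ℚ)) ^ 2
      ≤ ((F.card : ℚ) + 1) * B a a := by
  have := h.clq_ineq hK hF a (fun x => v + d x) (by intro x hx; rw [hk x hx]; push_cast; rfl)
  refine le_trans (le_of_eq ?_) this
  have e1 : ∑ x ∈ F, (((v + d x : ℤ)) : ℚ) = F.card * v + ∑ x ∈ F, (d x : ℚ) := by
    push_cast; rw [Finset.sum_add_distrib, Finset.sum_const, nsmul_eq_mul]
  have e2 : ∑ x ∈ F, (((v + d x : ℤ)) : ℚ) ^ 2 =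
      F.card * v ^ 2 + 2 * v * ∑ x ∈ F, (d x : ℚ) + ∑ x ∈ F, (d x : ℚ) ^ 2 := by
    rw [Finset.mul_sum, ← nsmul_eq_mul, ← Finset.sum_const, ← Finset.sum_add_distrib,
      ← Finset.sum_add_distrib]
    exact Finset.sum_congr rfl fun x _ => by push_cast; ring
  rw [e1, e2]; ring

theorem clq_const (h : ICS B C) (hK : IsClq B 2 K) (hKC : K ⊆ C) (hinf : K.Infinite) (a : L) :
    ∃ (v : ℤ) (d : L → ℤ), (∀ x ∈ K, B x a = v + d x) ∧ {x ∈ K | d x ≠ 0}.Finite := by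
  classical
  obtain ⟨k, hk⟩ := h.clq_int hK hKC a
  obtain ⟨M, hM⟩ := exists_nat_gt (2 * B a a)
  have hbd : ∀ x ∈ K, |k x| ≤ M := by
    intro x hx
    have := h.clq_ineq hK (F := {x}) (by simpa using hx) a k hk
    simp only [Finset.card_singleton, Finset.sum_singleton] at this
    have h1 : ((k x : ℚ)) ^ 2 ≤ M := by push_cast at this; linarith
    have h2 : (k x) ^ 2 ≤ (M : ℤ) := by exact_mod_cast h1
    have h3 : |k x| ^ 2 ≤ (M : ℤ) := by rwa [sq_abs]
    have h4 := abs_nonneg (k x)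
    nlinarith
  obtain ⟨v, hv⟩ := infinite_fiber hinf k (by
    apply (Set.finite_Icc (-(M : ℤ)) M).subset
    rintro _ ⟨x, hx, rfl⟩
    exact ⟨(abs_le.1 (hbd x hx)).1, (abs_le.1 (hbd x hx)).2⟩)
  refine ⟨v, fun x => k x - v, ?_, ?_⟩
  · intro x hx; rw [hk x hx]; push_cast; ring
  by_contra hc
  obtain ⟨G0, hG0, c0⟩ := hv.exists_subset_card_eq (M + 1)
  obtain ⟨G1, hG1, c1⟩ := Set.Infinite.exists_subset_card_eq hc (M + 1)
  have hdisj : Disjoint G0 G1 := by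
    rw [Finset.disjoint_left]
    intro x h0 h1
    have e0 := (hG0 h0).2
    have e1 := (hG1 h1).2
    simp only [ne_eq] at e1
    omega
  have ineq := h.clq_ineq2 hK (F := G0 ∪ G1) (by
    rw [Finset.coe_union]
    exact Set.union_subset (fun x hx => (hG0 hx).1) (fun x hx => (hG1 hx).1)) a v
    (fun x => k x - v) (by intro x hx; rw [hk x hx]; push_cast; ring)
  rw [Finset.card_union_of_disjoint hdisj, c0, c1, Finset.sum_union hdisj,
    Finset.sum_union hdisj] at ineq
  have z0 : ∀ x ∈ G0, (((k x - v : ℤ)) : ℚ) = 0 := by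
    intro x hx; rw [(hG0 hx).2]; simp
  rw [Finset.sum_eq_zero z0, Finset.sum_eq_zero (s := G0)
    (fun x hx => by rw [z0 x hx]; norm_num), zero_add, zero_add] at ineq
  set m : ℚ := ((M + 1 : ℕ) : ℚ) with hm
  set β := ∑ x ∈ G1, (((k x - v : ℤ)) : ℚ)
  set q := ∑ x ∈ G1, (((k x - v : ℤ)) : ℚ) ^ 2
  have hq : m ≤ q := by
    have : ∑ x ∈ G1, (1 : ℚ) ≤ q := by
      apply Finset.sum_le_sum
      intro x hx
      have e1 := (hG1 hx).2
      have : 1 ≤ |k x - v| := Int.one_le_abs e1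
      have h2 : 1 ≤ (k x - v) ^ 2 := by rw [← sq_abs]; nlinarith
      exact_mod_cast h2
    rw [Finset.sum_const, c1] at this
    rw [hm]; push_cast; simpa using this
  have hcs : β ^ 2 ≤ m * q := by
    have := sq_sum_le_card_mul_sum_sq (s := G1) (f := fun x => (((k x - v : ℤ)) : ℚ))
    rw [c1] at this
    exact this
  have hmM : m = M + 1 := by rw [hm]; push_cast; ring
  have hmpos : 0 < m := by rw [hm]; positivity
  rw [Nat.cast_add, ← hm] at ineq
  have hsq := sq_nonneg (2 * m * v + β)
  -- compare the two bounds
  have f1 : 2 * m * ((m + m) * v ^ 2 + 2 * v * β) ≥ - β ^ 2 := by nlinarith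
  have f2 : (m + m) * v ^ 2 + 2 * v * β ≥ - q / 2 := by
    by_contra hcc
    push Not at hcc
    nlinarith
  have f3 : (m + 1 / 2) * q ≤ (m + m + 1) * B a a := by nlinarith
  have f4 : q ≤ 2 * B a a := by
    by_contra hcc
    push Not at hcc
    nlinarith
  linarith

theorem coord_uniq {K : Set L} (hinf : K.Infinite) (f g : Option K →₀ ℤ)
    (hfg : ∀ x : K, ((f none : ℚ) + f (some x)) = g none + g (some x)) : f = g := by
  classical
  have hi : Infinite K := hinf.to_subtype
  obtain ⟨x, hx⟩ := Infinite.exists_notMem_finset (f.some.support ∪ g.some.support)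
  rw [Finset.mem_union, not_or, Finsupp.notMem_support_iff, Finsupp.notMem_support_iff,
    Finsupp.some_apply, Finsupp.some_apply] at hx
  have h0 : f none = g none := by
    have := hfg x
    rw [hx.1, hx.2] at this
    simpa using this
  ext o
  rcases o with _ | y
  · exact h0
  · have := hfg y
    rw [h0] at this
    have := add_left_cancel this
    exact_mod_cast this

theorem exists_coord (h : ICS B C) (hK : IsClq B 2 K) (hKC : K ⊆ C) (hinf : K.Infinite) :
    ∃ e : L →ₗ[ℤ] (Option K →₀ ℤ), ∀ (a : L) (x : K), B x a = e a none + e a (some x) := by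
  classical
  have hi : Infinite K := hinf.to_subtype
  have ex : ∀ a, ∃ f : Option K →₀ ℤ, ∀ x : K, B x a = f none + f (some x) := by
    intro a
    obtain ⟨v, d, hd, hfin⟩ := h.clq_const hK hKC hinf a
    let f0 : Option K → ℤ := fun o => o.elim v (fun x => d x)
    have hf0 : (Function.support f0).Finite := by
      have : (Set.image (fun x : K => (x : L)) {x : K | d x ≠ 0}).Finite := by
        apply hfin.subset
        rintro _ ⟨x, hx, rfl⟩
        exact ⟨x.2, hx⟩
      have h2 := Set.Finite.of_finite_image this Subtype.val_injective.injOn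
      apply ((h2.image some).insert none).subset
      intro o ho
      rcases o with _ | x
      · exact Set.mem_insert _ _
      · right; exact ⟨x, ho, rfl⟩
    refine ⟨Finsupp.ofSupportFinite f0 hf0, fun x => ?_⟩
    simp only [Finsupp.ofSupportFinite_coe]
    exact hd x x.2
  choose e he using ex
  refine ⟨{ toFun := e, map_add' := ?_, map_smul' := ?_ }, he⟩
  · intro a a'
    apply coord_uniq hinf
    intro x
    rw [← he, map_add, he, he]; simp only [Finsupp.add_apply]; push_cast; ring
  · intro t a
    apply coord_uniq hinf
    intro x
    rw [← he, map_smul, he]; simp only [Finsupp.smul_apply, smul_eq_mul, zsmul_eq_mul,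
      RingHom.id_apply]; push_cast; ring

end ICS

/-- standard bilinear form -/
noncomputable def dot {I : Type*} : (I →₀ ℤ) →ₗ[ℤ] (I →₀ ℤ) →ₗ[ℤ] ℤ :=
  Finsupp.linearCombination ℤ (fun i => (Finsupp.lapply i : (I →₀ ℤ) →ₗ[ℤ] ℤ))

theorem dot_apply {I : Type*} (f g : I →₀ ℤ) : dot f g = f.sum fun i t => t * g i := by
  rw [dot, Finsupp.linearCombination_apply, Finsupp.sum, LinearMap.sum_apply, Finsupp.sum]
  rfl

theorem dot_self {I : Type*} (f : I →₀ ℤ) {s : Finset I} (hs : f.support ⊆ s) :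
    dot f f = ∑ i ∈ s, (f i) ^ 2 := by
  rw [dot_apply, Finsupp.sum_of_support_subset _ hs]
  · exact Finset.sum_congr rfl fun _ _ => (pow_two _).symm
  · simp

theorem dot_symm {I : Type*} (f g : I →₀ ℤ) : dot f g = dot g f := by
  classical
  rw [dot_apply, dot_apply, Finsupp.sum_of_support_subset (s := f.support ∪ g.support) _ Finset.subset_union_left _ (by simp), Finsupp.sum_of_support_subset (s := f.support ∪ g.support) _ Finset.subset_union_right _ (by simp)]
  exact Finset.sum_congr rfl fun _ _ => mul_comm _ _

theorem dot_single {I : Type*} (i : I) (t : ℤ) (g : I →₀ ℤ) :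
    dot (Finsupp.single i t) g = t * g i := by
  rw [dot_apply, Finsupp.sum_single_index]; simp

namespace ICS
variable {L : Type*} [AddCommGroup L] {B : L →ₗ[ℤ] L →ₗ[ℤ] ℚ} {C : Set L} {K : Set L}

theorem dot_le (h : ICS B C) (hK : IsClq B 2 K) (hinf : K.Infinite)
    {e : L →ₗ[ℤ] (Option K →₀ ℤ)} (he : ∀ (a : L) (x : K), B x a = e a none + e a (some x))
    (a : L) : ((dot (e a) (e a) : ℤ) : ℚ) ≤ B a a := by
  classical
  have hi : Infinite K := hinf.to_subtype
  set f := e a with hf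
  let d : L → ℤ := fun x => if hx : x ∈ K then f (some ⟨x, hx⟩) else 0
  have hd : ∀ x : K, d x = f (some x) := by intro x; simp [d]
  set F0 : Finset L := f.some.support.map ⟨Subtype.val, Subtype.val_injective⟩ with hF0
  have hF0K : (F0 : Set L) ⊆ K := by
    intro x hx
    simp only [hF0, Finset.coe_map, Function.Embedding.coeFn_mk] at hx
    obtain ⟨y, _, rfl⟩ := hx
    exact y.2
  have hdot : dot f f = (f none) ^ 2 + ∑ x ∈ F0, (d x) ^ 2 := by
    have hs : f.support ⊆ insert none (f.some.support.map ⟨some, Option.some_injective _⟩) := by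
      intro o ho
      rcases o with _ | x
      · exact Finset.mem_insert_self _ _
      · apply Finset.mem_insert_of_mem
        simp at ho ⊢
        exact ho
    rw [dot_self f hs, Finset.sum_insert (by simp), Finset.sum_map, hF0, Finset.sum_map]
    congr 1
    refine Finset.sum_congr rfl fun x _ => ?_
    simp only [Function.Embedding.coeFn_mk]
    rw [hd]
  have hz : ∀ x ∈ K, x ∉ F0 → d x = 0 := by
    intro x hx hn
    have := hd ⟨x, hx⟩
    rw [this]
    by_contra hc
    apply hn
    rw [hF0, Finset.mem_map]
    exact ⟨⟨x, hx⟩, by simpa using hc, rfl⟩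
  set v := f none
  set q : ℚ := ∑ x ∈ F0, (d x : ℚ) ^ 2 with hq
  set β : ℚ := ∑ x ∈ F0, (d x : ℚ) with hβ
  have hdq : ((dot f f : ℤ) : ℚ) = v ^ 2 + q := by rw [hdot, hq]; push_cast; rfl
  rw [hdq]
  by_contra hc
  push Not at hc
  set ε := (v : ℚ) ^ 2 + q - B a a with hε
  have hεp : 0 < ε := by rw [hε]; linarith
  obtain ⟨n, hn⟩ := exists_nat_gt (((v : ℚ) - β) ^ 2 / ε)
  obtain ⟨G, hG, cG⟩ := (hinf.sdiff F0.finite_toSet).exists_subset_card_eq n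
  have hdisj : Disjoint F0 G := by
    rw [Finset.disjoint_left]
    intro x h0 h1
    exact (hG h1).2 h0
  have ineq := h.clq_ineq2 hK (F := F0 ∪ G) (by
    rw [Finset.coe_union]
    exact Set.union_subset hF0K (fun x hx => (hG hx).1)) a v d (by
      intro x hx
      have := he a ⟨x, hx⟩
      rw [← hd] at this
      exact this)
  have z0 : ∀ x ∈ G, ((d x : ℤ) : ℚ) = 0 := by
    intro x hx; rw [hz x (hG hx).1 (hG hx).2]; simp
  rw [Finset.sum_union hdisj, Finset.sum_union hdisj, Finset.sum_eq_zero z0,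
    Finset.sum_eq_zero (s := G) (fun x hx => by rw [z0 x hx]; norm_num), add_zero, add_zero,
    Finset.card_union_of_disjoint hdisj, cG, ← hq, ← hβ] at ineq
  rw [div_lt_iff₀ hεp] at hn
  push_cast at ineq
  have hc0 : (0 : ℚ) ≤ F0.card := by positivity
  have : ((F0.card : ℚ) + n + 1) * ε ≤ (v - β) ^ 2 := by
    rw [hε]; linarith
  nlinarith

end ICS


theorem dot_nonneg {I : Type*} (f : I →₀ ℤ) : 0 ≤ dot f f := by
  rw [dot_self f (Finset.Subset.refl _)]
  exact Finset.sum_nonneg fun i _ => sq_nonneg _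

theorem dot_ge {I : Type*} (f : I →₀ ℤ) (i : I) : (f i) ^ 2 ≤ dot f f := by
  classical
  by_cases hi : i ∈ f.support
  · rw [dot_self f (Finset.Subset.refl _)]
    exact Finset.single_le_sum (f := fun i => (f i) ^ 2) (fun i _ => sq_nonneg _) hi
  · rw [Finsupp.notMem_support_iff] at hi
    rw [hi]; simpa using dot_nonneg f

theorem dot_pos {I : Type*} {f : I →₀ ℤ} (hf : f ≠ 0) : ∃ i, f i ≠ 0 ∧ 1 ≤ (f i) ^ 2 := by
  obtain ⟨i, hi⟩ := Finsupp.ne_iff.1 hf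
  refine ⟨i, by simpa using hi, ?_⟩
  have : 0 < (f i) ^ 2 := by
    have : f i ≠ 0 := by simpa using hi
    positivity
  omega

theorem dot_split {I : Type*} (f : I →₀ ℤ) (i : I) :
    dot (f - Finsupp.single i (f i)) (f - Finsupp.single i (f i)) = dot f f - (f i) ^ 2 := by
  simp only [map_sub, LinearMap.sub_apply, dot_single, dot_symm f (Finsupp.single i (f i)),
    Finsupp.single_eq_same]
  ring

theorem shape1 {I : Type*} (f : I →₀ ℤ) (i : I) (h : dot f f ≤ (f i) ^ 2) :
    f = Finsupp.single i (f i) := by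
  by_contra hc
  obtain ⟨j, _, hj⟩ := dot_pos (sub_ne_zero.2 hc)
  have := dot_ge (f - Finsupp.single i (f i)) j
  rw [dot_split] at this
  omega

theorem shape2 {I : Type*} (f : I →₀ ℤ) (hf : f ≠ 0) (h : dot f f ≤ 2) :
    (∃ i u, (u = 1 ∨ u = -1) ∧ f = Finsupp.single i u) ∨
    (∃ i j u v, i ≠ j ∧ (u = 1 ∨ u = -1) ∧ (v = 1 ∨ v = -1) ∧
      f = Finsupp.single i u + Finsupp.single j v) := by
  classical
  have aux : ∀ t : ℤ, t ≠ 0 → t ^ 2 ≤ 2 → (t = 1 ∨ t = -1) := by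
    intro t ht h2
    have h3 : t ≤ 1 := by nlinarith
    have h4 : -1 ≤ t := by nlinarith
    omega
  have aux2 : ∀ t : ℤ, (t = 1 ∨ t = -1) → t ^ 2 = 1 := by
    rintro t (rfl | rfl) <;> norm_num
  obtain ⟨i, hi, _⟩ := dot_pos hf
  have hi2 := aux (f i) hi ((dot_ge f i).trans h)
  by_cases hc : f = Finsupp.single i (f i)
  · exact Or.inl ⟨i, f i, hi2, hc⟩
  obtain ⟨g, hg⟩ : ∃ g, g = f - Finsupp.single i (f i) := ⟨_, rfl⟩
  have hg0 : g ≠ 0 := by rw [hg]; exact sub_ne_zero.2 hc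
  obtain ⟨j, hj, hj'⟩ := dot_pos hg0
  have hd : dot g g ≤ 1 := by
    rw [hg, dot_split, aux2 _ hi2]; omega
  have hgj := shape1 g j (hd.trans hj')
  have hij : i ≠ j := by
    rintro rfl
    apply hj
    rw [hg]; simp
  have hj2 := aux (g j) hj ((dot_ge g j).trans (by omega))
  right
  refine ⟨i, j, f i, g j, hij, hi2, hj2, ?_⟩
  rw [← hgj, hg]; abel

/-- types of roots in coordinates -/
def RType {I : Type*} (r : ℚ) (f : I →₀ ℤ) : Prop :=
  (r = 4 ∧ ∃ i u, (u = 1 ∨ u = -1) ∧ f = Finsupp.single i (2 * u)) ∨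
  (r = 1 ∧ ∃ i u, (u = 1 ∨ u = -1) ∧ f = Finsupp.single i u) ∨
  (r = 2 ∧ ∃ i j u v, i ≠ j ∧ (u = 1 ∨ u = -1) ∧ (v = 1 ∨ v = -1) ∧
      f = Finsupp.single i u + Finsupp.single j v)

theorem RType.dot {I : Type*} {r : ℚ} {f : I →₀ ℤ} (h : RType r f) : ((dot f f : ℤ) : ℚ) = r := by
  classical
  rcases h with ⟨rfl, i, u, hu, rfl⟩ | ⟨rfl, i, u, hu, rfl⟩ | ⟨rfl, i, j, u, v, hij, hu, hv, rfl⟩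
  · rcases hu with rfl | rfl <;> simp [dot_single]
  · rcases hu with rfl | rfl <;> simp [dot_single]
  · rcases hu with rfl | rfl <;> rcases hv with rfl | rfl <;>
      simp [dot_single, hij, hij.symm]

/-- a maximal clique with its coordinate function -/
structure Crd {L : Type*} [AddCommGroup L] (B : L →ₗ[ℤ] L →ₗ[ℤ] ℚ) (C : Set L) (K : Set L)
    (e : L →ₗ[ℤ] (Option K →₀ ℤ)) : Prop where
  ics : ICS B C
  clq : IsClq B 2 K
  sub : K ⊆ C
  inf : K.Infinite
  co : ∀ (a : L) (x : K), B x a = e a none + e a (some x)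
  mx : ∀ β ∈ C, B β β = 2 → (∀ x ∈ K, B x β = 1) → β ∈ K

namespace Crd
variable {L : Type*} [AddCommGroup L] {B : L →ₗ[ℤ] L →ₗ[ℤ] ℚ} {C : Set L} {K : Set L}
  {e : L →ₗ[ℤ] (Option K →₀ ℤ)}

theorem clq_e (h : Crd B C K e) (x : K) :
    e x = Finsupp.single none 1 + Finsupp.single (some x) 1 := by
  classical
  apply ICS.coord_uniq h.inf
  intro y
  rw [← h.co]
  simp only [Finsupp.add_apply, Finsupp.single_apply]
  by_cases hxy : x = y
  · subst hxy
    rw [(h.clq x x.2).1]; simp; norm_num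
  · have := (h.clq y y.2).2 x x.2 (fun hh => hxy (Subtype.ext hh.symm))
    simp [hxy]
    linarith

theorem ne_single (h : Crd B C K e) {β : L} (hβ : β ∈ C) (hr : B β β = 2) {i : Option K} {u : ℤ}
    (hu : u = 1 ∨ u = -1) : e β ≠ Finsupp.single i u := by
  classical
  have key1 : ∀ β ∈ C, B β β = 2 → e β ≠ Finsupp.single none 1 := by
    intro β hβ hr he
    have hm := h.mx β hβ hr (by
      intro x hx
      rw [h.co β ⟨x, hx⟩, he]; simp)
    have := h.clq_e ⟨β, hm⟩
    simp only at this
    rw [he] at this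
    have := DFunLike.congr_fun this (some ⟨β, hm⟩)
    simp at this
  have key2 : ∀ β ∈ C, B β β = 2 → ∀ i, e β ≠ Finsupp.single i 1 := by
    intro β hβ hr i he
    rcases i with _ | x
    · exact key1 β hβ hr he
    have hBx : B β x = 1 := by
      rw [h.ics.symm, h.co, he]; simp
    have hxx := (h.clq x x.2).1
    have hne : (x : L) ≠ β := by
      intro hh
      rw [hh] at hBx; linarith
    refine key1 _ (h.ics.sub β hβ x (h.sub x.2) (by rw [hBx]; norm_num) hne) ?_ ?_
    · simp only [map_sub, LinearMap.sub_apply, h.ics.symm x β, hBx, hxx, hr]; norm_num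
    · rw [map_sub, h.clq_e, he]; abel
  rcases hu with rfl | rfl
  · exact key2 β hβ hr i
  · intro he
    refine key2 (-β) (h.ics.neg hβ) (by simpa using hr) i ?_
    rw [map_neg, he, ← Finsupp.single_neg, neg_neg]

theorem e_zero (h : Crd B C K e) {β : L} (hβ : ∀ x ∈ K, B x β = 0) : e β = 0 := by
  apply ICS.coord_uniq h.inf
  intro x
  rw [← h.co, hβ x x.2]; simp

theorem rtype1 (h : Crd B C K e) {β : L} (hβ : β ∈ C) {x0 : L} (hx0 : x0 ∈ K)
    (hne : B x0 β ≠ 0) : RType (B β β) (e β) := by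
  classical
  have hi : Infinite K := h.inf.to_subtype
  have hle := h.ics.dot_le h.clq h.inf h.co β
  have hrpos := h.ics.pos β (h.ics.ne hβ)
  obtain ⟨r, hr⟩ : ∃ r, r = B β β := ⟨_, rfl⟩
  obtain ⟨f, hf⟩ : ∃ f, f = e β := ⟨_, rfl⟩
  rw [← hr, ← hf] at hle
  rw [← hr] at hrpos
  rw [← hr, ← hf]
  have hf0 : f ≠ 0 := by
    intro hf00
    rw [hf00] at hf
    have := h.co β ⟨x0, hx0⟩
    rw [← hf] at this
    apply hne; rw [this]; simp
  have hsum : ∀ x : K, ∃ k : ℤ, 2 * ((f none : ℚ) + f (some x)) = k * r := by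
    intro x
    obtain ⟨k, hk⟩ := h.ics.cartan β hβ x
    refine ⟨k, ?_⟩
    rw [h.ics.symm, h.co, ← hf, ← hr] at hk
    exact hk
  have hent : ∀ i, ∃ k : ℤ, 2 * (f i : ℚ) = k * r := by
    have h0 : ∃ k : ℤ, 2 * (f none : ℚ) = k * r := by
      obtain ⟨x, hx⟩ := Infinite.exists_notMem_finset f.some.support
      rw [Finsupp.notMem_support_iff, Finsupp.some_apply] at hx
      obtain ⟨k, hk⟩ := hsum x
      exact ⟨k, by rw [hx] at hk; simpa using hk⟩
    intro i
    rcases i with _ | x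
    · exact h0
    · obtain ⟨k, hk⟩ := h0
      obtain ⟨k', hk'⟩ := hsum x
      exact ⟨k' - k, by push_cast; linarith⟩
  obtain ⟨i, hi0, hi1⟩ := dot_pos hf0
  obtain ⟨m, hm⟩ := hent i
  have hdi : ((f i : ℚ)) ^ 2 ≤ r := le_trans (b := ((dot f f : ℤ) : ℚ)) (by exact_mod_cast dot_ge f i) hle
  have hmr : ((m : ℚ) * f i) * r = 2 * (f i : ℚ) ^ 2 := by
    have : ((m : ℚ) * f i) * r = (m * r) * f i := by ring
    rw [this, ← hm]; ring
  have hmf : (m : ℚ) * f i ≤ 2 := by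
    have h1 : ((m : ℚ) * f i) * r ≤ 2 * r := by rw [hmr]; linarith
    exact le_of_mul_le_mul_right h1 hrpos
  have hmf' : m * f i ≤ 2 := by exact_mod_cast hmf
  have hmfpos : 0 < m * f i := by
    have h1 : 0 < ((m : ℚ) * f i) * r := by
      have : (0 : ℚ) < (f i : ℚ) ^ 2 := by positivity
      rw [hmr]; linarith
    have h2 := pos_of_mul_pos_left h1 hrpos.le
    exact_mod_cast h2
  have hfi : f i = 1 ∨ f i = -1 ∨ f i = 2 ∨ f i = -2 := by
    have hd : f i ∣ m * f i := Dvd.intro_left _ rfl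
    have h1 := Int.le_of_dvd hmfpos hd
    have h2 := Int.le_of_dvd hmfpos ((neg_dvd).2 hd)
    omega
  have hrcase : (r = 4 ∧ (f i = 2 ∨ f i = -2)) ∨ (r = 1) ∨ (r = 2) := by
    rcases hfi with hfi | hfi | hfi | hfi <;> rw [hfi] at hm hmf' hmfpos <;> rw [hfi]
    · have : m = 1 ∨ m = 2 := by omega
      rcases this with rfl | rfl
      · right; right; push_cast at hm; linarith
      · right; left; push_cast at hm; linarith
    · have : m = -1 ∨ m = -2 := by omega
      rcases this with rfl | rfl
      · right; right; push_cast at hm; linarith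
      · right; left; push_cast at hm; linarith
    · have : m = 1 := by omega
      subst this
      left; refine ⟨by push_cast at hm; linarith, by norm_num⟩
    · have : m = -1 := by omega
      subst this
      left; refine ⟨by push_cast at hm; linarith, by norm_num⟩
  rcases hrcase with ⟨h4, hfi⟩ | h1 | h2
  · left
    refine ⟨h4, ?_⟩
    have h5 : dot f f ≤ 4 := by rw [h4] at hle; exact_mod_cast hle
    have := shape1 f i (by rcases hfi with hh | hh <;> rw [hh] <;> omega)
    rcases hfi with hh | hh
    · exact ⟨i, 1, Or.inl rfl, by rw [hh] at this; simpa using this⟩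
    · exact ⟨i, -1, Or.inr rfl, by rw [hh] at this; simpa using this⟩
  · right; left
    refine ⟨h1, ?_⟩
    have h5 : dot f f ≤ 1 := by rw [h1] at hle; exact_mod_cast hle
    have h6 := shape1 f i (by omega)
    refine ⟨i, f i, ?_, h6⟩
    have := dot_ge f i
    have h3 : f i ≤ 1 := by nlinarith
    have h4 : -1 ≤ f i := by nlinarith
    omega
  · right; right
    refine ⟨h2, ?_⟩
    have h5 : dot f f ≤ 2 := by rw [h2] at hle; exact_mod_cast hle
    rcases shape2 f hf0 h5 with ⟨j, u, hu, hh⟩ | hh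
    · exact absurd (hf ▸ hh) (h.ne_single hβ (hr ▸ h2) hu)
    · exact hh

theorem defect (h : Crd B C K e) {β : L} (h0 : ((dot (e β) (e β) : ℤ) : ℚ) = B β β) (a : L) :
    B β a = ((dot (e β) (e a) : ℤ) : ℚ) := by
  by_contra hne
  obtain ⟨d, hd⟩ : ∃ d, d = B β a - ((dot (e β) (e a) : ℤ) : ℚ) := ⟨_, rfl⟩
  have hd0 : d ≠ 0 := by rw [hd]; exact sub_ne_zero.2 hne
  obtain ⟨s, hs⟩ : ∃ s, s = B a a - ((dot (e a) (e a) : ℤ) : ℚ) := ⟨_, rfl⟩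
  have key : ∀ t : ℤ, 0 ≤ s + 2 * t * d := by
    intro t
    have := h.ics.dot_le h.clq h.inf h.co (a + t • β)
    simp only [map_add, LinearMap.add_apply, map_smul, LinearMap.smul_apply, zsmul_eq_mul,
      h.ics.symm a β, dot_symm (e a) (e β), smul_eq_mul] at this
    push_cast at this
    rw [h0] at this
    rw [hs, hd]
    linarith
  obtain ⟨n, hn⟩ := exists_nat_gt (s / (2 * |d|))
  have hp : 0 < 2 * |d| := by positivity
  rw [div_lt_iff₀ hp] at hn
  rcases lt_or_gt_of_ne hd0 with hlt | hgt
  · rw [abs_of_neg hlt] at hn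
    have := key n
    push_cast at this
    nlinarith
  · rw [abs_of_pos hgt] at hn
    have := key (-n)
    push_cast at this
    nlinarith

theorem rtype (h : Crd B C K e) {β : L} (hβ : β ∈ C) : RType (B β β) (e β) := by
  by_cases hc : ∃ x ∈ K, B x β ≠ 0
  · obtain ⟨x, hx, hne⟩ := hc
    exact h.rtype1 hβ hx hne
  exfalso
  push Not at hc
  obtain ⟨x, hx⟩ := h.inf.nonempty
  obtain ⟨δ, hδ, h1, h2⟩ := h.ics.conn β hβ x (h.sub hx)
  have h3 := h.rtype1 hδ hx (by rwa [h.ics.symm])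
  have h4 := h.defect h3.dot β
  rw [h.e_zero hc] at h4
  rw [h.ics.symm] at h1
  apply h1; rw [h4]; simp

theorem B_dot (h : Crd B C K e) (a a' : L) : B a a' = ((dot (e a) (e a') : ℤ) : ℚ) := by
  have ha : a ∈ Submodule.span ℤ C := by rw [h.ics.span_top]; trivial
  induction ha using Submodule.span_induction with
  | mem x hx => exact h.defect (h.rtype hx).dot a'
  | zero => simp
  | add x y _ _ hx hy => simp [hx, hy]
  | smul t x _ hx => simp [hx]

theorem inj (h : Crd B C K e) : Function.Injective e := by
  rw [injective_iff_map_eq_zero]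
  intro a ha
  by_contra hne
  have := h.ics.pos a hne
  rw [h.B_dot, ha] at this
  simp at this

end Crd


/-- the alternating sum of coordinates -/
noncomputable def psi {K : Type*} : (Option K →₀ ℤ) →ₗ[ℤ] ℤ :=
  Finsupp.linearCombination ℤ (fun o : Option K => o.elim (1 : ℤ) (fun _ => -1))

theorem psi_none {K : Type*} (t : ℤ) : psi (Finsupp.single (none : Option K) t) = t := by
  simp [psi, Finsupp.linearCombination_single]

theorem psi_some {K : Type*} (x : K) (t : ℤ) : psi (Finsupp.single (some x) t) = -t := by
  simp [psi, Finsupp.linearCombination_single]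

theorem psi_single {K : Type*} (i : Option K) (t : ℤ) :
    psi (Finsupp.single i t) = t ∨ psi (Finsupp.single i t) = -t := by
  rcases i with _ | x
  · left; exact psi_none t
  · right; exact psi_some x t

theorem psi_decomp {K : Type*} (f : Option K →₀ ℤ) :
    f = Finsupp.single none (psi f) + Finsupp.linearCombination ℤ
      (fun x : K => (Finsupp.single none 1 + Finsupp.single (some x) 1 : Option K →₀ ℤ)) f.some := by
  classical
  induction f using Finsupp.induction_linear with
  | zero => simp
  | add f g hf hg =>
    rw [Finsupp.some_add, map_add, map_add, Finsupp.single_add]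
    nth_rewrite 1 [hf, hg]
    abel
  | single o t =>
    rcases o with _ | x
    · rw [psi_none, Finsupp.some_single_none]; simp
    · rw [psi_some, Finsupp.some_single_some, Finsupp.linearCombination_single, smul_add,
        Finsupp.smul_single, Finsupp.smul_single, ← add_assoc, ← Finsupp.single_add]
      simp

namespace Crd
variable {L : Type*} [AddCommGroup L] {B : L →ₗ[ℤ] L →ₗ[ℤ] ℚ} {C : Set L} {K : Set L}
  {e : L →ₗ[ℤ] (Option K →₀ ℤ)}

theorem e_lc (h : Crd B C K e) (l : K →₀ ℤ) (x : K) :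
    e (Finsupp.linearCombination ℤ (fun y : K => (y : L)) l) (some x) = l x := by
  classical
  induction l using Finsupp.induction_linear with
  | zero => simp
  | add f g hf hg => simp [hf, hg]
  | single y t =>
    rw [Finsupp.linearCombination_single, map_smul, h.clq_e]
    simp [Finsupp.single_apply]

theorem psi_K (h : Crd B C K e) {a : L} (ha : a ∈ Submodule.span ℤ K) : psi (e a) = 0 := by
  induction ha using Submodule.span_induction with
  | mem x hx => 
    have := h.clq_e ⟨x, hx⟩
    simp only at this
    rw [this, map_add, psi_none, psi_some]; norm_num
  | zero => simp
  | add x y _ _ hx hy => simp [hx, hy]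
  | smul t x _ hx => simp [hx]

theorem K_indep (h : Crd B C K e) : LinearIndepOn ℤ id K := by
  show LinearIndependent ℤ (fun x : K => (x : L))
  rw [linearIndependent_iff]
  intro l hl
  ext x
  rw [← h.e_lc l x, hl]; simp

theorem lc_mem (a : L) : Finsupp.linearCombination ℤ (fun y : K => (y : L)) (e a).some ∈
    Submodule.span ℤ K := by
  rw [Finsupp.linearCombination_apply]
  exact Submodule.sum_mem _ fun x _ => Submodule.smul_mem _ _ (Submodule.subset_span x.2)

theorem e_sub (h : Crd B C K e) (a : L) :
    e (a - Finsupp.linearCombination ℤ (fun y : K => (y : L)) (e a).some) =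
      Finsupp.single none (psi (e a)) := by
  have h1 := psi_decomp (e a)
  rw [map_sub]
  nth_rewrite 1 [h1]
  have : e (Finsupp.linearCombination ℤ (fun y : K => (y : L)) (e a).some) =
    Finsupp.linearCombination ℤ
      (fun x : K => (Finsupp.single none 1 + Finsupp.single (some x) 1 : Option K →₀ ℤ))
      (e a).some := by
    rw [Finsupp.linearCombination_apply, Finsupp.linearCombination_apply, Finsupp.sum, map_sum]
    refine Finset.sum_congr rfl fun x _ => ?_
    rw [map_smul, h.clq_e]
  rw [this]; abel

theorem mem_K (h : Crd B C K e) {a : L} (ha : psi (e a) = 0) :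
    a = Finsupp.linearCombination ℤ (fun y : K => (y : L)) (e a).some := by
  have := h.e_sub a
  rw [ha, Finsupp.single_zero, ← map_zero e] at this
  exact sub_eq_zero.1 (h.inj this)

theorem mem_K_diff (h : Crd B C K e) {a : L} (ha : psi (e a) = 0) (x : K) :
    a - (e a (some x)) • (x : L) ∈ Submodule.span ℤ (K \ {(x : L)}) := by
  classical
  obtain ⟨c, hc⟩ : ∃ c, c = a - (e a (some x)) • (x : L) := ⟨_, rfl⟩
  have h1 : psi (e c) = 0 := by
    rw [hc, map_sub, map_sub, ha, map_smul, map_smul, h.psi_K (Submodule.subset_span x.2)]; simp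
  have h2 : e c (some x) = 0 := by
    rw [hc, map_sub, map_smul, h.clq_e]; simp
  rw [← hc, h.mem_K h1, Finsupp.linearCombination_apply]
  refine Submodule.sum_mem _ fun y hy => Submodule.smul_mem _ _ (Submodule.subset_span ⟨y.2, ?_⟩)
  rw [Set.mem_singleton_iff]
  intro hyx
  have := Subtype.ext hyx
  subst this
  rw [Finsupp.mem_support_iff, Finsupp.some_apply] at hy
  exact hy h2

theorem base_a (h : Crd B C K e) {β : L} (h0 : psi (e β) ≠ 0)
    (hd : ∀ c ∈ C, psi (e β) ∣ psi (e c)) :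
    LinearIndepOn ℤ id (insert β K) ∧ Submodule.span ℤ (insert β K) = ⊤ ∧ β ∉ K := by
  refine ⟨?_, ?_, ?_⟩
  · apply h.K_indep.id_insert'
    intro k hk
    have := h.psi_K hk
    rw [map_smul, map_smul, smul_eq_mul] at this
    exact (mul_eq_zero.1 this).resolve_right h0
  · rw [eq_top_iff, ← h.ics.span_top, Submodule.span_le]
    intro c hc
    obtain ⟨k, hk⟩ := hd c hc
    have h1 : psi (e (c - k • β)) = 0 := by
      rw [map_sub, map_sub, hk, map_smul, map_smul, smul_eq_mul]; ring
    have h2 := lc_mem (e := e) (c - k • β)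
    rw [← h.mem_K h1] at h2
    have h3 : c = (c - k • β) + k • β := by abel
    have h4 : (c - k • β) + k • β ∈ Submodule.span ℤ (insert β K) :=
      Submodule.add_mem _ (Submodule.span_mono (Set.subset_insert _ _) h2)
        (Submodule.smul_mem _ _ (Submodule.subset_span (Set.mem_insert _ _)))
    rw [← h3] at h4
    exact h4
  · intro hm
    exact h0 (h.psi_K (Submodule.subset_span hm))

theorem base_b (h : Crd B C K e) {β : L} (hβ : β ∈ C) (h0 : psi (e β) ≠ 0)
    (hd : ∀ c ∈ C, psi (e β) ∣ psi (e c)) {γ : L} (hγ : γ ∈ C) {x : K} {k : ℤ}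
    (hk : psi (e γ) = k * psi (e β))
    (hx : e γ (some x) - k * e β (some x) = 1 ∨ e γ (some x) - k * e β (some x) = -1) :
    ∃ P ⊆ C, γ ∈ P ∧ LinearIndepOn ℤ id P ∧ Submodule.span ℤ P = ⊤ := by
  obtain ⟨b1, b2, b3⟩ := h.base_a h0 hd
  have h1 : psi (e (γ - k • β)) = 0 := by
    rw [map_sub, map_sub, hk, map_smul, map_smul, smul_eq_mul]; ring
  have h2 := h.mem_K_diff h1 x
  have ec : e (γ - k • β) (some x) = e γ (some x) - k * e β (some x) := by
    rw [map_sub, map_smul]; simp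
  rw [ec] at h2
  have hxβ : β ≠ (x : L) := by rintro rfl; exact b3 x.2
  have := li_exchange (γ := γ) b1 (Set.mem_insert_of_mem _ x.2) hx
    (w := k • β + (γ - k • β - (e γ (some x) - k * e β (some x)) • (x : L)))
    (Submodule.add_mem _ (Submodule.smul_mem _ _ (Submodule.subset_span
      ⟨Set.mem_insert _ _, hxβ⟩)) (Submodule.span_mono
        (Set.sdiff_subset_sdiff_left (Set.subset_insert _ _)) h2)) (by abel)
  refine ⟨_, ?_, Set.mem_insert _ _, this.1, this.2.trans b2⟩
  rw [Set.insert_subset_iff]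
  refine ⟨hγ, fun y hy => ?_⟩
  rcases hy.1 with rfl | hyK
  · exact hβ
  · exact h.sub hyK

theorem base_c (h : Crd B C K e) (hd : ∀ c ∈ C, psi (e c) = 0) {γ : L} (hγ : γ ∈ C) {x : K}
    (hx : e γ (some x) = 1 ∨ e γ (some x) = -1) :
    ∃ P ⊆ C, γ ∈ P ∧ LinearIndepOn ℤ id P ∧ Submodule.span ℤ P = ⊤ := by
  have b2 : Submodule.span ℤ K = ⊤ := by
    rw [eq_top_iff, ← h.ics.span_top, Submodule.span_le]
    intro c hc
    have h2 := lc_mem (e := e) c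
    rw [← h.mem_K (hd c hc)] at h2
    exact h2
  have h2 := h.mem_K_diff (hd γ hγ) x
  have := li_exchange (γ := γ) h.K_indep x.2 hx h2 (by abel)
  refine ⟨_, ?_, Set.mem_insert _ _, this.1, this.2.trans b2⟩
  rw [Set.insert_subset_iff]
  exact ⟨hγ, fun y hy => h.sub hy.1⟩

theorem coord_two {i j : Option K} {u v : ℤ} (hij : i ≠ j) (hu : u = 1 ∨ u = -1)
    (hv : v = 1 ∨ v = -1) {f : Option K →₀ ℤ} (hf : f = Finsupp.single i u + Finsupp.single j v) :
    ∃ x : K, f (some x) = 1 ∨ f (some x) = -1 := by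
  classical
  rcases i with _ | x
  · rcases j with _ | y
    · exact absurd rfl hij
    · refine ⟨y, ?_⟩
      rw [hf]; simpa using hv
  · refine ⟨x, ?_⟩
    rw [hf]; simpa [Finsupp.single_apply, hij.symm] using hu

theorem main (h : Crd B C K e) {γ : L} (hγ : γ ∈ C) (hind : ∀ β ∈ C, γ ≠ (2 : ℤ) • β) :
    ∃ P ⊆ C, γ ∈ P ∧ LinearIndepOn ℤ id P ∧ Submodule.span ℤ P = ⊤ := by
  classical
  by_cases h1 : ∃ β ∈ C, B β β = 1
  · -- there are short roots
    have hx1 : ∀ β ∈ C, ∀ x : K, e β = Finsupp.single none 1 ∨ e β = Finsupp.single (some x) 1 →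
        (x : L) - β ∈ C := by
      intro β hβ x hb
      have hB : B β x = 1 := by
        rw [h.ics.symm, h.co]
        rcases hb with hb | hb <;> rw [hb] <;> simp
      refine h.ics.sub β hβ x (h.sub x.2) (by rw [hB]; norm_num) ?_
      rintro rfl
      rw [(h.clq x x.2).1] at hB
      norm_num at hB
    have h2 : ∃ β ∈ C, e β = Finsupp.single none 1 := by
      have : ∃ β ∈ C, ∃ i, e β = Finsupp.single i 1 := by
        obtain ⟨β, hβ, hr⟩ := h1
        have ht := h.rtype hβ
        rw [hr] at ht
        rcases ht with ⟨h4, _⟩ | ⟨_, i, u, hu, hf⟩ | ⟨h4, _⟩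
        · norm_num at h4
        · rcases hu with rfl | rfl
          · exact ⟨β, hβ, i, hf⟩
          · refine ⟨-β, h.ics.neg hβ, i, ?_⟩
            rw [map_neg, hf, ← Finsupp.single_neg, neg_neg]
        · norm_num at h4
      obtain ⟨β, hβ, i, hi⟩ := this
      rcases i with _ | x
      · exact ⟨β, hβ, hi⟩
      · refine ⟨_, hx1 β hβ x (Or.inr hi), ?_⟩
        rw [map_sub, h.clq_e, hi]; abel
    obtain ⟨β0, hβ0, he0⟩ := h2
    have hp0 : psi (e β0) = 1 := by rw [he0, psi_none]
    rcases h.rtype hγ with ⟨_, i, u, hu, hf⟩ | ⟨_, i, u, hu, hf⟩ | ⟨_, i, j, u, v, hij, hu, hv, hf⟩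
    · exfalso
      have : ∃ β ∈ C, e β = Finsupp.single i 1 := by
        rcases i with _ | x
        · exact ⟨β0, hβ0, he0⟩
        · refine ⟨_, hx1 β0 hβ0 x (Or.inl he0), ?_⟩
          rw [map_sub, h.clq_e, he0]; abel
      obtain ⟨β, hβ, hb⟩ := this
      rcases hu with rfl | rfl
      · apply hind β hβ
        apply h.inj
        rw [hf, map_smul, hb, Finsupp.smul_single]; simp
      · apply hind (-β) (h.ics.neg hβ)
        apply h.inj
        rw [hf, map_smul, map_neg, hb, ← Finsupp.single_neg, Finsupp.smul_single]; simp
    · have hps : psi (e γ) = 1 ∨ psi (e γ) = -1 := by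
        rw [hf]
        have := psi_single i u
        rcases hu with rfl | rfl
        · exact this
        · simp only [neg_neg] at this; exact this.symm
      obtain ⟨b1, b2, _⟩ := h.base_a (β := γ) (by rcases hps with hh | hh <;> rw [hh] <;> norm_num)
        (by rcases hps with hh | hh <;> rw [hh] <;> simp)
      refine ⟨_, ?_, Set.mem_insert _ _, b1, b2⟩
      rw [Set.insert_subset_iff]
      exact ⟨hγ, h.sub⟩
    · obtain ⟨x, hx⟩ := coord_two hij hu hv hf
      refine h.base_b (k := psi (e γ)) (x := x) hβ0 (by rw [hp0]; norm_num)
        (by rw [hp0]; simp) hγ (by rw [hp0, mul_one]) ?_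
      rw [he0]; simpa using hx
  · push Not at h1
    have hps : ∀ c ∈ C, psi (e c) = 0 ∨ psi (e c) = 2 ∨ psi (e c) = -2 := by
      intro c hc
      rcases h.rtype hc with ⟨_, i, u, hu, hf⟩ | ⟨h4, _⟩ | ⟨_, i, j, u, v, hij, hu, hv, hf⟩
      · rw [hf]
        have := psi_single i (2 * u)
        omega
      · exact absurd h4 (h1 c hc)
      · rw [hf, map_add]
        have := psi_single i u
        have := psi_single j v
        omega
    have hdv : ∀ β ∈ C, psi (e β) ≠ 0 → ∀ c ∈ C, psi (e β) ∣ psi (e c) := by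
      intro β hβ h0 c hc
      rcases hps β hβ with hb | hb | hb
      · exact absurd hb h0
      · rcases hps c hc with hh | hh | hh <;> rw [hb, hh] <;> norm_num
      · rcases hps c hc with hh | hh | hh <;> rw [hb, hh] <;> norm_num
    by_cases hg : psi (e γ) = 0
    · have : ∃ x : K, e γ (some x) = 1 ∨ e γ (some x) = -1 := by
        rcases h.rtype hγ with ⟨_, i, u, hu, hf⟩ | ⟨h4, _⟩ | ⟨_, i, j, u, v, hij, hu, hv, hf⟩
        · exfalso
          rw [hf] at hg
          have := psi_single i (2 * u)
          omega
        · exact absurd h4 (h1 γ hγ)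
        · exact coord_two hij hu hv hf
      obtain ⟨x, hx⟩ := this
      by_cases hb : ∃ β ∈ C, psi (e β) ≠ 0
      · obtain ⟨β, hβ, h0⟩ := hb
        exact h.base_b (k := 0) (x := x) hβ h0 (hdv β hβ h0) hγ (by rw [hg]; ring) (by simpa using hx)
      · push Not at hb
        exact h.base_c hb hγ hx
    · obtain ⟨b1, b2, _⟩ := h.base_a hg (hdv γ hγ hg)
      refine ⟨_, ?_, Set.mem_insert _ _, b1, b2⟩
      rw [Set.insert_subset_iff]
      exact ⟨hγ, h.sub⟩

end Crd

namespace ICS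
variable {L : Type*} [AddCommGroup L] {B : L →ₗ[ℤ] L →ₗ[ℤ] ℚ} {C : Set L}

theorem scale (h : ICS B C) {c : ℚ} (hc : 0 < c) : ICS (c • B) C where
  symm x y := by simp [h.symm x y]
  pos x hx := by simpa using mul_pos hc (h.pos x hx)
  span_top := h.span_top
  zero := h.zero
  cartan γ hγ x := by
    obtain ⟨k, hk⟩ := h.cartan γ hγ x
    refine ⟨k, ?_⟩
    simp only [LinearMap.smul_apply, smul_eq_mul]
    linear_combination c * hk
  refl γ hγ β hβ k hk := by
    apply h.refl γ hγ β hβ k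
    simp only [LinearMap.smul_apply, smul_eq_mul] at hk
    apply mul_left_cancel₀ hc.ne'
    linear_combination hk
  sub γ hγ β hβ hp hne := by
    apply h.sub γ hγ β hβ _ hne
    simp only [LinearMap.smul_apply, smul_eq_mul] at hp
    exact pos_of_mul_pos_right hp hc.le
  conn β hβ γ hγ := by
    obtain ⟨δ, hδ, h1, h2⟩ := h.conn β hβ γ hγ
    refine ⟨δ, hδ, ?_, ?_⟩ <;> simp [hc.ne', h1, h2]

theorem infinite_base (h : ICS B C) (hinf : C.Infinite) {γ : L} (hγ : γ ∈ C)
    (hind : ∀ β ∈ C, γ ≠ (2 : ℤ) • β) :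
    ∃ P ⊆ C, γ ∈ P ∧ LinearIndepOn ℤ id P ∧ Submodule.span ℤ P = ⊤ := by
  obtain ⟨r, hr, W, hWC, hWinf, hW⟩ := h.exists_clique hinf
  have h2 : ICS ((2 / r) • B) C := h.scale (by positivity)
  set B' := (2 / r) • B with hB'
  have hW' : IsClq B' 2 W := by
    intro x hx
    constructor
    · simp only [hB', LinearMap.smul_apply, smul_eq_mul, (hW x hx).1]
      field_simp
    · intro y hy hxy
      have := (hW x hx).2 y hy hxy
      simp only [hB', LinearMap.smul_apply, smul_eq_mul]
      field_simp
      linarith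
  obtain ⟨K, hWK, hK⟩ := zorn_subset_nonempty {K | K ⊆ C ∧ IsClq B' 2 K} (by
    intro c hc hch hne
    refine ⟨⋃₀ c, ⟨Set.sUnion_subset fun s hs => (hc hs).1, ?_⟩,
      fun s hs => Set.subset_sUnion_of_mem hs⟩
    rintro x ⟨s, hs, hx⟩
    refine ⟨((hc hs).2 x hx).1, ?_⟩
    rintro y ⟨t, ht, hy⟩ hxy
    rcases hch.total hs ht with hst | hst
    · exact ((hc ht).2 x (hst hx)).2 y hy hxy
    · exact ((hc hs).2 x hx).2 y (hst hy) hxy) W ⟨hWC, hW'⟩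
  have hKinf : K.Infinite := hWinf.mono hWK
  obtain ⟨e, he⟩ := h2.exists_coord hK.prop.2 hK.prop.1 hKinf
  have hcrd : Crd B' C K e := by
    refine ⟨h2, hK.prop.2, hK.prop.1, hKinf, he, ?_⟩
    intro β hβ hb hx
    have : insert β K ∈ {K | K ⊆ C ∧ IsClq B' 2 K} := by
      refine ⟨Set.insert_subset_iff.2 ⟨hβ, hK.prop.1⟩, ?_⟩
      rintro x (rfl | hxK)
      · refine ⟨hb, ?_⟩
        rintro y (rfl | hy) hxy
        · exact absurd rfl hxy
        · rw [h2.symm, hx y hy]; norm_num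
      · refine ⟨(hK.prop.2 x hxK).1, ?_⟩
        rintro y (rfl | hy) hxy
        · rw [hx x hxK]; norm_num
        · exact (hK.prop.2 x hxK).2 y hy hxy
    exact hK.le_of_ge this (Set.subset_insert _ _) (Set.mem_insert _ _)
  exact hcrd.main hγ hind

end ICS


namespace RSS
variable {F : Type*} [Field F] [CharZero F] {A : Type*} [AddCommGroup A]
  {b : A →ₗ[ℤ] A →ₗ[ℤ] F} {R : Set A}

theorem comp_ics (h : RSS b R) {γ : A} (hγ : γ ∈ RR b R)
    {B : Submodule.span ℤ (Comp b R γ) →ₗ[ℤ] Submodule.span ℤ (Comp b R γ) →ₗ[ℤ] ℚ}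
    (hB : ∀ x y : Submodule.span ℤ (Comp b R γ), b (x : A) (y : A) = (B x y : F) * b γ γ)
    (hp : ∀ x, x ≠ 0 → 0 < B x x) : ICS B (Subtype.val ⁻¹' (Comp b R γ)) := by
  have hg : b γ γ ≠ 0 := hγ.2
  have key : ∀ (δ x : Submodule.span ℤ (Comp b R γ)), (δ : A) ∈ Comp b R γ →
      2 * B δ x = cn b (δ : A) x * B δ δ := by
    intro δ x hδ
    have := h.cn_spec (comp_sub hδ) (x : A)
    rw [hB, hB] at this
    have h2 : ((2 * B δ x : ℚ) : F) * b γ γ = ((cn b (δ : A) x * B δ δ : ℚ) : F) * b γ γ := by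
      push_cast; linear_combination this
    exact_mod_cast mul_right_cancel₀ hg h2
  have hne : ∀ δ : Submodule.span ℤ (Comp b R γ), (δ : A) ∈ Comp b R γ → δ ≠ 0 := by
    rintro δ hδ rfl
    exact ne_zero (comp_sub hδ) rfl
  refine ⟨?_, hp, Submodule.span_span_coe_preimage, ?_, ?_, ?_, ?_, ?_⟩
  · intro x y
    have := h.symm (x : A) y
    rw [hB, hB] at this
    exact_mod_cast mul_right_cancel₀ hg this
  · intro h0
    exact hne _ h0 rfl
  · intro δ hδ x
    exact ⟨_, key δ x hδ⟩
  · intro δ hδ β hβ k hk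
    have h1 := key δ β hδ
    rw [hk] at h1
    have h2 := mul_right_cancel₀ (hp δ (hne δ hδ)).ne' h1
    have h3 : k = cn b (δ : A) β := by exact_mod_cast h2
    apply h.mem_comp_of_span _ (Subtype.property _)
    rw [h3]
    exact h.refl_RR (comp_sub hδ) (comp_sub hβ)
  · intro δ hδ β hβ hpos hn
    have h1 := key δ β hδ
    have h2 := hp δ (hne δ hδ)
    have h3 : (0 : ℚ) < cn b (δ : A) β := by
      apply pos_of_mul_pos_left _ h2.le
      rw [← h1]; linarith
    apply h.mem_comp_of_span _ (Subtype.property _)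
    exact h.sub_RR (comp_sub hδ) (comp_sub hβ) (by exact_mod_cast h3)
      (fun hh => hn (Subtype.ext hh))
  · intro β hβ δ hδ
    have h1 : (β : A) ∈ Comp b R (δ : A) := by rw [h.comp_eq hγ hδ]; exact hβ
    obtain ⟨_, η, hη, e1, e2⟩ := h1
    have hηC := h.comp_adj hδ hη e2
    refine ⟨⟨η, Submodule.subset_span hηC⟩, hηC, ?_, ?_⟩
    · intro h0
      apply e1
      have := hB β ⟨η, Submodule.subset_span hηC⟩
      rw [h0] at this
      simpa using this
    · intro h0
      apply e2
      have := hB ⟨η, Submodule.subset_span hηC⟩ δ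
      rw [h0] at this
      simpa using this

theorem comp_base (h : RSS b R) {γ : A} (hγ : γ ∈ RR b R)
    (hind : ∀ β ∈ RR b R, γ ≠ (2 : ℤ) • β) :
    ∃ P ⊆ Comp b R γ, γ ∈ P ∧ LinearIndepOn ℤ id P ∧
      Submodule.span ℤ P = Submodule.span ℤ (Comp b R γ) := by
  classical
  by_cases hfin : (Comp b R γ).Finite
  · obtain ⟨E, hE, hTE, hsp⟩ := h.sat_exists hfin comp_sub
    obtain ⟨D, hDE, hDs, hDi, hDγ⟩ := h.finite_base hE (hTE (self_comp hγ))
    refine ⟨D, ?_, hDγ hind, ?_, hDs.trans hsp⟩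
    · intro x hx
      apply h.mem_comp_of_span ((hE x).1 (hDE hx)).1
      rw [← hsp]
      exact Submodule.subset_span (hDE hx)
    · rw [linearIndepOn_finset_iff]
      intro g hg δ hδ
      simp only [id] at hg
      exact hDi g (by intro η _; rw [hg]; simp) δ hδ
  · obtain ⟨B, hB, hp⟩ := h.comp_form hγ
    have hics := h.comp_ics hγ hB hp
    obtain ⟨P, hPC, hγP, hPi, hPs⟩ := hics.infinite_base (by
      intro hf
      apply hfin
      apply (hf.image Subtype.val).subset
      intro x hx
      exact ⟨⟨x, Submodule.subset_span hx⟩, hx, rfl⟩)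
      (γ := ⟨γ, Submodule.subset_span (self_comp hγ)⟩) (self_comp hγ) (by
        intro β hβ he
        exact hind β (comp_sub hβ) (congrArg Subtype.val he))
    refine ⟨Subtype.val '' P, ?_, ⟨_, hγP, rfl⟩, ?_, ?_⟩
    · rintro _ ⟨x, hx, rfl⟩
      exact hPC hx
    · have := LinearIndependent.map' hPi (Submodule.subtype _) (Submodule.ker_subtype _)
      have h2 : LinearIndepOn ℤ (Subtype.val : Submodule.span ℤ (Comp b R γ) → A) P := this
      exact h2.id_image
    · have : Submodule.span ℤ (Subtype.val '' P) =
          (Submodule.span ℤ P).map (Submodule.span ℤ (Comp b R γ)).subtype := by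
        rw [Submodule.map_span]; rfl
      rw [this, hPs]; simp

theorem comp_indiv (h : RSS b R) {γ : A} (hγ : γ ∈ RR b R) :
    ∃ δ ∈ Comp b R γ, ∀ β ∈ RR b R, δ ≠ (2 : ℤ) • β := by
  by_cases hc : ∃ β ∈ RR b R, γ = (2 : ℤ) • β
  · obtain ⟨β, hβ, e⟩ := hc
    refine ⟨β, h.comp_adj (self_comp hγ) hβ ?_, ?_⟩
    · rw [e]; simpa using hβ.2
    · intro δ hδ e2
      have h1 := h.cn_le hδ hγ
      rw [e, e2, map_smul, map_smul, h.cn_self hδ] at h1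
      norm_num at h1
  · push Not at hc
    exact ⟨γ, self_comp hγ, hc⟩

end RSS


namespace RSS
variable {F : Type*} [Field F] [CharZero F] {A : Type*} [AddCommGroup A]
  {b : A →ₗ[ℤ] A →ₗ[ℤ] F} {R : Set A}

theorem comp_disj (h : RSS b R) {γ x : A} (hx : x ∈ Submodule.span ℤ (Comp b R γ))
    (hy : x ∈ Submodule.span ℤ (RR b R \ Comp b R γ)) : x = 0 := by
  apply h.nd (Submodule.span_mono comp_sub hx)
  intro η hη
  by_cases hc : η ∈ Comp b R γ
  · rw [h.symm]
    exact h.span_orth_span (Submodule.subset_span hc) hy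
  · exact h.comp_orth_span hx hη hc

theorem glue (h : RSS b R) {γ : A} (hγ : γ ∈ RR b R) {P0 : Set A} (hP : P0 ⊆ Comp b R γ)
    (hPi : LinearIndepOn ℤ id P0)
    (hPs : Submodule.span ℤ P0 = Submodule.span ℤ (Comp b R γ)) :
    ∃ P1 ⊆ RR b R \ Comp b R γ, LinearIndepOn ℤ id (P0 ∪ P1) ∧
      Submodule.span ℤ P1 = Submodule.span ℤ (RR b R \ Comp b R γ) := by
  classical
  let ι := {C : Set A // ∃ δ ∈ RR b R, Comp b R δ = C}
  have ex : ∀ C : ι, ∃ P ⊆ C.1, LinearIndepOn ℤ id P ∧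
      Submodule.span ℤ P = Submodule.span ℤ C.1 := by
    rintro ⟨C, δ, hδ, rfl⟩
    obtain ⟨η, hη, hi⟩ := h.comp_indiv hδ
    obtain ⟨P, h1, _, h2, h3⟩ := h.comp_base (comp_sub hη) hi
    rw [h.comp_eq hδ hη] at h1 h3
    exact ⟨P, h1, h2, h3⟩
  choose g0 g1 g2 g3 using ex
  let i0 : ι := ⟨Comp b R γ, γ, hγ, rfl⟩
  let f : ι → Set A := fun C => if C = i0 then P0 else g0 C
  have f0 : f i0 = P0 := by simp [f]
  have fn : ∀ C, C ≠ i0 → f C = g0 C := fun C hC => by simp [f, hC]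
  have f1 : ∀ C, f C ⊆ C.1 := by
    intro C
    by_cases hC : C = i0
    · subst hC; rw [f0]; exact hP
    · rw [fn C hC]; exact g1 C
  have f2 : ∀ C, LinearIndepOn ℤ id (f C) := by
    intro C
    by_cases hC : C = i0
    · subst hC; rw [f0]; exact hPi
    · rw [fn C hC]; exact g2 C
  have f3 : ∀ C, Submodule.span ℤ (f C) = Submodule.span ℤ C.1 := by
    intro C
    by_cases hC : C = i0
    · subst hC; rw [f0]; exact hPs
    · rw [fn C hC]; exact g3 C
  -- distinct components are disjoint
  have dis : ∀ C C' : ι, C ≠ C' → C'.1 ⊆ RR b R \ C.1 := by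
    rintro ⟨C, δ, hδ, rfl⟩ ⟨C', δ', hδ', rfl⟩ hne x hx
    refine ⟨comp_sub hx, fun hx' => hne ?_⟩
    apply Subtype.ext
    show Comp b R δ = Comp b R δ'
    rw [← h.comp_eq hδ hx', h.comp_eq hδ' hx]
  have hall : LinearIndepOn ℤ id (⋃ C, f C) := by
    apply linearIndepOn_id_iUnion_finite f2
    intro C t _ hCt
    rw [Submodule.disjoint_def]
    intro x hx hx'
    rw [f3] at hx
    have h2 : (⨆ i ∈ t, Submodule.span ℤ (f i)) ≤ Submodule.span ℤ (RR b R \ C.1) := by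
      apply iSup₂_le
      intro C' hC'
      rw [f3]
      apply Submodule.span_mono
      apply dis
      rintro rfl
      exact hCt hC'
    obtain ⟨C, δ, hδ, rfl⟩ := C
    exact h.comp_disj hx (h2 hx')
  refine ⟨⋃ C ∈ {C : ι | C ≠ i0}, f C, ?_, ?_, ?_⟩
  · intro x hx
    simp only [Set.mem_iUnion] at hx
    obtain ⟨C, hC, hx⟩ := hx
    exact dis i0 C (Ne.symm hC) (f1 C hx)
  · apply hall.mono
    apply Set.union_subset
    · rw [← f0]; exact Set.subset_iUnion f i0
    · exact Set.iUnion₂_subset fun C _ => Set.subset_iUnion f C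
  · apply le_antisymm
    · apply Submodule.span_mono
      intro x hx
      simp only [Set.mem_iUnion] at hx
      obtain ⟨C, hC, hx⟩ := hx
      exact dis i0 C (Ne.symm hC) (f1 C hx)
    · rw [Submodule.span_le]
      rintro x ⟨hx, hxn⟩
      let C : ι := ⟨Comp b R x, x, hx, rfl⟩
      have hC : C ≠ i0 := by
        intro hh
        apply hxn
        have : Comp b R x = Comp b R γ := congrArg Subtype.val hh
        rw [← this]; exact self_comp hx
      have h1 : x ∈ Submodule.span ℤ (f C) := by
        rw [f3]; exact Submodule.subset_span (self_comp hx)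
      refine Submodule.span_mono ?_ h1
      exact Set.subset_biUnion_of_mem (u := f) (s := {C : ι | C ≠ i0}) hC

theorem span_split {γ : A} : Submodule.span ℤ (RR b R) =
    Submodule.span ℤ (Comp b R γ) ⊔ Submodule.span ℤ (RR b R \ Comp b R γ) := by
  rw [← Submodule.span_union, Set.union_sdiff_cancel comp_sub]

/-- a base of the span of the real roots -/
theorem real_base (h : RSS b R) {γ : A} (hγ : γ ∈ RR b R) :
    ∃ P ⊆ RR b R, LinearIndepOn ℤ id P ∧ Submodule.span ℤ P = Submodule.span ℤ (RR b R) := by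
  obtain ⟨δ, hδ, hi⟩ := h.comp_indiv hγ
  obtain ⟨P0, p1, _, p2, p3⟩ := h.comp_base (comp_sub hδ) hi
  obtain ⟨P1, q1, q2, q3⟩ := h.glue (comp_sub hδ) p1 p2 p3
  refine ⟨P0 ∪ P1, Set.union_subset (p1.trans comp_sub) (fun x hx => (q1 hx).1), q2, ?_⟩
  rw [Submodule.span_union, p3, q3, ← span_split]

end RSS


namespace RSS
variable {F : Type*} [Field F] [CharZero F] {A : Type*} [AddCommGroup A]
  {b : A →ₗ[ℤ] A →ₗ[ℤ] F} {R : Set A}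

theorem torsion_free (h : RSS b R) {k : ℤ} (hk : k ≠ 0) {x : A} (hx : k • x = 0) : x = 0 := by
  apply h.nondeg
  intro c
  have : b (k • x) c = 0 := by rw [hx]; simp
  rw [map_smul, LinearMap.smul_apply, zsmul_eq_mul] at this
  exact (mul_eq_zero.1 this).resolve_left (by exact_mod_cast hk)

/-- sum or difference of nonorthogonal isotropic roots is real -/
theorem iso_real (h : RSS b R) {α β : A} (hα : α ∈ R) (ha : b α α = 0) (hβ : β ∈ R)
    (hb : b β β = 0) (hn : b α β ≠ 0) : β - α ∈ RR b R ∨ β + α ∈ RR b R := by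
  rcases h.ns α hα ha β hβ hn with h1 | h1
  · left
    refine ⟨h1, ?_⟩
    simp only [map_sub, LinearMap.sub_apply, ha, hb, h.symm β α]
    intro h0
    apply hn
    have : (2 : F) * b α β = 0 := by linear_combination -h0
    exact (mul_eq_zero.1 this).resolve_left two_ne_zero
  · right
    refine ⟨h1, ?_⟩
    simp only [map_add, LinearMap.add_apply, ha, hb, h.symm β α]
    intro h0
    apply hn
    have : (2 : F) * b α β = 0 := by linear_combination h0
    exact (mul_eq_zero.1 this).resolve_left two_ne_zero

theorem gen_top (h : RSS b R)
    (hcon : ∀ α ∈ R, α ≠ 0 → ∀ Q : A → Prop, Q α →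
      (∀ x ∈ R, ∀ y ∈ R, Q x → b x y ≠ 0 → Q y) → ∀ β ∈ R, β ≠ 0 → Q β)
    {α : A} (hα : α ∈ R) (ha : b α α = 0) (h0 : α ≠ 0) :
    Submodule.span ℤ (insert α (RR b R)) = ⊤ := by
  set M := Submodule.span ℤ (insert α (RR b R)) with hM
  have hS : RR b R ⊆ M := fun x hx => Submodule.subset_span (Set.mem_insert_of_mem _ hx)
  let Q : A → Prop := fun β => ∃ α' ∈ R, α' ∈ M ∧ b α' α' = 0 ∧ (α' = β ∨ b α' β ≠ 0)
  have QM : ∀ β ∈ R, Q β → β ∈ M := by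
    rintro β hβ ⟨α', hR, hα'M, hiso, rfl | hn⟩
    · exact hα'M
    · by_cases hb : b β β = 0
      · rcases h.iso_real hR hiso hβ hb hn with h1 | h1
        · have : β = (β - α') + α' := by abel
          rw [this]
          exact Submodule.add_mem _ (hS h1) hα'M
        · have : β = (β + α') - α' := by abel
          rw [this]
          exact Submodule.sub_mem _ (hS h1) hα'M
      · exact hS ⟨hβ, hb⟩
  have Qall : ∀ β ∈ R, β ≠ 0 → Q β := by
    apply hcon α hα h0 Q
    · exact ⟨α, hα, Submodule.subset_span (Set.mem_insert _ _), ha, Or.inl rfl⟩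
    · intro x hx y hy hQ hxy
      by_cases hxi : b x x = 0
      · exact ⟨x, hx, QM x hx hQ, hxi, Or.inr hxy⟩
      · obtain ⟨α', hR, hα'M, hiso, he⟩ := hQ
        rcases he with rfl | hn
        · exact absurd hiso hxi
        have hxS : x ∈ RR b R := ⟨hx, hxi⟩
        by_cases hy' : b α' y = 0
        · refine ⟨α' - cn b x α' • x, h.refl_mem hxS hR, ?_, ?_, Or.inr ?_⟩
          · exact Submodule.sub_mem _ hα'M (Submodule.smul_mem _ _ (hS hxS))
          · rw [h.b_refl hxS, hiso]
          · rw [map_sub, LinearMap.sub_apply, hy', map_smul, LinearMap.smul_apply, zsmul_eq_mul,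
              zero_sub, neg_ne_zero]
            refine mul_ne_zero ?_ hxy
            intro hc
            have : cn b x α' = 0 := by exact_mod_cast hc
            rw [h.cn_eq_zero hxS, h.symm] at this
            exact hn this
        · exact ⟨α', hR, hα'M, hiso, Or.inr hy'⟩
  rw [eq_top_iff, ← h.span_top, Submodule.span_le]
  intro β hβ
  by_cases hb0 : β = 0
  · subst hb0; exact Submodule.zero_mem _
  · exact QM β hβ (Qall β hβ hb0)

theorem cn_bd (h : RSS b R) {α : A} (hα : α ∈ R) (ha : b α α = 0)
    (hn : α ∉ Submodule.span ℤ (RR b R)) {γ : A} (hγ : γ ∈ RR b R) :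
    cn b γ α = 1 ∨ cn b γ α = 0 ∨ cn b γ α = -1 := by
  have key : ∀ γ ∈ RR b R, cn b γ α < 2 := by
    intro γ hγ
    by_contra hc
    push Not at hc
    have h1 := h.sub_mem hγ hα (by omega)
    apply hn
    have h2 : α - γ ∈ RR b R := by
      refine ⟨h1, ?_⟩
      have h3 := h.cn_spec hγ α
      have : b (α - γ) (α - γ) = ((1 - cn b γ α : ℤ) : F) * b γ γ := by
        simp only [map_sub, LinearMap.sub_apply, ha, h.symm α γ]
        push_cast
        linear_combination -h3
      rw [this]
      refine mul_ne_zero ?_ hγ.2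
      have : (1 - cn b γ α : ℤ) ≠ 0 := by omega
      exact_mod_cast this
    have : α = (α - γ) + γ := by abel
    rw [this]
    exact Submodule.add_mem _ (Submodule.subset_span h2) (Submodule.subset_span hγ)
  have h1 := key γ hγ
  have h2 := key (-γ) (h.neg_RR hγ)
  rw [h.cn_neg_left hγ] at h2
  omega

theorem replace (h : RSS b R) {γ : A} (hγ : γ ∈ RR b R) {P0 : Set A} (hP : P0 ⊆ Comp b R γ)
    (hPi : LinearIndepOn ℤ id P0)
    (hPs : Submodule.span ℤ P0 = Submodule.span ℤ (Comp b R γ)) {π : A} (hπ : π ∈ P0)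
    {α : A} (hα : α ∈ R) (htop : Submodule.span ℤ (insert α (RR b R)) = ⊤) {k : ℤ} (hk : k ≠ 0)
    (hm : k • α - π ∈ Submodule.span ℤ (P0 \ {π}) ⊔ Submodule.span ℤ (RR b R \ Comp b R γ)) :
    ∃ P ⊆ R, LinearIndepOn ℤ id P ∧ Submodule.span ℤ P = ⊤ := by
  obtain ⟨P1, q1, q2, q3⟩ := h.glue hγ hP hPi hPs
  have hQ : Submodule.span ℤ (P0 \ {π}) ⊔ Submodule.span ℤ (RR b R \ Comp b R γ) ≤
      Submodule.span ℤ ((P0 ∪ P1) \ {π}) := by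
    rw [← q3]
    apply sup_le
    · exact Submodule.span_mono (Set.sdiff_subset_sdiff_left Set.subset_union_left)
    · apply Submodule.span_mono
      intro x hx
      refine ⟨Or.inr hx, ?_⟩
      rintro rfl
      exact (q1 hx).2 (hP hπ)
  have hw := hQ hm
  have hPR : P0 ∪ P1 ⊆ R := Set.union_subset (fun x hx => (comp_sub (hP hx)).1)
    (fun x hx => (q1 hx).1.1)
  refine ⟨insert α ((P0 ∪ P1) \ {π}), ?_, ?_, ?_⟩
  · rw [Set.insert_subset_iff]
    exact ⟨hα, fun x hx => hPR hx.1⟩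
  · apply (q2.mono Set.sdiff_subset).id_insert'
    intro m hmα
    have h1 : m • π ∈ Submodule.span ℤ ((P0 ∪ P1) \ {π}) := by
      have : m • π = k • (m • α) - m • (k • α - π) := by module
      rw [this]
      exact Submodule.sub_mem _ (Submodule.smul_mem _ _ hmα) (Submodule.smul_mem _ _ hw)
    exact q2.eq_zero_of_smul_mem_span (Or.inl hπ) m (by simpa using h1)
  · rw [eq_top_iff, ← htop, Submodule.span_le, Set.insert_subset_iff]
    refine ⟨Submodule.subset_span (Set.mem_insert _ _), ?_⟩
    have h1 : Submodule.span ℤ (RR b R) = Submodule.span ℤ (P0 ∪ P1) := by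
      rw [Submodule.span_union, hPs, q3, ← span_split]
    have h2 : Submodule.span ℤ (P0 ∪ P1) ≤
        Submodule.span ℤ (insert α ((P0 ∪ P1) \ {π})) := by
      rw [Submodule.span_le]
      intro x hx
      by_cases hxp : x = π
      · subst hxp
        have : x = k • α - (k • α - x) := by abel
        have h3 : k • α - (k • α - x) ∈ Submodule.span ℤ (insert α ((P0 ∪ P1) \ {x})) :=
          Submodule.sub_mem _ (Submodule.smul_mem _ _ (Submodule.subset_span (Set.mem_insert _ _)))
            (Submodule.span_mono (Set.subset_insert _ _) hw)
        rw [← this] at h3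
        exact h3
      · exact Submodule.subset_span (Set.mem_insert_of_mem _ ⟨hx, hxp⟩)
    rw [← h1] at h2
    exact Submodule.subset_span.trans h2

theorem caseG (h : RSS b R) {α : A} (hα : α ∈ R) (ha : b α α = 0)
    (hn : α ∉ Submodule.span ℤ (RR b R)) (htop : Submodule.span ℤ (insert α (RR b R)) = ⊤)
    {γ : A} (hγ : γ ∈ RR b R) (h1 : cn b γ α = 1) {k : ℤ} (hk : k ≠ 0)
    (hm : k • α - γ ∈ Submodule.span ℤ (RR b R \ Comp b R γ)) :
    ∃ P ⊆ R, LinearIndepOn ℤ id P ∧ Submodule.span ℤ P = ⊤ := by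
  obtain ⟨P0, p1, p0, p2, p3⟩ := h.comp_base hγ (by
    rintro β hβ rfl
    have h2 := h.cn_spec hγ α
    rw [h1] at h2
    simp only [map_smul, LinearMap.smul_apply, zsmul_eq_mul] at h2
    push_cast at h2
    have h3 : cn b β α = 2 := by
      apply h.cn_unique hβ
      push_cast
      have : (2 : F) * (2 * b β α) = 2 * (2 * b β β) := by linear_combination h2
      exact mul_left_cancel₀ two_ne_zero this
    have := h.cn_bd hα ha hn hβ
    omega)
  exact h.replace hγ p1 p2 p3 p0 hα htop hk (Submodule.mem_sup_right hm)

end RSS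


/-- a nonreal root outside the span of the real roots, without good replacement -/
structure Hyp {F : Type*} [Field F] {A : Type*} [AddCommGroup A]
    (b : A →ₗ[ℤ] A →ₗ[ℤ] F) (R : Set A) (α : A) : Prop where
  rss : RSS b R
  mem : α ∈ R
  iso : b α α = 0
  nsp : α ∉ Submodule.span ℤ (RR b R)
  ng : ∀ γ ∈ RR b R, cn b γ α = 1 → ∀ k : ℤ, k ≠ 0 →
    k • α - γ ∉ Submodule.span ℤ (RR b R \ Comp b R γ)

/-- the weights at a component -/
def KC {F : Type*} [Field F] {A : Type*} [AddCommGroup A]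
    (b : A →ₗ[ℤ] A →ₗ[ℤ] F) (R : Set A) (α η : A) : Set A :=
  {y | y ∈ Comp b R η ∧ cn b y α = 1}

namespace Hyp
variable {F : Type*} [Field F] [CharZero F] {A : Type*} [AddCommGroup A]
  {b : A →ₗ[ℤ] A →ₗ[ℤ] F} {R : Set A} {α : A}

theorem half (h : Hyp b R α) {y : A} (hy : y ∈ RR b R) (h1 : cn b y α = 1) :
    2 * b y α = b y y := by
  have := h.rss.cn_spec hy α
  rw [h1] at this
  simpa using this

theorem opp (h : Hyp b R α) {y y' : A} (hy : y ∈ RR b R) (hy' : y' ∈ RR b R)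
    (hn : y' ∉ Comp b R y) (h1 : cn b y α = 1) (h1' : cn b y' α = 1) :
    b y y + b y' y' = 0 := by
  have hn' : y ∉ Comp b R y' := fun hh => hn (h.rss.comp_symm hy' hh)
  have hyy' : b y' y = 0 := h.rss.comp_orth (RSS.self_comp hy) hy' hn
  have hyy : b y y' = 0 := by rw [h.rss.symm]; exact hyy'
  by_contra hne
  have a1 : α - y ∈ R := by
    have := h.rss.refl_mem hy h.mem
    rwa [h1, one_smul] at this
  have c1 : cn b y' (α - y) = 1 := by
    rw [map_sub, h1', (h.rss.cn_eq_zero hy').2 hyy', sub_zero]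
  have a2 : α - y - y' ∈ R := by
    have := h.rss.refl_mem hy' a1
    rwa [c1, one_smul] at this
  have e1 := h.half hy h1
  have e2 := h.half hy' h1'
  have n2 : b (α - y - y') (α - y - y') = 0 := by
    simp only [map_sub, LinearMap.sub_apply, h.iso, hyy, hyy', h.rss.symm α y, h.rss.symm α y']
    linear_combination - e1 - e2
  have n3 : b α (α - y - y') ≠ 0 := by
    simp only [map_sub, h.iso, h.rss.symm α y, h.rss.symm α y']
    intro h0
    apply hne
    linear_combination -2 * h0 - e1 - e2
  rcases h.rss.iso_real h.mem h.iso a2 n2 n3 with hz | hz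
  · have b1 : b (α - y - y' - α) y ≠ 0 := by
      simp only [map_sub, LinearMap.sub_apply, hyy']
      intro h0
      apply hy.2
      linear_combination -h0
    have b2 : b y' (α - y - y' - α) ≠ 0 := by
      simp only [map_sub, hyy']
      intro h0
      apply hy'.2
      linear_combination -h0
    have m1 := h.rss.comp_adj (RSS.self_comp hy) hz b1
    exact hn (h.rss.comp_adj m1 hy' b2)
  · by_cases hc : α - y - y' + α ∈ Comp b R y
    · have hc' : α - y - y' + α ∉ Comp b R y' := by
        intro hc'
        apply hn
        have q1 := h.rss.comp_eq hy hc
        have q2 := h.rss.comp_eq hy' hc'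
        rw [← q1, q2]
        exact RSS.self_comp hy'
      apply h.ng y' hy' h1' 2 two_ne_zero
      have : (2 : ℤ) • α - y' = y + (α - y - y' + α) := by module
      rw [this]
      exact Submodule.add_mem _ (Submodule.subset_span ⟨hy, hn'⟩)
        (Submodule.subset_span ⟨hz, hc'⟩)
    · apply h.ng y hy h1 2 two_ne_zero
      have : (2 : ℤ) • α - y = y' + (α - y - y' + α) := by module
      rw [this]
      exact Submodule.add_mem _ (Submodule.subset_span ⟨hy', hn⟩)
        (Submodule.subset_span ⟨hz, hc⟩)

theorem diff_iso (h : Hyp b R α) {η t : A} (hη : η ∈ RR b R)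
    (ht : t ∈ Submodule.span ℤ (Comp b R η)) (h0 : t ≠ 0) (hR : α - t ∈ R)
    (hi : b (α - t) (α - t) = 0) : t ∈ KC b R α η := by
  have e1 : b t t = 2 * b α t := by
    simp only [map_sub, LinearMap.sub_apply, h.iso, h.rss.symm t α] at hi
    linear_combination hi
  have htt : b t t ≠ 0 := fun hh => h0 (h.rss.comp_aniso hη ht hh)
  have n1 : b α (α - t) ≠ 0 := by
    rw [map_sub, h.iso]
    intro hh
    apply htt
    linear_combination e1 - 2 * hh
  rcases h.rss.iso_real h.mem h.iso hR hi n1 with hz | hz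
  · have : -(α - t - α) = t := by abel
    have hz' := h.rss.neg_RR hz
    rw [this] at hz'
    refine ⟨h.rss.mem_comp_of_span hz' ht, ?_⟩
    apply h.rss.cn_unique hz'
    rw [h.rss.symm]; push_cast; linear_combination -e1
  · exfalso
    obtain ⟨ζ, hζ⟩ : ∃ ζ, ζ = α - t + α := ⟨_, rfl⟩
    rw [← hζ] at hz
    have zz : b ζ ζ = - b t t := by
      rw [hζ]
      simp only [map_add, map_sub, LinearMap.add_apply, LinearMap.sub_apply, h.iso,
        h.rss.symm t α]
      linear_combination 2 * e1
    by_cases hc : ζ ∈ Comp b R η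
    · obtain ⟨q, hq⟩ := h.rss.comp_q1 hη ht t
      obtain ⟨q', hq'⟩ := h.rss.comp_q1 hη (Submodule.subset_span hc) ζ
      have p1 := h.rss.comp_q2 hη ht h0 hq
      have p2 := h.rss.comp_q2 hη (Submodule.subset_span hc) (RSS.ne_zero hz) hq'
      rw [hq, hq'] at zz
      have h3 : (((q' + q : ℚ)) : F) * b η η = 0 := by push_cast; linear_combination zz
      have h4 := (mul_eq_zero.1 h3).resolve_right hη.2
      have h5 : q' + q = 0 := by exact_mod_cast h4
      linarith
    · refine h.ng ζ hz ?_ 2 two_ne_zero ?_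
      · apply h.rss.cn_unique hz
        rw [zz, hζ, map_add, map_sub]
        simp only [LinearMap.add_apply, LinearMap.sub_apply, h.iso, h.rss.symm t α]
        push_cast
        linear_combination e1
      · have : (2 : ℤ) • α - ζ = t := by rw [hζ]; module
        rw [this]
        refine Submodule.span_mono ?_ ht
        intro x hx
        refine ⟨RSS.comp_sub hx, fun hx' => hc ?_⟩
        rw [← h.rss.comp_eq hη hx, h.rss.comp_eq hz hx']
        exact RSS.self_comp hz

/-- setting with two components -/
theorem kc_norm (h : Hyp b R α) {η η' : A} (hη : η ∈ RR b R) (h1 : cn b η α = 1)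
    (hη' : η' ∈ RR b R) (hn : η' ∉ Comp b R η) (h1' : cn b η' α = 1) {y : A}
    (hy : y ∈ KC b R α η) : b y y = b η η := by
  have e1 := h.opp hη hη' hn h1 h1'
  have e2 := h.opp (RSS.comp_sub hy.1) hη' (by rwa [h.rss.comp_eq hη hy.1]) hy.2 h1'
  linear_combination e2 - e1

theorem kc_cn (h : Hyp b R α) {η : A} (hη : η ∈ RR b R)
    (hN : ∀ y ∈ KC b R α η, b y y = b η η) {y z : A} (hy : y ∈ KC b R α η)
    (hz : z ∈ KC b R α η) (hyz : y ≠ z) : cn b z y = 1 := by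
  have hyS := RSS.comp_sub hy.1
  have hzS := RSS.comp_sub hz.1
  obtain ⟨n, hn⟩ : ∃ n, n = cn b z y := ⟨_, rfl⟩
  have a1 : α - y ∈ R := by
    have := h.rss.refl_mem hyS h.mem
    rwa [hy.2, one_smul] at this
  have i1 : b (α - y) (α - y) = 0 := by
    have := h.rss.b_refl hyS α α
    rwa [hy.2, one_smul, h.iso] at this
  have c1 : cn b z (α - y) = 1 - n := by rw [map_sub, hz.2, hn]
  have a2 : α - (y + (1 - n) • z) ∈ R := by
    have := h.rss.refl_mem hzS a1
    rwa [c1, sub_sub] at this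
  have i2 : b (α - (y + (1 - n) • z)) (α - (y + (1 - n) • z)) = 0 := by
    have := h.rss.b_refl hzS (α - y) (α - y)
    rwa [c1, sub_sub, i1] at this
  have ny := hN y hy
  have nz := hN z hz
  have e := h.rss.cn_spec hzS y
  rw [← hn] at e
  have nt : b (y + (1 - n) • z) (y + (1 - n) • z) = (2 - n) * b η η := by
    simp only [map_add, LinearMap.add_apply, map_smul, LinearMap.smul_apply, zsmul_eq_mul,
      h.rss.symm y z, ny, nz] at e ⊢
    push_cast
    linear_combination (1 - n) * e
  by_cases h0 : y + (1 - n) • z = 0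
  · exfalso
    rw [h0] at nt
    simp only [map_zero, LinearMap.zero_apply] at nt
    have h2 := (mul_eq_zero.1 nt.symm).resolve_right hη.2
    have h3 : (2 - n : ℤ) = 0 := by exact_mod_cast h2
    have h4 : n = 2 := by omega
    rw [h4] at h0
    apply hyz
    have : y = (y + (1 - 2 : ℤ) • z) + z := by module
    rw [this, h0, zero_add]
  · have ht := h.diff_iso hη (Submodule.add_mem _ (Submodule.subset_span hy.1)
      (Submodule.smul_mem _ _ (Submodule.subset_span hz.1))) h0 a2 i2
    have h2 := hN _ ht
    rw [nt] at h2
    have h3 : ((1 - n : ℤ) : F) * b η η = 0 := by push_cast; linear_combination h2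
    have h4 := (mul_eq_zero.1 h3).resolve_right hη.2
    have h5 : (1 - n : ℤ) = 0 := by exact_mod_cast h4
    omega

theorem kc_neg (h : Hyp b R α) {η γ : A} (hγ : γ ∈ Comp b R η) (h1 : cn b γ α = -1) :
    -γ ∈ KC b R α η := by
  refine ⟨h.rss.neg_comp hγ, ?_⟩
  rw [h.rss.cn_neg_left (RSS.comp_sub hγ), h1]; norm_num

theorem kc_span (h : Hyp b R α) {η : A} (hη : η ∈ RR b R) (h1 : cn b η α = 1)
    (hN : ∀ y ∈ KC b R α η, b y y = b η η) :
    Submodule.span ℤ (KC b R α η) = Submodule.span ℤ (Comp b R η) := by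
  apply le_antisymm
  · exact Submodule.span_mono fun x hx => hx.1
  rw [Submodule.span_le]
  intro γ hγ
  have hγS := RSS.comp_sub hγ
  have hηK : η ∈ KC b R α η := ⟨RSS.self_comp hη, h1⟩
  have refK : ∀ δ ∈ Comp b R η, cn b δ α = 0 → ∀ y ∈ KC b R α η,
      y - cn b δ y • δ ∈ KC b R α η := by
    intro δ hδ h0 y hy
    have hm := h.rss.refl_RR (RSS.comp_sub hδ) (RSS.comp_sub hy.1)
    refine ⟨h.rss.mem_comp_of_span hm (Submodule.sub_mem _ (Submodule.subset_span hy.1)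
      (Submodule.smul_mem _ _ (Submodule.subset_span hδ))), ?_⟩
    rw [h.rss.cn_refl (RSS.comp_sub hδ) (RSS.comp_sub hy.1), h0, zero_smul, sub_zero, hy.2]
  rcases h.rss.cn_bd h.mem h.iso h.nsp hγS with hc | hc | hc
  · exact Submodule.subset_span ⟨hγ, hc⟩
  · have ex : ∃ y ∈ KC b R α η, b γ y ≠ 0 := by
      by_cases hg : b γ η = 0
      · obtain ⟨_, δ, hδ, e1, e2⟩ := hγ
        have hδC := h.rss.comp_adj (RSS.self_comp hη) hδ e2
        rcases h.rss.cn_bd h.mem h.iso h.nsp hδ with hd | hd | hd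
        · exact ⟨δ, ⟨hδC, hd⟩, e1⟩
        · refine ⟨_, refK δ hδC hd η hηK, ?_⟩
          rw [map_sub, hg, map_smul, zsmul_eq_mul, zero_sub, neg_ne_zero]
          refine mul_ne_zero ?_ e1
          intro hh
          have : cn b δ η = 0 := by exact_mod_cast hh
          exact e2 ((h.rss.cn_eq_zero hδ).1 this)
        · exact ⟨-δ, h.kc_neg hδC hd, by simpa using e1⟩
      · exact ⟨η, hηK, hg⟩
    obtain ⟨y, hy, hyn⟩ := ex
    have hz := refK γ hγ hc y hy
    have hyS := RSS.comp_sub hy.1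
    obtain ⟨m, hm⟩ : ∃ m, m = cn b γ y := ⟨_, rfl⟩
    have hm0 : m ≠ 0 := by
      rw [hm]; intro hh; exact hyn ((h.rss.cn_eq_zero hγS).1 hh)
    rw [← hm] at hz
    have hne : y - m • γ ≠ y := by
      intro hh
      have h2 : m • γ = 0 := by
        have : m • γ = y - (y - m • γ) := by abel
        rw [this, hh, sub_self]
      exact RSS.ne_zero hγS (h.rss.torsion_free hm0 h2)
    have c1 := h.kc_cn hη hN hz hy hne
    rw [map_sub, map_smul, h.rss.cn_self hyS, smul_eq_mul] at c1
    have c2 : m * cn b y γ = 1 := by omega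
    have hm1 : m = 1 ∨ m = -1 := Int.eq_one_or_neg_one_of_mul_eq_one c2
    have h4 : m • γ ∈ Submodule.span ℤ (KC b R α η) := by
      have : m • γ = y - (y - m • γ) := by abel
      rw [this]
      exact Submodule.sub_mem _ (Submodule.subset_span hy) (Submodule.subset_span hz)
    rcases hm1 with rfl | rfl
    · simpa using h4
    · simpa using h4
  · have := Submodule.subset_span (R := ℤ) (h.kc_neg hγ hc)
    simpa using this

theorem kc_lc (h : Hyp b R α) {η : A} (hη : η ∈ RR b R)
    (hN : ∀ y ∈ KC b R α η, b y y = b η η) (l : KC b R α η →₀ ℤ) (z : KC b R α η) :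
    cn b z (Finsupp.linearCombination ℤ (fun y : KC b R α η => (y : A)) l) =
      l z + l.sum (fun _ t => t) := by
  classical
  induction l using Finsupp.induction_linear with
  | zero => simp
  | add f g hf hg =>
    rw [map_add, map_add, hf, hg, Finsupp.sum_add_index' (by simp) (by simp), Finsupp.add_apply]
    ring
  | single y t =>
    rw [Finsupp.linearCombination_single, map_smul, Finsupp.sum_single_index rfl]
    by_cases hyz : y = z
    · subst hyz
      rw [h.rss.cn_self (RSS.comp_sub y.2.1)]; simp; ring
    · rw [h.kc_cn hη hN y.2 z.2 (fun hh => hyz (Subtype.ext hh))]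
      simp [Finsupp.single_apply, hyz]

theorem kc_indep (h : Hyp b R α) {η : A} (hη : η ∈ RR b R)
    (hN : ∀ y ∈ KC b R α η, b y y = b η η) : LinearIndepOn ℤ id (KC b R α η) := by
  show LinearIndependent ℤ (fun x : KC b R α η => (x : A))
  rw [linearIndependent_iff]
  intro l hl
  have h1 : ∀ z, l z = - l.sum (fun _ t => t) := by
    intro z
    have := h.kc_lc hη hN l z
    rw [hl, map_zero] at this
    omega
  have h2 : l.sum (fun _ t => t) = 0 := by
    obtain ⟨s, hs⟩ : ∃ s, s = l.sum (fun _ t => t) := ⟨_, rfl⟩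
    have h3 : s = l.support.card * (-s) := by
      nth_rewrite 1 [hs]
      rw [Finsupp.sum, Finset.sum_congr rfl (fun z _ => h1 z), Finset.sum_const, nsmul_eq_mul, hs]
    rw [← hs]
    have h4 : (l.support.card + 1 : ℤ) * s = 0 := by linear_combination h3
    rcases mul_eq_zero.1 h4 with h5 | h5
    · omega
    · exact h5
  ext z
  rw [h1 z, h2]; simp

theorem kc_comp (h : Hyp b R α) {η : A} (hη : η ∈ RR b R) (h1 : cn b η α = 1)
    (hN : ∀ y ∈ KC b R α η, b y y = b η η) {k : ℤ} (hk : k ≠ 0)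
    (hkα : k • α ∈ Submodule.span ℤ (RR b R)) :
    ∃ K : Finset A, (K : Set A) = KC b R α η ∧ ∃ c : ℤ, k = c * (1 + K.card) ∧
      k • α - c • ∑ z ∈ K, z ∈ Submodule.span ℤ (RR b R \ Comp b R η) ∧
      2 * b (∑ z ∈ K, z) α = K.card * b η η := by
  classical
  have hηK : η ∈ KC b R α η := ⟨RSS.self_comp hη, h1⟩
  rw [RSS.span_split (γ := η), Submodule.mem_sup] at hkα
  obtain ⟨x, hx, w, hw, hxw⟩ := hkα
  have hxK := hx
  rw [← h.kc_span hη h1 hN] at hxK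
  have : ∃ l : KC b R α η →₀ ℤ,
      Finsupp.linearCombination ℤ (fun y : KC b R α η => (y : A)) l = x := by
    have h2 : x ∈ Submodule.span ℤ (Set.range (fun y : KC b R α η => (y : A))) := by
      rw [Subtype.range_coe]; exact hxK
    exact (Finsupp.mem_span_range_iff_exists_finsupp).1 h2
  obtain ⟨l, hl⟩ := this
  obtain ⟨s, hs⟩ : ∃ s, s = l.sum (fun _ t => t) := ⟨_, rfl⟩
  have hlz : ∀ z, l z = k - s := by
    intro z
    have h2 := h.kc_lc hη hN l z
    rw [hl, ← hs] at h2
    have h3 : cn b (z : A) (k • α) = cn b (z : A) x := by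
      rw [← hxw, map_add]
      have : cn b (z : A) w = 0 := by
        rw [h.rss.cn_eq_zero (RSS.comp_sub z.2.1), h.rss.symm]
        exact h.rss.span_orth_span (Submodule.subset_span z.2.1) hw
      omega
    rw [map_smul, z.2.2, smul_eq_mul, mul_one] at h3
    omega
  have hks : k - s ≠ 0 := by
    intro h0
    have hl0 : l = 0 := by ext z; rw [hlz z, h0]; rfl
    rw [hl0] at hs
    simp at hs
    omega
  have hsupp : ∀ z, z ∈ l.support := by
    intro z; rw [Finsupp.mem_support_iff, hlz z]; exact hks
  have hKK : ((l.support.image Subtype.val : Finset A) : Set A) = KC b R α η := by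
    ext z
    simp only [Finset.coe_image, Set.mem_image, Finset.mem_coe]
    constructor
    · rintro ⟨z, _, rfl⟩; exact z.2
    · intro hz; exact ⟨⟨z, hz⟩, hsupp _, rfl⟩
  have hcard : (l.support.image Subtype.val : Finset A).card = l.support.card :=
    Finset.card_image_of_injective _ Subtype.val_injective
  have hsum : ∑ z ∈ (l.support.image Subtype.val : Finset A), z = ∑ z ∈ l.support, (z : A) :=
    Finset.sum_image (fun _ _ _ _ e => Subtype.val_injective e)
  have hsc : s = l.support.card * (k - s) := by
    nth_rewrite 1 [hs]
    rw [Finsupp.sum, Finset.sum_congr rfl (fun z _ => hlz z), Finset.sum_const, nsmul_eq_mul]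
  refine ⟨l.support.image Subtype.val, hKK, k - s, ?_, ?_, ?_⟩
  · rw [hcard]; linear_combination hsc
  · have : (k - s) • ∑ z ∈ l.support, (z : A) = x := by
      rw [← hl, Finsupp.linearCombination_apply, Finsupp.sum, Finset.smul_sum]
      exact Finset.sum_congr rfl fun z _ => by rw [hlz z]
    rw [hsum, this, ← hxw]; simpa using hw
  · rw [hsum, hcard, map_sum, LinearMap.sum_apply, Finset.mul_sum]
    have : ∀ z ∈ l.support, 2 * b (z : A) α = b η η := by
      intro z _
      rw [h.half (RSS.comp_sub z.2.1) z.2.2]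
      exact hN z z.2
    rw [Finset.sum_congr rfl this, Finset.sum_const, nsmul_eq_mul]

end Hyp


namespace Hyp
variable {F : Type*} [Field F] [CharZero F] {A : Type*} [AddCommGroup A]
  {b : A →ₗ[ℤ] A →ₗ[ℤ] F} {R : Set A} {α : A}

theorem fin_case (h : Hyp b R α) (htop : Submodule.span ℤ (insert α (RR b R)) = ⊤)
    {k : ℤ} (hk : k ≠ 0) (hkα : k • α ∈ Submodule.span ℤ (RR b R)) :
    ∃ P ⊆ R, LinearIndepOn ℤ id P ∧ Submodule.span ℤ P = ⊤ := by
  classical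
  have hα0 : α ≠ 0 := by rintro rfl; exact h.nsp (Submodule.zero_mem _)
  have hkα0 : k • α ≠ 0 := fun e => hα0 (h.rss.torsion_free hk e)
  obtain ⟨η, hη, h1⟩ : ∃ η ∈ RR b R, cn b η α = 1 := by
    by_contra hc
    push Not at hc
    apply hkα0
    apply h.rss.nd hkα
    intro γ hγ
    rw [map_smul]
    have : cn b γ α = 0 := by
      rcases h.rss.cn_bd h.mem h.iso h.nsp hγ with e | e | e
      · exact absurd e (hc γ hγ)
      · exact e
      · exact absurd (by rw [h.rss.cn_neg_left hγ, e]; norm_num) (hc _ (h.rss.neg_RR hγ))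
    rw [(h.rss.cn_eq_zero hγ).1 this, smul_zero]
  obtain ⟨η', hη', hn, h1'⟩ : ∃ η' ∈ RR b R, η' ∉ Comp b R η ∧ cn b η' α = 1 := by
    by_contra hc
    push Not at hc
    have hk2 := hkα
    rw [RSS.span_split (γ := η), Submodule.mem_sup] at hk2
    obtain ⟨x, hx, w, hw, hxw⟩ := hk2
    have hw0 : w = 0 := by
      apply h.rss.nd (Submodule.span_mono Set.sdiff_subset hw)
      intro γ hγ
      by_cases hγη : γ ∈ Comp b R η
      · rw [h.rss.symm]; exact h.rss.span_orth_span (Submodule.subset_span hγη) hw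
      · have e0 : cn b γ α = 0 := by
          rcases h.rss.cn_bd h.mem h.iso h.nsp hγ with e | e | e
          · exact absurd e (hc γ hγ hγη)
          · exact e
          · exact absurd (by rw [h.rss.cn_neg_left hγ, e]; norm_num)
              (hc _ (h.rss.neg_RR hγ) fun hh => hγη (by simpa using h.rss.neg_comp hh))
        have e1 : b γ x = 0 := h.rss.comp_orth_span hx hγ hγη
        have e2 : b γ (k • α) = 0 := by
          rw [map_smul, (h.rss.cn_eq_zero hγ).1 e0, smul_zero]
        rw [← hxw, map_add, e1, zero_add] at e2
        exact e2
    rw [hw0, add_zero] at hxw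
    apply hkα0
    rw [hxw] at hx
    apply h.rss.comp_aniso hη hx
    simp [h.iso]
  have hn' : η ∉ Comp b R η' := fun hh => hn (h.rss.comp_symm hη' hh)
  have hN : ∀ y ∈ KC b R α η, b y y = b η η := fun y hy => h.kc_norm hη h1 hη' hn h1' hy
  have hN' : ∀ y ∈ KC b R α η', b y y = b η' η' := fun y hy => h.kc_norm hη' h1' hη hn' h1 hy
  obtain ⟨K, hK, c, hc, hw, hs⟩ := h.kc_comp hη h1 hN hk hkα
  obtain ⟨K', hK', c', hc', hw', hs'⟩ := h.kc_comp hη' h1' hN' hk hkα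
  have hop := h.opp hη hη' hn h1 h1'
  have hS : ∑ z ∈ K, z ∈ Submodule.span ℤ (Comp b R η) :=
    Submodule.sum_mem _ fun z hz => Submodule.subset_span (by
      have : z ∈ (K : Set A) := hz
      rw [hK] at this; exact this.1)
  have hS' : ∑ z ∈ K', z ∈ Submodule.span ℤ (Comp b R η') :=
    Submodule.sum_mem _ fun z hz => Submodule.subset_span (by
      have : z ∈ (K' : Set A) := hz
      rw [hK'] at this; exact this.1)
  have hdisj : ∀ {δ}, δ ∈ Comp b R η → δ ∉ Comp b R η' := by
    intro δ hδ hδ'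
    have e1 := h.rss.comp_eq hη hδ
    have e2 := h.rss.comp_eq hη' hδ'
    exact hn (by rw [← e1, e2]; exact RSS.self_comp hη')
  have third : ∀ γ ∈ RR b R, γ ∉ Comp b R η → γ ∉ Comp b R η' → cn b γ α ≠ 1 := by
    intro γ hγ g1 g2 g3
    have e1 := h.opp hη hγ g1 h1 g3
    have e2 := h.opp hη' hγ g2 h1' g3
    have : 2 * b γ γ = 0 := by linear_combination e1 + e2 - hop
    exact hγ.2 ((mul_eq_zero.1 this).resolve_left two_ne_zero)
  have hz : k • α - c • ∑ z ∈ K, z - c' • ∑ z ∈ K', z = 0 := by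
    apply h.rss.nd
    · refine Submodule.sub_mem _ (Submodule.sub_mem _ hkα ?_) ?_
      · exact Submodule.smul_mem _ _ (Submodule.span_mono RSS.comp_sub hS)
      · exact Submodule.smul_mem _ _ (Submodule.span_mono RSS.comp_sub hS')
    intro γ hγ
    by_cases g1 : γ ∈ Comp b R η
    · have e1 : b γ (k • α - c • ∑ z ∈ K, z) = 0 := by
        rw [h.rss.symm]; exact h.rss.span_orth_span (Submodule.subset_span g1) hw
      rw [map_sub, e1, map_smul, h.rss.comp_orth_span hS' hγ (hdisj g1)]; simp
    by_cases g2 : γ ∈ Comp b R η'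
    · have e1 : b γ (k • α - c' • ∑ z ∈ K', z) = 0 := by
        rw [h.rss.symm]; exact h.rss.span_orth_span (Submodule.subset_span g2) hw'
      rw [sub_right_comm, map_sub, e1, map_smul, h.rss.comp_orth_span hS hγ g1]; simp
    · have e0 : cn b γ α = 0 := by
        rcases h.rss.cn_bd h.mem h.iso h.nsp hγ with e | e | e
        · exact absurd e (third γ hγ g1 g2)
        · exact e
        · exact absurd (by rw [h.rss.cn_neg_left hγ, e]; norm_num)
            (third _ (h.rss.neg_RR hγ) (fun hh => g1 (by simpa using h.rss.neg_comp hh))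
              (fun hh => g2 (by simpa using h.rss.neg_comp hh)))
      simp only [map_sub, map_smul]
      rw [(h.rss.cn_eq_zero hγ).1 e0, h.rss.comp_orth_span hS hγ g1,
        h.rss.comp_orth_span hS' hγ g2]
      simp
  have hcl : c * K.card = c' * K'.card := by
    have e1 : b (k • α - c • ∑ z ∈ K, z - c' • ∑ z ∈ K', z) α = 0 := by rw [hz]; simp
    simp only [map_sub, map_smul, LinearMap.sub_apply, LinearMap.smul_apply, zsmul_eq_mul,
      h.iso, mul_zero] at e1
    have e2 : ((c : F) * K.card - c' * K'.card) * b η η = 0 := by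
      linear_combination (-2 : F) * e1 - (c : F) * hs - (c' : F) * hs' - (c' : F) * K'.card * hop
    have e3 := (mul_eq_zero.1 e2).resolve_right hη.2
    have e4 : (c : F) * K.card = c' * K'.card := sub_eq_zero.1 e3
    exact_mod_cast e4
  have hcc : c = c' := by linarith
  subst hcc
  have hc0 : c ≠ 0 := by rintro rfl; apply hk; rw [hc]; ring
  have hu : ((1 : ℤ) + K.card) • α - ∑ z ∈ K, z - ∑ z ∈ K', z = 0 := by
    apply h.rss.torsion_free hc0
    rw [← hz, hc]; module
  have hηK : η ∈ K := by
    have : η ∈ (K : Set A) := by rw [hK]; exact ⟨RSS.self_comp hη, h1⟩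
    exact this
  refine h.rss.replace hη (P0 := KC b R α η) (fun x hx => hx.1) (h.kc_indep hη hN)
    (h.kc_span hη h1 hN) ⟨RSS.self_comp hη, h1⟩ h.mem htop (k := 1 + K.card) (by positivity) ?_
  have e1 : ((1 : ℤ) + K.card) • α - η = ∑ z ∈ K.erase η, z + ∑ z ∈ K', z := by
    rw [← Finset.add_sum_erase _ _ hηK] at hu
    rw [← sub_eq_zero, ← hu]; abel
  rw [e1]
  apply Submodule.add_mem_sup
  · refine Submodule.sum_mem _ fun z hz => Submodule.subset_span ?_
    rw [Finset.mem_erase] at hz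
    refine ⟨?_, hz.1⟩
    rw [← hK]; exact hz.2
  · refine Submodule.sum_mem _ fun z hz => Submodule.subset_span ?_
    have : z ∈ (K' : Set A) := hz
    rw [hK'] at this
    exact ⟨RSS.comp_sub this.1, fun hh => hdisj hh this.1⟩

end Hyp

theorem RSS.super_base {F : Type*} [Field F] [CharZero F] {A : Type*} [AddCommGroup A]
    {b : A →ₗ[ℤ] A →ₗ[ℤ] F} {R : Set A} (h : RSS b R)
    (hcon : ∀ α ∈ R, α ≠ 0 → ∀ Q : A → Prop, Q α →
      (∀ x ∈ R, ∀ y ∈ R, Q x → b x y ≠ 0 → Q y) → ∀ β ∈ R, β ≠ 0 → Q β)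
    {γ : A} (hγ : γ ∈ RR b R) :
    ∃ P ⊆ R, LinearIndepOn ℤ id P ∧ Submodule.span ℤ P = ⊤ := by
  obtain ⟨P, p1, p2, p3⟩ := h.real_base hγ
  by_cases hex : ∃ α ∈ R, b α α = 0 ∧ α ∉ Submodule.span ℤ (RR b R)
  · obtain ⟨α, hα, ha, hn⟩ := hex
    have hα0 : α ≠ 0 := by rintro rfl; exact hn (Submodule.zero_mem _)
    have htop := h.gen_top hcon hα ha hα0
    by_cases hk : ∃ k : ℤ, k ≠ 0 ∧ k • α ∈ Submodule.span ℤ (RR b R)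
    · obtain ⟨k, hk, hkα⟩ := hk
      by_cases hG : ∃ δ ∈ RR b R, cn b δ α = 1 ∧ ∃ k : ℤ, k ≠ 0 ∧
          k • α - δ ∈ Submodule.span ℤ (RR b R \ Comp b R δ)
      · obtain ⟨δ, hδ, h1, m, hm, hm'⟩ := hG
        exact h.caseG hα ha hn htop hδ h1 hm hm'
      · have H : Hyp b R α := ⟨h, hα, ha, hn, fun δ hδ h1 m hm hm' =>
          hG ⟨δ, hδ, h1, m, hm, hm'⟩⟩
        exact H.fin_case htop hk hkα
    · push Not at hk
      refine ⟨insert α P, Set.insert_subset hα fun x hx => (p1 hx).1, ?_, ?_⟩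
      · apply p2.id_insert'
        intro k hk'
        by_contra hk0
        exact hk k hk0 (by rwa [p3] at hk')
      · rw [Submodule.span_insert, p3, ← Submodule.span_insert, htop]
  · push Not at hex
    refine ⟨P, fun x hx => (p1 hx).1, p2, ?_⟩
    rw [p3, eq_top_iff, ← h.span_top, Submodule.span_le]
    intro x hx
    by_cases hb : b x x = 0
    · exact hex x hx hb
    · exact Submodule.subset_span ⟨hx, hb⟩


theorem stmt16 {F : Type*} [Field F] [CharZero F] {A : Type*} [AddCommGroup A]
    (form : A → A → F) (R : Set A) (h : IsLFRSS form R) (hirr : IsIrreducibleRSS form R) :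
    (∃ P : Set A, P ⊆ R ∧ LinearIndependent ℤ (fun p : P => (p : A)) ∧
      Submodule.span ℤ P = (⊤ : Submodule ℤ A)) ∧ Module.Free ℤ A := by
  obtain ⟨hE, hnd⟩ := h
  have hadd : ∀ a x y, form a (x + y) = form a x + form a y := by
    intro a x y
    rw [hE.symm, hE.add_left, hE.symm x, hE.symm y]
  obtain ⟨b, hb⟩ : ∃ b : A →ₗ[ℤ] A →ₗ[ℤ] F, ∀ x y, b x y = form x y := by
    let g : A → (A →ₗ[ℤ] F) := fun a => (AddMonoidHom.mk' (form a) (hadd a)).toIntLinearMap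
    have hg : ∀ x y, g (x + y) = g x + g y := by
      intro x y
      ext z
      exact hE.add_left x y z
    exact ⟨(AddMonoidHom.mk' g hg).toIntLinearMap, fun x y => rfl⟩
  have hR : RSS b R := by
    refine ⟨?_, ?_, hE.neg_mem, ?_, ?_, ?_⟩
    · intro x y; rw [hb, hb, hE.symm]
    · rw [eq_top_iff]
      intro x _
      have hx : x ∈ AddSubgroup.closure R := by rw [hE.closure_eq_top]; trivial
      have : AddSubgroup.closure R ≤ (Submodule.span ℤ R).toAddSubgroup := by
        rw [AddSubgroup.closure_le]; exact Submodule.subset_span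
      exact this hx
    · intro α hα h0 β hβ
      rw [hb] at h0
      obtain ⟨p, q, e1, e2⟩ := hE.string α hα h0 β hβ
      exact ⟨p, q, by rw [hb, hb]; exact e1, e2⟩
    · intro α hα h0 β hβ h1
      rw [hb] at h0 h1
      exact hE.ns_string α hα h0 β hβ h1
    · intro a ha
      exact hnd a fun c => by rw [← hb]; exact ha c
  obtain ⟨hre, hconn⟩ := hirr
  have hcon : ∀ α ∈ R, α ≠ 0 → ∀ Q : A → Prop, Q α →
      (∀ x ∈ R, ∀ y ∈ R, Q x → b x y ≠ 0 → Q y) → ∀ β ∈ R, β ≠ 0 → Q β := by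
    intro α hα hα0 Q hQ hstep β hβ hβ0
    obtain ⟨n, c, c1, c2, c3, c4⟩ := hconn α ⟨hα, fun hh => hα0 (hnd α hh)⟩ β
      ⟨hβ, fun hh => hβ0 (hnd β hh)⟩
    have : ∀ i : Fin (n + 1), Q (c i) := by
      intro i
      induction i using Fin.induction with
      | zero => rw [c2]; exact hQ
      | succ i ih =>
        exact hstep _ (c1 _).1 _ (c1 _).1 ih (by rw [hb]; exact c4 i)
    rw [← c3]; exact this _
  obtain ⟨γ, hγ⟩ : ∃ γ, γ ∈ RR b R := by
    by_contra hc
    push Not at hc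
    apply hre
    ext x
    constructor
    · rintro (hx | hx)
      · exact absurd ⟨hx.1, by rw [hb]; exact hx.2⟩ (hc x)
      · exact hx
    · intro hx; exact Or.inr hx
  obtain ⟨P, p1, p2, p3⟩ := hR.super_base hcon hγ
  have p2' : LinearIndependent ℤ (fun p : P => (p : A)) := p2
  refine ⟨⟨P, p1, p2', p3⟩, ?_⟩
  exact Module.Free.of_basis (Module.Basis.mk p2' (by rw [Subtype.range_coe, p3]))
end
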